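/- There is a positive constant c > 0 such that for every ε > 0 the following holds: if n is sufficiently large with respect to ε, then Pr(|per M_n| ≤ n^{n/2-εn}) ≤ n^{-c}. -/

import Mathlib

/-!
The idea is to expose the random symmetric matrix one row and column at a time and to follow the
mean square of the permanent of the exposed block completed by `r` virtual random vertices:
`seq A r = Psi (Fin r) A` is the average of `per ^ 2` over random sign entries at the virtual
vertices, whose diagonal entries are set to zero. With no exposed vertex and `N` virtual ones this
is at least `(N - 1)!` (derangements, `Psi_start`), and `seq A 0 = per A ^ 2`. It suffices to trade
virtual vertices for real ones without losing much, and to finish at level `r = 0`.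

One step. Bordering `A` by a random row turns `seq A (r + 1)` into `seq B r`. Both are mean squares
of the same quadratic form in the new signs, the coefficients being permanental cofactors. As the
virtual vertices are exchangeable, no real vertex has influence above `2 / (r + 1)` of the total
(`influence_le`), so vector-valued small-ball estimates for linear and quadratic forms (`LSB`,
`QSB`) show that for large `r` only a constant factor is lost, with probability close to one
(`step_large`). This needs either `seq A r` to be much smaller than `seq A (r + 1)` or a positive
proportion of virtual vertices. For every `r` the loss is at most polynomial with probability at
least `1 / 4` (`step_coin`), and with certainty the mass of level `r` is found on level `r` or
`r + 1` of the bordered matrix, up to a polynomial factor (`Psi_le_ext`).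

First phase. While at least a small proportion of the vertices is virtual, each step fails with a
tiny probability and each failure costs a polynomial factor and two levels; hence with
overwhelming probability a level of size `O(ε n)` still has mass `n ^ (n - O(ε n))`
(`good_prob`, `phase_one`).

Second phase. Let `r` be the lowest level with `seq A r ≥ L * 100 ^ r`. Minimality makes
`step_large` applicable for large `r`, and a potential of `r`, whose increments double for large
`r` and decay geometrically for small `r`, contracts in the mean (`phi_step`) except at `r = 0`,
where the level may rise again. During the remaining `O(ε n)` steps a loss of `n ^ (-3)` per step is
affordable. In the last `O(log n)` steps much larger losses are affordable, and leaving `r = 0` then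
means that a random border multiplies a nonzero permanent by less than `lam m`, where `n` is between
`2 m ^ 100` and `m ^ 101`.

Border estimate. `border_small` bounds the probability of that last event by `4 / m`. The form to
be controlled is `offq` of the cofactor matrix `P` normalised by the permanent. If `P` has many
rows with many large entries, or a large matching of large entries, decoupling and the
Littlewood–Offord inequality apply (`decouple`, `lo`, `spread_many`, `spread_coins`). Otherwise the
large entries sit in few columns, and the pseudorandomness of the rows of `A` with respect to
subspaces spanned by sign vectors (`pr_not_PR`, `star`) contradicts the Laplace expansion of the
permanent, unless many diagonal cofactors dominate their rows. The latter is unlikely by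
exchangeability (`Ex_atyp`), as the last row is typical by the same kind of argument
(`row_spread`).
-/


open Finset

/-- The real number (`1` or `-1`) associated to a Boolean: a Rademacher value. -/
noncomputable def rad (b : Bool) : ℝ := if b then 1 else -1

/-- The permanent of a square real matrix. -/
noncomputable def perm {n : ℕ} (M : Matrix (Fin n) (Fin n) ℝ) : ℝ :=
  ∑ σ : Equiv.Perm (Fin n), ∏ i, M i (σ i)

/-- The symmetric `n × n` sign matrix determined by Boolean data `ω` (the entries on and
above the diagonal are `rad (ω i j)` for `i ≤ j`; below-diagonal entries are given by
symmetry). As `ω` ranges uniformly over all Boolean data, this is exactly the random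
symmetric matrix `M_n` with i.i.d. Rademacher entries on and above the diagonal. -/
noncomputable def symMat (n : ℕ) (ω : Fin n → Fin n → Bool) : Matrix (Fin n) (Fin n) ℝ :=
  fun i j => if i ≤ j then rad (ω i j) else rad (ω j i)

open Classical in
/-- The probability of the event `P` for the random symmetric Rademacher matrix `M_n`. -/
noncomputable def prob (n : ℕ) (P : Matrix (Fin n) (Fin n) ℝ → Prop) : ℝ :=
  ((univ.filter fun ω : Fin n → Fin n → Bool => P (symMat n ω)).card : ℝ) / 2 ^ (n * n)

set_option linter.unusedSectionVars false

/-! ### Uniform averages over finite types -/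

section Averages
variable {Ω Ω' : Type*} [Fintype Ω'] [Fintype Ω]

/-- The uniform average of `f` over a finite type. -/
noncomputable def ev (f : Ω → ℝ) : ℝ := (∑ ω, f ω) / Fintype.card Ω

open Classical in
/-- The indicator of a proposition, as a real number. -/
noncomputable def ind (p : Prop) : ℝ := if p then 1 else 0

/-- The probability of an event under the uniform measure on a finite type. -/
noncomputable def pr (p : Ω → Prop) : ℝ := ev fun ω => ind (p ω)

lemma ind_true {p : Prop} (h : p) : ind p = 1 := by simp [ind, h]
lemma ind_false {p : Prop} (h : ¬ p) : ind p = 0 := by simp [ind, h]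
lemma ind_nonneg (p : Prop) : 0 ≤ ind p := by unfold ind; split_ifs <;> norm_num
lemma ind_le_one (p : Prop) : ind p ≤ 1 := by unfold ind; split_ifs <;> norm_num
lemma ind_mono {p q : Prop} (h : p → q) : ind p ≤ ind q := by
  by_cases hp : p
  · rw [ind_true hp, ind_true (h hp)]
  · rw [ind_false hp]; exact ind_nonneg q

lemma ev_add (f g : Ω → ℝ) : ev (fun ω => f ω + g ω) = ev f + ev g := by
  simp [ev, sum_add_distrib, add_div]
lemma ev_sub (f g : Ω → ℝ) : ev (fun ω => f ω - g ω) = ev f - ev g := by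
  simp [ev, sum_sub_distrib, sub_div]
lemma ev_neg (f : Ω → ℝ) : ev (fun ω => -f ω) = -ev f := by
  simp [ev, neg_div]
lemma ev_mul_left (c : ℝ) (f : Ω → ℝ) : ev (fun ω => c * f ω) = c * ev f := by
  simp [ev, ← mul_sum, mul_div_assoc]
lemma ev_mul_right (c : ℝ) (f : Ω → ℝ) : ev (fun ω => f ω * c) = ev f * c := by
  simp [ev, ← sum_mul, div_mul_eq_mul_div]
lemma ev_div (c : ℝ) (f : Ω → ℝ) : ev (fun ω => f ω / c) = ev f / c := by
  simp only [div_eq_mul_inv, ev_mul_right]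
lemma ev_sum {ι : Type*} (s : Finset ι) (f : ι → Ω → ℝ) :
    ev (fun ω => ∑ i ∈ s, f i ω) = ∑ i ∈ s, ev (f i) := by
  simp only [ev]; rw [sum_comm, sum_div]
lemma ev_const [Nonempty Ω] (c : ℝ) : ev (fun _ : Ω => c) = c := by
  simp [ev]
lemma ev_zero : ev (fun _ : Ω => (0 : ℝ)) = 0 := by simp [ev]
lemma ev_mono {f g : Ω → ℝ} (h : ∀ ω, f ω ≤ g ω) : ev f ≤ ev g := by
  unfold ev
  gcongr with i
  exact h i
lemma ev_nonneg {f : Ω → ℝ} (h : ∀ ω, 0 ≤ f ω) : 0 ≤ ev f := by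
  unfold ev
  exact div_nonneg (sum_nonneg fun i _ => h i) (by positivity)
lemma ev_congr {f g : Ω → ℝ} (h : ∀ ω, f ω = g ω) : ev f = ev g := by
  congr 1; ext ω; exact h ω
lemma ev_comm (f : Ω → Ω' → ℝ) :
    ev (fun a => ev fun b => f a b) = ev (fun b => ev fun a => f a b) := by
  simp only [ev, ← sum_div]
  rw [sum_comm, div_div, div_div, mul_comm]
lemma ev_prod (f : Ω × Ω' → ℝ) : ev f = ev fun a => ev fun b => f (a, b) := by
  simp only [ev, ← sum_div]
  rw [Fintype.sum_prod_type, div_div, Fintype.card_prod, mul_comm]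
  push_cast; rfl
lemma ev_equiv (e : Ω ≃ Ω') (f : Ω' → ℝ) : ev (fun a => f (e a)) = ev f := by
  simp only [ev]
  rw [Fintype.card_congr e, Equiv.sum_comp e f]
lemma ev_eq_zero_of_neg (e : Ω ≃ Ω) (f : Ω → ℝ) (h : ∀ a, f (e a) = -f a) : ev f = 0 := by
  have := ev_equiv e f
  simp only [h, ev_neg] at this
  linarith

lemma ev_mem_of_unique [Unique Ω] (f : Ω → ℝ) : ev f = f default := by
  simp [ev]

lemma exists_ge_ev [Nonempty Ω] (f : Ω → ℝ) : ∃ ω, ev f ≤ f ω := by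
  by_contra h
  push Not at h
  have : ∑ ω, f ω < ∑ _ω : Ω, ev f := sum_lt_sum_of_nonempty univ_nonempty fun i _ => h i
  have h2 : ev f < ev f := by
    conv_lhs => unfold ev
    rw [div_lt_iff₀ (by exact_mod_cast Fintype.card_pos)]
    simpa [mul_comm] using this
  exact lt_irrefl _ h2

lemma ev_sq_le [Nonempty Ω] (f : Ω → ℝ) : (ev f) ^ 2 ≤ ev fun ω => f ω ^ 2 := by
  have h : 0 ≤ ev fun ω => (f ω - ev f) ^ 2 := ev_nonneg fun _ => sq_nonneg _
  have : (ev fun ω => (f ω - ev f) ^ 2) = (ev fun ω => f ω ^ 2) - (ev f) ^ 2 := by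
    have : ∀ ω, (f ω - ev f) ^ 2 = f ω ^ 2 - (2 * ev f) * f ω + (ev f) ^ 2 := fun ω => by ring
    rw [ev_congr this, ev_add, ev_sub, ev_mul_left, ev_const]; ring
  linarith

lemma ev_mul_sq_le (f g : Ω → ℝ) :
    (ev fun ω => f ω * g ω) ^ 2 ≤ (ev fun ω => f ω ^ 2) * (ev fun ω => g ω ^ 2) := by
  unfold ev
  rw [div_pow, div_mul_div_comm, ← sq]
  gcongr
  exact sum_mul_sq_le_sq_mul_sq _ _ _

lemma pr_nonneg (p : Ω → Prop) : 0 ≤ pr p := ev_nonneg fun _ => ind_nonneg _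
lemma pr_le_one (p : Ω → Prop) : pr p ≤ 1 := by
  unfold pr ev
  apply div_le_one_of_le₀ _ (by positivity)
  calc ∑ ω, ind (p ω) ≤ ∑ _ω : Ω, (1 : ℝ) := sum_le_sum fun i _ => ind_le_one _
    _ = _ := by simp
lemma pr_mono {p q : Ω → Prop} (h : ∀ ω, p ω → q ω) : pr p ≤ pr q :=
  ev_mono fun ω => ind_mono (h ω)
lemma pr_congr {p q : Ω → Prop} (h : ∀ ω, p ω ↔ q ω) : pr p = pr q := by
  congr 1; ext ω; exact h ω
lemma pr_or_le (p q : Ω → Prop) : pr (fun ω => p ω ∨ q ω) ≤ pr p + pr q := by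
  unfold pr
  rw [← ev_add]
  refine ev_mono fun ω => ?_
  by_cases hp : p ω
  · rw [ind_true (Or.inl hp), ind_true hp]; linarith [ind_nonneg (q ω)]
  · rw [ind_false hp, zero_add]; exact ind_mono fun h => h.resolve_left hp
lemma pr_le_add {p q s : Ω → Prop} (h : ∀ ω, p ω → q ω ∨ s ω) : pr p ≤ pr q + pr s :=
  (pr_mono h).trans (pr_or_le q s)
lemma pr_not [Nonempty Ω] (p : Ω → Prop) : pr (fun ω => ¬ p ω) = 1 - pr p := by
  unfold pr
  have : ∀ ω, ind (¬ p ω) = 1 - ind (p ω) := fun ω => by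
    by_cases h : p ω <;> simp [ind, h]
  rw [ev_congr this, ev_sub, ev_const]
lemma pr_exists_le {ι : Type*} (s : Finset ι) (p : ι → Ω → Prop) :
    pr (fun ω => ∃ i ∈ s, p i ω) ≤ ∑ i ∈ s, pr (p i) := by
  unfold pr
  rw [← ev_sum]
  refine ev_mono fun ω => ?_
  by_cases h : ∃ i ∈ s, p i ω
  · obtain ⟨i, hi, hp⟩ := h
    rw [ind_true ⟨i, hi, hp⟩, ← ind_true hp]
    exact single_le_sum (f := fun i => ind (p i ω)) (fun j _ => ind_nonneg _) hi
  · rw [ind_false h]; exact sum_nonneg fun j _ => ind_nonneg _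
lemma pr_true [Nonempty Ω] {p : Ω → Prop} (h : ∀ ω, p ω) : pr p = 1 := by
  unfold pr; rw [ev_congr fun ω => ind_true (h ω), ev_const]
lemma pr_false {p : Ω → Prop} (h : ∀ ω, ¬ p ω) : pr p = 0 := by
  unfold pr; rw [ev_congr fun ω => ind_false (h ω), ev_zero]
lemma pr_equiv (e : Ω ≃ Ω') (p : Ω' → Prop) : pr (fun a => p (e a)) = pr p :=
  ev_equiv e fun b => ind (p b)
lemma pr_prod (p : Ω × Ω' → Prop) : pr p = ev fun a => pr fun b => p (a, b) :=
  ev_prod _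

/-- Markov's inequality. -/
lemma markov {f : Ω → ℝ} (hf : ∀ ω, 0 ≤ f ω) {a : ℝ} (ha : 0 < a) :
    pr (fun ω => a ≤ f ω) ≤ ev f / a := by
  rw [← ev_div]
  refine ev_mono fun ω => ?_
  by_cases h : a ≤ f ω
  · rw [ind_true h, le_div_iff₀ ha]; linarith
  · rw [ind_false h]; exact div_nonneg (hf ω) ha.le

lemma pr_le_of_markov {f : Ω → ℝ} (hf : ∀ ω, 0 ≤ f ω) {a b : ℝ} (ha : 0 < a)
    (h : ev f ≤ b * a) : pr (fun ω => a ≤ f ω) ≤ b :=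
  (markov hf ha).trans ((div_le_iff₀ ha).2 h)

/-- An average of probabilities is controlled by splitting into a bad set of outer outcomes. -/
lemma ev_pr_le [Nonempty Ω] (p : Ω → Ω' → Prop) (bad : Ω → Prop) (δ : ℝ) (hδ : 0 ≤ δ)
    (h : ∀ a, ¬ bad a → pr (p a) ≤ δ) : (ev fun a => pr (p a)) ≤ pr bad + δ := by
  have : ∀ a, pr (p a) ≤ ind (bad a) + δ := fun a => by
    by_cases hb : bad a
    · rw [ind_true hb]; linarith [pr_le_one (p a)]
    · rw [ind_false hb, zero_add]; exact h a hb
  refine (ev_mono this).trans ?_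
  rw [ev_add, ev_const]; exact le_rfl

end Averages

/-! ### Functions on product spaces -/

section Cube
variable {α β T : Type*} [Fintype α] [Fintype β] [Fintype T] [DecidableEq α] [DecidableEq β]

/-- A function of the coordinates in the range of an injection has the same average whether the
remaining coordinates are sampled or not. -/
lemma ev_restrict [Nonempty T] (e : α → β) (he : Function.Injective e) (g : (α → T) → ℝ) :
    ev (fun f : β → T => g (fun a => f (e a))) = ev g := by
  classical
  let E : (β → T) ≃ (α → T) × ({b // b ∉ Set.range e} → T) :=
    (Equiv.piEquivPiSubtypeProd (fun b => b ∈ Set.range e) (fun _ => T)).trans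
      (Equiv.prodCongr ((Equiv.ofInjective e he).arrowCongr (Equiv.refl T)).symm (Equiv.refl _))
  have h := ev_equiv E (fun x => g x.1)
  have h2 : ∀ f : β → T, (E f).1 = fun a => f (e a) := by
    intro f; ext a; simp [E, Equiv.arrowCongr]
  simp only [h2] at h
  rw [h, ev_prod]
  exact ev_congr fun a => ev_const (g a)

/-- Averages over a cube may be computed after resampling the coordinates in `s`. -/
lemma ev_resample (s : Finset α) (F : (α → T) → ℝ) :
    ev F = ev fun y : α → T => ev fun y' : α → T => F (s.piecewise y' y) := by
  classical
  rcases isEmpty_or_nonempty T with hT | hT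
  · rcases isEmpty_or_nonempty α with hα | hα
    · have : ∀ y y' : α → T, s.piecewise y' y = y := fun y y' => Subsingleton.elim _ _
      simp only [this]
      refine ev_congr fun y => ?_
      have : Nonempty (α → T) := ⟨y⟩
      rw [ev_const]
    · have : IsEmpty (α → T) := inferInstance
      simp [ev]
  let E : ((α → T) × (α → T)) ≃ ((α → T) × (α → T)) :=
    { toFun := fun p => (s.piecewise p.2 p.1, s.piecewise p.1 p.2)
      invFun := fun p => (s.piecewise p.2 p.1, s.piecewise p.1 p.2)
      left_inv := by
        rintro ⟨a, b⟩
        ext i <;> by_cases h : i ∈ s <;> simp [h]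
      right_inv := by
        rintro ⟨a, b⟩
        ext i <;> by_cases h : i ∈ s <;> simp [h] }
  have h := ev_equiv E (fun x => F x.1)
  rw [ev_prod, ev_prod] at h
  simp only [E, Equiv.coe_fn_mk] at h
  rw [h]
  exact (ev_congr fun a => ev_const _).symm

lemma pr_resample (s : Finset α) (p : (α → T) → Prop) :
    pr p = ev fun y : α → T => pr fun y' : α → T => p (s.piecewise y' y) :=
  ev_resample s _

lemma ev_option (F : (Option α → T) → ℝ) :
    ev F = ev fun a : T => ev fun y : α → T => F (fun o => o.elim a y) := by
  let E : T × (α → T) ≃ (Option α → T) :=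
    { toFun := fun p o => o.elim p.1 p.2
      invFun := fun f => (f none, fun a => f (some a))
      left_inv := by rintro ⟨a, b⟩; rfl
      right_inv := by intro f; ext o; cases o <;> rfl }
  rw [← ev_equiv E, ev_prod]; rfl

lemma ev_sumType (F : (α ⊕ β → T) → ℝ) :
    ev F = ev fun y : α → T => ev fun x : β → T => F (Sum.elim y x) := by
  rw [← ev_equiv (Equiv.sumArrowEquivProdArrow α β T).symm, ev_prod]; rfl

end Cube

/-! ### Signs -/

section Signs
variable {α : Type*} [Fintype α] [DecidableEq α]

lemma rad_not (b : Bool) : rad (!b) = -rad b := by cases b <;> simp [rad]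
lemma rad_sq (b : Bool) : rad b ^ 2 = 1 := by cases b <;> simp [rad]
lemma rad_mul_self (b : Bool) : rad b * rad b = 1 := by cases b <;> simp [rad]
lemma rad_abs (b : Bool) : |rad b| = 1 := by cases b <;> simp [rad]
lemma rad_eq_or (b : Bool) : rad b = 1 ∨ rad b = -1 := by cases b <;> simp [rad]
lemma rad_ne_zero (b : Bool) : rad b ≠ 0 := by cases b <;> simp [rad]

/-- Flip the sign of one coordinate. -/
def flip1 (a : α) : (α → Bool) ≃ (α → Bool) where
  toFun y := Function.update y a (!y a)
  invFun y := Function.update y a (!y a)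
  left_inv y := by ext i; by_cases h : i = a <;> simp [h]
  right_inv y := by ext i; by_cases h : i = a <;> simp [h]

@[simp] lemma flip1_self (a : α) (y : α → Bool) : flip1 a y a = !y a := by simp [flip1]
lemma flip1_ne {a b : α} (h : b ≠ a) (y : α → Bool) : flip1 a y b = y b := by simp [flip1, h]
lemma rad_flip1_self (a : α) (y : α → Bool) : rad (flip1 a y a) = -rad (y a) := by
  rw [flip1_self, rad_not]
lemma rad_flip1 (a b : α) (y : α → Bool) :
    rad (flip1 a y b) = if b = a then -rad (y b) else rad (y b) := by
  split_ifs with h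
  · subst h; exact rad_flip1_self _ _
  · rw [flip1_ne h]

lemma ev_flip (a : α) (F : (α → Bool) → ℝ) :
    ev F = ev fun y => (F y + F (flip1 a y)) / 2 := by
  rw [ev_div, ev_add, ev_equiv (flip1 a) F]; ring

lemma ev_rad (i : α) : ev (fun y : α → Bool => rad (y i)) = 0 :=
  ev_eq_zero_of_neg (flip1 i) _ fun y => rad_flip1_self i y

lemma ev_rad_mul (i j : α) :
    ev (fun y : α → Bool => rad (y i) * rad (y j)) = if i = j then 1 else 0 := by
  split_ifs with h
  · subst h; simp only [rad_mul_self]; exact ev_const _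
  · exact ev_eq_zero_of_neg (flip1 i) _ fun y => by
      rw [rad_flip1_self, flip1_ne (Ne.symm h)]; ring

lemma ev_rad_mul3 (i j k : α) (hij : i ≠ j) :
    ev (fun y : α → Bool => rad (y i) * rad (y j) * rad (y k)) = 0 := by
  by_cases h : i = k
  · exact ev_eq_zero_of_neg (flip1 j) _ fun y => by
      rw [rad_flip1_self, flip1_ne hij, flip1_ne (h ▸ hij)]; ring
  · exact ev_eq_zero_of_neg (flip1 i) _ fun y => by
      rw [rad_flip1_self, flip1_ne (Ne.symm hij), flip1_ne (Ne.symm h)]; ring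

lemma ev_rad_mul4 (i j k l : α) (hij : i ≠ j) (hkl : k ≠ l) :
    ev (fun y : α → Bool => (rad (y i) * rad (y j)) * (rad (y k) * rad (y l))) =
      (if i = k ∧ j = l then 1 else 0) + (if i = l ∧ j = k then 1 else 0) := by
  by_cases h1 : i = k
  · subst h1
    by_cases h2 : j = l
    · subst h2
      have : ∀ y : α → Bool, (rad (y i) * rad (y j)) * (rad (y i) * rad (y j)) = 1 := fun y => by
        linear_combination rad_sq (y i) * rad (y j) ^ 2 + rad_sq (y j)
      simp only [this, ev_const]
      simp [hij, hij.symm]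
    · rw [if_neg (by tauto), if_neg (by tauto), add_zero]
      exact ev_eq_zero_of_neg (flip1 j) _ fun y => by
        rw [rad_flip1_self, flip1_ne hij, flip1_ne (Ne.symm h2)]; ring
  · by_cases h2 : i = l
    · subst h2
      by_cases h3 : j = k
      · subst h3
        have : ∀ y : α → Bool, (rad (y i) * rad (y j)) * (rad (y j) * rad (y i)) = 1 := fun y => by
          linear_combination rad_sq (y i) * rad (y j) ^ 2 + rad_sq (y j)
        simp only [this, ev_const]
        simp [hij]
      · rw [if_neg (by tauto), if_neg (by tauto), add_zero]
        exact ev_eq_zero_of_neg (flip1 j) _ fun y => by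
          rw [rad_flip1_self, flip1_ne hij, flip1_ne (Ne.symm h3)]; ring
    · rw [if_neg (by tauto), if_neg (by tauto), add_zero]
      exact ev_eq_zero_of_neg (flip1 i) _ fun y => by
        rw [rad_flip1_self, flip1_ne hij.symm, flip1_ne (Ne.symm h1), flip1_ne (Ne.symm h2)]; ring

/-- Second moment of a linear form in independent signs. -/
lemma ev_lin_sq (s : Finset α) (l : α → ℝ) :
    ev (fun y : α → Bool => (∑ i ∈ s, rad (y i) * l i) ^ 2) = ∑ i ∈ s, l i ^ 2 := by
  have : ∀ y : α → Bool, (∑ i ∈ s, rad (y i) * l i) ^ 2 =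
      ∑ i ∈ s, ∑ j ∈ s, (l i * l j) * (rad (y i) * rad (y j)) := fun y => by
    rw [sq, sum_mul_sum]
    exact sum_congr rfl fun i _ => sum_congr rfl fun j _ => by ring
  rw [ev_congr this, ev_sum]
  refine sum_congr rfl fun i hi => ?_
  rw [ev_sum]
  simp only [ev_mul_left, ev_rad_mul, mul_ite, mul_one, mul_zero, sum_ite_eq, hi, if_true]
  ring

/-- The off-diagonal quadratic form of `S` in the values `x`. -/
def offq {α : Type*} [DecidableEq α] (s : Finset α) (S : α → α → ℝ) (x : α → ℝ) : ℝ :=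
  ∑ i ∈ s, ∑ j ∈ s, if i = j then 0 else x i * x j * S i j

lemma ev_offq (s : Finset α) (S : α → α → ℝ) :
    ev (fun y : α → Bool => offq s S fun i => rad (y i)) = 0 := by
  simp only [offq]
  rw [ev_sum]; refine sum_eq_zero fun i _ => ?_
  rw [ev_sum]; refine sum_eq_zero fun j _ => ?_
  split_ifs with h
  · exact ev_zero
  · rw [ev_mul_right, ev_rad_mul, if_neg h, zero_mul]

lemma ev_offq_rad (s : Finset α) (S : α → α → ℝ) (k : α) :
    ev (fun y : α → Bool => (offq s S fun i => rad (y i)) * rad (y k)) = 0 := by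
  simp only [offq, sum_mul]
  rw [ev_sum]; refine sum_eq_zero fun i _ => ?_
  rw [ev_sum]; refine sum_eq_zero fun j _ => ?_
  split_ifs with h
  · simp only [zero_mul, ev_zero]
  · have : ∀ y : α → Bool, rad (y i) * rad (y j) * S i j * rad (y k) =
      S i j * (rad (y i) * rad (y j) * rad (y k)) := fun y => by ring
    rw [ev_congr this, ev_mul_left, ev_rad_mul3 _ _ _ h, mul_zero]

/-- Second moment of an off-diagonal quadratic form in independent signs. -/
lemma ev_offq_sq (s : Finset α) (S : α → α → ℝ) (hS : ∀ i j, S i j = S j i) :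
    ev (fun y : α → Bool => (offq s S fun i => rad (y i)) ^ 2) =
      2 * ∑ i ∈ s, ∑ j ∈ s, if i = j then 0 else S i j ^ 2 := by
  have : ∀ y : α → Bool, (offq s S fun i => rad (y i)) ^ 2 =
      ∑ i ∈ s, ∑ j ∈ s, ∑ k ∈ s, ∑ l ∈ s, (if i = j then 0 else if k = l then 0 else
        (S i j * S k l) * ((rad (y i) * rad (y j)) * (rad (y k) * rad (y l)))) := fun y => by
    rw [sq, offq, sum_mul]
    refine sum_congr rfl fun i _ => ?_
    rw [sum_mul]
    refine sum_congr rfl fun j _ => ?_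
    rw [mul_sum]
    refine sum_congr rfl fun k _ => ?_
    rw [mul_sum]
    refine sum_congr rfl fun l _ => ?_
    split_ifs <;> ring
  rw [ev_congr this, ev_sum, mul_sum]
  refine sum_congr rfl fun i hi => ?_
  rw [ev_sum, mul_sum]
  refine sum_congr rfl fun j hj => ?_
  by_cases h : i = j
  · simp [h, ev_zero]
  simp only [h, if_false]
  rw [ev_sum]
  simp only [ev_sum]
  have e : ∀ k l, ev (fun y : α → Bool => if k = l then 0 else
        (S i j * S k l) * ((rad (y i) * rad (y j)) * (rad (y k) * rad (y l)))) =
      (if k = i then (if l = j then S i j * S k l else 0) else 0)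
        + (if k = j then (if l = i then S i j * S k l else 0) else 0) := by
    intro k l
    by_cases hkl : k = l
    · subst hkl
      simp only [if_true, ev_zero]
      rw [ite_eq_right_iff.2, ite_eq_right_iff.2, add_zero]
      · intro h1; rw [if_neg]; intro h2; exact h (h2.symm.trans h1)
      · intro h1; rw [if_neg]; intro h2; exact h (h1.symm.trans h2)
    · simp only [hkl, if_false, ev_mul_left, ev_rad_mul4 i j k l h hkl, mul_add, mul_ite, mul_one,
        mul_zero, ite_and, eq_comm]
      congr 1
      split_ifs <;> rfl
  simp only [e, sum_add_distrib, sum_ite_irrel, sum_const_zero, sum_ite_eq', hi, hj, if_true]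
  rw [hS j i]; ring

end Signs

/-! ### Permanents, cofactors and one-vertex extensions -/

section Permanent
variable {ι κ : Type*} [Fintype ι] [DecidableEq ι] [Fintype κ] [DecidableEq κ]

/-- The permanent of a square matrix over an arbitrary finite index type. -/
noncomputable def per (A : Matrix ι ι ℝ) : ℝ := ∑ σ : Equiv.Perm ι, ∏ i, A i (σ i)

/-- The permanental cofactor: the permanent of `A` with row `i` and column `j` deleted. -/
noncomputable def cof (A : Matrix ι ι ℝ) (i j : ι) : ℝ :=
  ∑ σ : Equiv.Perm ι, if σ i = j then ∏ k ∈ univ.erase i, A k (σ k) else 0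

/-- The bordered matrix with one extra index `none`, border `y` and corner `d`. -/
def ext (A : Matrix ι ι ℝ) (y : ι → ℝ) (d : ℝ) : Matrix (Option ι) (Option ι) ℝ
  | none, none => d
  | none, some j => y j
  | some i, none => y i
  | some i, some j => A i j

@[simp] lemma ext_nn (A : Matrix ι ι ℝ) (y : ι → ℝ) (d : ℝ) : ext A y d none none = d := rfl
@[simp] lemma ext_ns (A : Matrix ι ι ℝ) (y : ι → ℝ) (d : ℝ) (j : ι) :
    ext A y d none (some j) = y j := rfl
@[simp] lemma ext_sn (A : Matrix ι ι ℝ) (y : ι → ℝ) (d : ℝ) (j : ι) :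
    ext A y d (some j) none = y j := rfl
@[simp] lemma ext_ss (A : Matrix ι ι ℝ) (y : ι → ℝ) (d : ℝ) (i j : ι) :
    ext A y d (some i) (some j) = A i j := rfl

lemma ext_symm {A : Matrix ι ι ℝ} (hA : ∀ i j, A i j = A j i) (y : ι → ℝ) (d : ℝ) :
    ∀ i j, ext A y d i j = ext A y d j i := by
  rintro (_ | i) (_ | j) <;> simp [hA]

lemma laplace (A : Matrix ι ι ℝ) (i : ι) : per A = ∑ j, A i j * cof A i j := by
  simp only [cof, mul_sum]
  rw [sum_comm]
  refine sum_congr rfl fun σ _ => ?_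
  simp only [mul_ite, mul_zero, sum_ite_eq, mem_univ, if_true]
  exact (mul_prod_erase univ (fun k => A k (σ k)) (mem_univ i)).symm

lemma cof_symm {A : Matrix ι ι ℝ} (hA : ∀ i j, A i j = A j i) (i j : ι) :
    cof A i j = cof A j i := by
  unfold cof
  rw [← Equiv.sum_comp (Equiv.inv (Equiv.Perm ι))]
  refine sum_congr rfl fun σ _ => ?_
  simp only [Equiv.inv_apply]
  have h : σ⁻¹ i = j ↔ σ j = i := by
    rw [Equiv.Perm.inv_eq_iff_eq, eq_comm]
  simp only [h]
  split_ifs with hs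
  · refine prod_bij' (fun k _ => σ⁻¹ k) (fun k _ => σ k) ?_ ?_ ?_ ?_ ?_
    · intro k hk; simp only [mem_erase, mem_univ, and_true] at hk ⊢
      intro h'; apply hk; rw [← hs, ← h']; simp
    · intro k hk; simp only [mem_erase, mem_univ, and_true] at hk ⊢
      intro h'; apply hk; apply σ.injective; rw [h', hs]
    · intro k _; simp
    · intro k _; simp
    · intro k _; simp [hA]
  · rfl

lemma per_submatrix (e : ι ≃ κ) (A : Matrix κ κ ℝ) : per (A.submatrix e e) = per A := by
  unfold per
  rw [← Equiv.sum_comp e.permCongr]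
  refine sum_congr rfl fun σ _ => ?_
  rw [← Equiv.prod_comp e]
  simp [Equiv.permCongr_apply]

lemma cof_submatrix (e : ι ≃ κ) (A : Matrix κ κ ℝ) (i j : ι) :
    cof (A.submatrix e e) i j = cof A (e i) (e j) := by
  unfold cof
  rw [← Equiv.sum_comp e.permCongr]
  refine sum_congr rfl fun σ _ => ?_
  simp only [Equiv.permCongr_apply, Equiv.symm_apply_apply, EmbeddingLike.apply_eq_iff_eq,
    Matrix.submatrix_apply]
  split_ifs
  · refine prod_bij' (fun k _ => e k) (fun k _ => e.symm k) ?_ ?_ ?_ ?_ ?_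
    · intro k hk; simpa using hk
    · intro k hk; simp only [mem_erase, mem_univ, and_true] at hk ⊢
      intro h'; apply hk; rw [← h']; simp
    · simp
    · simp
    · simp
  · rfl

lemma prod_erase_none (F : Option ι → ℝ) :
    ∏ k ∈ univ.erase none, F k = ∏ k : ι, F (some k) := by
  have : (univ : Finset (Option ι)).erase none = univ.map Function.Embedding.some := by
    ext o; cases o <;> simp
  rw [this, prod_map]; rfl

lemma cof_ext_nn (A : Matrix ι ι ℝ) (y : ι → ℝ) (d : ℝ) : cof (ext A y d) none none = per A := by
  unfold cof per
  rw [← Equiv.sum_comp Equiv.Perm.decomposeOption.symm, Fintype.sum_prod_type,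
    Fintype.sum_option]
  simp [prod_erase_none]

lemma cof_ext_ns (A : Matrix ι ι ℝ) (y : ι → ℝ) (d : ℝ) (j : ι) :
    cof (ext A y d) none (some j) = ∑ i, y i * cof A i j := by
  unfold cof
  rw [← Equiv.sum_comp Equiv.Perm.decomposeOption.symm, Fintype.sum_prod_type,
    Fintype.sum_option]
  simp only [Equiv.Perm.decomposeOption_symm_apply, Equiv.Perm.mul_apply,
    Equiv.optionCongr_apply, Option.map_none, Equiv.swap_apply_left, prod_erase_none,
    Option.map_some]
  simp only [reduceCtorEq, if_false, sum_const_zero, zero_add, Option.some.injEq, mul_sum]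
  rw [sum_comm]
  rw [sum_comm (s := (univ : Finset ι)) (t := (univ : Finset (Equiv.Perm ι)))]
  refine sum_congr rfl fun σ _ => ?_
  rw [sum_eq_single j (by intro b _ hb; simp [hb]) (by simp)]
  simp only [if_true, mul_ite, mul_zero]
  rw [sum_eq_single (σ.symm j) (by
    intro b _ hb; rw [if_neg]; intro h; apply hb; rw [← h]; simp) (by simp)]
  rw [if_pos (by simp), ← mul_prod_erase univ _ (mem_univ (σ.symm j))]
  congr 1
  · simp
  · refine prod_congr rfl fun k hk => ?_
    have : σ k ≠ j := by
      simp only [mem_erase, mem_univ, and_true] at hk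
      intro h; apply hk; rw [← h]; simp
    rw [Equiv.swap_apply_of_ne_of_ne (by simp) (by simpa using this)]
    simp

lemma per_ext (A : Matrix ι ι ℝ) (y : ι → ℝ) (d : ℝ) :
    per (ext A y d) = d * per A + ∑ i, ∑ j, y i * y j * cof A i j := by
  rw [laplace _ none, Fintype.sum_option]
  simp only [ext_nn, ext_ns, cof_ext_nn, cof_ext_ns, mul_sum]
  rw [sum_comm]
  congr 1
  exact sum_congr rfl fun i _ => sum_congr rfl fun j _ => by ring

/-- The permanent of a bordered matrix with sign border: the diagonal cofactors contribute a
constant, the others an off-diagonal quadratic form. -/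
lemma per_ext_sign (A : Matrix ι ι ℝ) (y : ι → ℝ) (hy : ∀ i, y i ^ 2 = 1) (d : ℝ) :
    per (ext A y d) = d * per A + ∑ i, cof A i i + offq univ (cof A) y := by
  rw [per_ext, offq, add_assoc, ← sum_add_distrib]
  congr 1
  refine sum_congr rfl fun i _ => ?_
  rw [← add_sum_erase univ _ (mem_univ i), ← add_sum_erase univ _ (mem_univ i)]
  rw [if_pos rfl, zero_add, ← sq, hy, one_mul]
  congr 1
  refine sum_congr rfl fun j hj => ?_
  rw [if_neg (ne_of_mem_erase hj).symm]

lemma ext_submatrix (e : ι ≃ κ) (A : Matrix κ κ ℝ) (y : κ → ℝ) (d : ℝ) :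
    (ext A y d).submatrix (Equiv.optionCongr e) (Equiv.optionCongr e) =
      ext (A.submatrix e e) (y ∘ e) d := by
  ext i j
  cases i <;> cases j <;> rfl

end Permanent

/-! ### Small-ball estimates for vector-valued linear and quadratic forms in signs -/

section SmallBall

/-- The squared Euclidean norm of a real function on a finite type. -/
def nsq {X : Type*} [Fintype X] (f : X → ℝ) : ℝ := ∑ x, f x ^ 2

variable {ι X : Type*} [Fintype ι] [DecidableEq ι] [Fintype X]

lemma nsq_nonneg (f : X → ℝ) : 0 ≤ nsq f := sum_nonneg fun _ _ => sq_nonneg _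

lemma nsq_le_of_add (f g h : X → ℝ) (hh : ∀ x, h x = f x + g x) :
    nsq f ≤ 2 * nsq h + 2 * nsq g := by
  unfold nsq
  rw [mul_sum, mul_sum, ← sum_add_distrib]
  refine sum_le_sum fun x _ => ?_
  rw [hh]; nlinarith [sq_nonneg (f x + 2 * g x)]

lemma nsq_add_le (f g h : X → ℝ) (hh : ∀ x, h x = f x + g x) :
    nsq h ≤ 2 * nsq f + 2 * nsq g := by
  unfold nsq
  rw [mul_sum, mul_sum, ← sum_add_distrib]
  refine sum_le_sum fun x _ => ?_
  rw [hh]; nlinarith [sq_nonneg (f x - g x)]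

lemma nsq_smul (c : ℝ) (f : X → ℝ) : nsq (fun x => c * f x) = c ^ 2 * nsq f := by
  simp [nsq, mul_pow, mul_sum]

/-- The vector-valued affine form `u + ∑ yᵢ αᵢ` in signs `y`. -/
noncomputable def lin (s : Finset ι) (u : X → ℝ) (α : ι → X → ℝ) (y : ι → Bool) (x : X) : ℝ :=
  u x + ∑ i ∈ s, rad (y i) * α i x

lemma lin_congr {s : Finset ι} {u : X → ℝ} {α : ι → X → ℝ} {y y' : ι → Bool}
    (h : ∀ i ∈ s, y i = y' i) : lin s u α y = lin s u α y' := by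
  ext x; unfold lin; congr 1
  exact sum_congr rfl fun i hi => by rw [h i hi]

lemma lin_insert {a : ι} {s : Finset ι} (ha : a ∉ s) (u : X → ℝ) (α : ι → X → ℝ) (y : ι → Bool)
    (x : X) : lin (insert a s) u α y x = lin s u α y x + rad (y a) * α a x := by
  unfold lin; rw [sum_insert ha]; ring

lemma lin_flip {a : ι} {s : Finset ι} (ha : a ∉ s) (u : X → ℝ) (α : ι → X → ℝ) (y : ι → Bool) :
    lin s u α (flip1 a y) = lin s u α y :=
  lin_congr fun i hi => flip1_ne (by rintro rfl; exact ha hi) y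

lemma nsq_lin_insert {a : ι} {s : Finset ι} (ha : a ∉ s) (u : X → ℝ) (α : ι → X → ℝ)
    (y : ι → Bool) : nsq (lin (insert a s) u α y) =
      nsq (lin s u α y) + nsq (α a) + 2 * rad (y a) * ∑ x, lin s u α y x * α a x := by
  unfold nsq
  rw [mul_sum, ← sum_add_distrib, ← sum_add_distrib]
  refine sum_congr rfl fun x _ => ?_
  rw [lin_insert ha]
  linear_combination (α a x) ^ 2 * rad_sq (y a)

lemma ev_nsq_lin (s : Finset ι) (u : X → ℝ) (α : ι → X → ℝ) :
    ev (fun y => nsq (lin s u α y)) = nsq u + ∑ i ∈ s, nsq (α i) := by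
  induction s using Finset.induction_on with
  | empty =>
    have : ∀ y : ι → Bool, lin ∅ u α y = u := fun y => by ext x; simp [lin]
    simp only [this, ev_const, sum_empty, add_zero]
  | insert a s ha ih =>
    rw [ev_flip a, sum_insert ha]
    have : ∀ y, (nsq (lin (insert a s) u α y) + nsq (lin (insert a s) u α (flip1 a y))) / 2 =
        nsq (lin s u α y) + nsq (α a) := fun y => by
      rw [nsq_lin_insert ha, nsq_lin_insert ha, lin_flip ha, rad_flip1_self]; ring
    rw [ev_congr this, ev_add, ih, ev_const]; ring

/-- Hypercontractivity of degree one: fourth moment against squared second moment. -/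
lemma ev_nsq_lin_sq (s : Finset ι) (u : X → ℝ) (α : ι → X → ℝ) :
    ev (fun y => nsq (lin s u α y) ^ 2) ≤ 3 * (nsq u + ∑ i ∈ s, nsq (α i)) ^ 2 := by
  induction s using Finset.induction_on with
  | empty =>
    have : ∀ y : ι → Bool, lin ∅ u α y = u := fun y => by ext x; simp [lin]
    simp only [this, ev_const, sum_empty, add_zero]
    nlinarith [sq_nonneg (nsq u)]
  | insert a s ha ih =>
    rw [ev_flip a, sum_insert ha]
    have : ∀ y, (nsq (lin (insert a s) u α y) ^ 2 +
        nsq (lin (insert a s) u α (flip1 a y)) ^ 2) / 2 ≤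
        nsq (lin s u α y) ^ 2 + 6 * nsq (α a) * nsq (lin s u α y) + nsq (α a) ^ 2 := fun y => by
      rw [nsq_lin_insert ha, nsq_lin_insert ha, lin_flip ha, rad_flip1_self]
      have cs : (∑ x, lin s u α y x * α a x) ^ 2 ≤ nsq (lin s u α y) * nsq (α a) :=
        sum_mul_sq_le_sq_mul_sq _ _ _
      set q := ∑ x, lin s u α y x * α a x
      have hr := rad_sq (y a)
      have : (rad (y a) * q) ^ 2 = q ^ 2 := by rw [mul_pow, hr, one_mul]
      nlinarith
    refine (ev_mono this).trans ?_
    rw [ev_add, ev_add, ev_mul_left, ev_const, ev_nsq_lin]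
    nlinarith [sq_nonneg (nsq (α a)), nsq_nonneg (α a)]

/-- Paley–Zygmund with the fourth-moment constant `3`. -/
lemma paley {Ω : Type*} [Fintype Ω] [Nonempty Ω] {W : Ω → ℝ} (hW : ∀ a, 0 ≤ W a)
    (h : ev (fun a => W a ^ 2) ≤ 3 * (ev W) ^ 2) : pr (fun a => W a < ev W / 2) ≤ 11 / 12 := by
  have h0 : 0 ≤ ev W := ev_nonneg hW
  rcases h0.eq_or_lt with h0 | h0
  · rw [pr_false]
    · norm_num
    · intro a; rw [← h0]; have := hW a; simp; linarith
  have e1 : ev W ≤ ev W / 2 + ev fun a => W a * ind (¬ W a < ev W / 2) := by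
    have : ∀ a, W a ≤ ev W / 2 + W a * ind (¬ W a < ev W / 2) := fun a => by
      by_cases ha : W a < ev W / 2
      · rw [ind_false (by simpa using ha)]; linarith
      · rw [ind_true ha]; linarith
    refine (ev_mono this).trans ?_
    rw [ev_add, ev_const]
  have e2 := ev_mul_sq_le W fun a => ind (¬ W a < ev W / 2)
  have e3 : (ev fun a => ind (¬ W a < ev W / 2) ^ 2) = 1 - pr fun a => W a < ev W / 2 := by
    rw [← pr_not]
    refine ev_congr fun a => ?_
    by_cases ha : W a < ev W / 2 <;> simp [ind, ha]
  rw [e3] at e2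
  set q := pr fun a => W a < ev W / 2
  have hq : 0 ≤ 1 - q := by linarith [pr_le_one fun a => W a < ev W / 2]
  have : (ev W / 2) ^ 2 ≤ 3 * (ev W) ^ 2 * (1 - q) := by
    calc (ev W / 2) ^ 2 ≤ (ev fun a => W a * ind (¬ W a < ev W / 2)) ^ 2 := by
          gcongr; linarith
      _ ≤ _ := e2
      _ ≤ _ := by gcongr
  have h2 : 0 < ev W ^ 2 := by positivity
  by_contra hc
  push Not at hc
  nlinarith

lemma exists_subset_sum (t : ι → ℝ) (s : ℝ) (hs : 0 < s)
    (h1 : ∀ i, t i ≤ s) (h2 : s ≤ ∑ i, t i) : ∃ R : Finset ι, s ≤ ∑ i ∈ R, t i ∧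
      ∑ i ∈ R, t i ≤ 2 * s := by
  classical
  let F := (univ : Finset (Finset ι)).filter fun R => s ≤ ∑ i ∈ R, t i
  have hF : F.Nonempty := ⟨univ, by simpa [F] using h2⟩
  obtain ⟨R, hR, hmin⟩ := exists_min_image F card hF
  have hR' : s ≤ ∑ i ∈ R, t i := by simpa [F] using hR
  refine ⟨R, hR', ?_⟩
  have hne : R.Nonempty := by
    rw [nonempty_iff_ne_empty]; rintro rfl; simp at hR'; linarith
  obtain ⟨a, ha⟩ := hne
  have : ∑ i ∈ R.erase a, t i < s := by
    by_contra hc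
    push Not at hc
    have := hmin (R.erase a) (by simpa [F] using hc)
    have := card_erase_lt_of_mem ha
    omega
  rw [← add_sum_erase _ _ ha]
  linarith [h1 a]

/-- `LSBat q θ κ`: if every `αᵢ` carries at most a `θ`-fraction of the total squared norm `t`, then
`u + ∑ yᵢ αᵢ` has squared norm below `κ t` with probability at most `q`. -/
def LSBat (q θ κ : ℝ) : Prop :=
  ∀ (ι X : Type) [Fintype ι] [DecidableEq ι] [Fintype X] (u : X → ℝ) (α : ι → X → ℝ)
    (s : Finset ι),
    (∀ i ∈ s, nsq (α i) ≤ θ * ∑ j ∈ s, nsq (α j)) →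
    pr (fun y => nsq (lin s u α y) < κ * ∑ j ∈ s, nsq (α j)) ≤ q

lemma lin_piecewise_union (s R : Finset ι) (hR : R ⊆ s) (u : X → ℝ) (α : ι → X → ℝ)
    (y y' : ι → Bool) (x : X) : lin s u α (R.piecewise y' y) x =
      lin (s \ R) u α y x + lin R (fun _ => 0) α y' x := by
  unfold lin
  rw [← sum_sdiff hR, zero_add, add_assoc]
  congr 2
  · exact sum_congr rfl fun i hi => by rw [piecewise_eq_of_notMem _ _ _ (mem_sdiff.1 hi).2]
  · exact sum_congr rfl fun i hi => by rw [piecewise_eq_of_mem _ _ _ hi]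

/-- Amplification: spending a small part of the coefficients on one more Paley–Zygmund trial multiplies
the failure probability by `11 / 12`, up to an arbitrarily small error. -/
lemma LSB_step {q θ κ : ℝ} (hq : 0 ≤ q) (hθ : 0 < θ) (hκ : 0 < κ) (h : LSBat q θ κ) {η : ℝ}
    (hη : 0 < η) :
    ∃ θ₁ κ₁ : ℝ, 0 < θ₁ ∧ 0 < κ₁ ∧ LSBat (11 / 12 * q + η) θ₁ κ₁ := by
  -- `a` is the fraction of the total carried by the resampled block `R`
  set a : ℝ := min (1 / 2) (κ * η / 8) with ha
  have ha0 : 0 < a := by rw [ha]; positivity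
  have ha1 : a ≤ 1 / 2 := min_le_left _ _
  have ha2 : a ≤ κ * η / 8 := min_le_right _ _
  refine ⟨min (a / 2) (θ / 2), min (κ / 8) (a / 4), by positivity, by positivity, ?_⟩
  intro ι X _ _ _ u α s hs
  set t := ∑ j ∈ s, nsq (α j) with ht
  have ht0 : 0 ≤ t := sum_nonneg fun _ _ => nsq_nonneg _
  rcases ht0.eq_or_lt with ht0 | ht0
  · rw [pr_false]
    · positivity
    · intro y; rw [← ht0, mul_zero]; exact not_lt.2 (nsq_nonneg _)
  have hs1 : ∀ i ∈ s, nsq (α i) ≤ a / 2 * t := fun i hi => (hs i hi).trans (by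
    gcongr; exact min_le_left _ _)
  have hs2 : ∀ i ∈ s, nsq (α i) ≤ θ / 2 * t := fun i hi => (hs i hi).trans (by
    gcongr; exact min_le_right _ _)
  obtain ⟨R0, hR1, hR2⟩ := exists_subset_sum (fun i => if i ∈ s then nsq (α i) else 0) (a / 2 * t)
    (by positivity) (fun i => by
      by_cases hi : i ∈ s
      · simpa [hi] using hs1 i hi
      · simp only [hi, if_false]; positivity) (by
      rw [sum_ite_mem, univ_inter, ← ht]; nlinarith)
  rw [sum_ite_mem] at hR1 hR2
  set R := R0 ∩ s with hRdef
  have hRs : R ⊆ s := inter_subset_right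
  have hsd : ∑ i ∈ s \ R, nsq (α i) + ∑ i ∈ R, nsq (α i) = t := sum_sdiff hRs
  have hrest : t / 2 ≤ ∑ i ∈ s \ R, nsq (α i) := by nlinarith
  have key := h ι X u α (s \ R) (fun i hi => by
    have := hs2 i (mem_sdiff.1 hi).1
    nlinarith)
  set tr := ∑ i ∈ s \ R, nsq (α i) with htr
  rw [pr_resample R]
  have bound : ∀ y : ι → Bool, pr (fun y' : ι → Bool =>
      nsq (lin s u α (R.piecewise y' y)) < min (κ / 8) (a / 4) * t) ≤
      11 / 12 * ind (nsq (lin (s \ R) u α y) < κ * tr) + η := by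
    intro y
    by_cases hy : nsq (lin (s \ R) u α y) < κ * tr
    · rw [ind_true hy]
      have hE := ev_nsq_lin R (lin (s \ R) u α y) α
      have hp := paley (W := fun y' => nsq (lin R (lin (s \ R) u α y) α y'))
        (fun _ => nsq_nonneg _) (by rw [hE]; exact ev_nsq_lin_sq _ _ _)
      rw [hE] at hp
      refine (pr_mono fun y' hy' => ?_).trans (hp.trans (by linarith))
      have e : lin s u α (R.piecewise y' y) = lin R (lin (s \ R) u α y) α y' := by
        ext x; rw [lin_piecewise_union s R hRs]; unfold lin; ring
      rw [e] at hy'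
      refine hy'.trans_le ?_
      have h1 : min (κ / 8) (a / 4) * t ≤ a / 4 * t := by gcongr; exact min_le_right _ _
      have := nsq_nonneg (lin (s \ R) u α y)
      linarith
    · rw [ind_false hy, mul_zero, zero_add]
      push Not at hy
      have hE := ev_nsq_lin R (fun _ : X => (0 : ℝ)) α
      have : pr (fun y' : ι → Bool => κ * t / 8 ≤ nsq (lin R (fun _ : X => (0 : ℝ)) α y')) ≤ η := by
        refine pr_le_of_markov (fun _ => nsq_nonneg _) (by positivity) ?_
        rw [hE]
        have : nsq (fun _ : X => (0 : ℝ)) = 0 := by simp [nsq]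
        rw [this, zero_add]
        nlinarith
      refine (pr_mono fun y' hy' => ?_).trans this
      by_contra hc
      push Not at hc
      have h3 := nsq_le_of_add _ _ _ (lin_piecewise_union s R hRs u α y y')
      have h1 : min (κ / 8) (a / 4) * t ≤ κ / 8 * t := by gcongr; exact min_le_left _ _
      nlinarith
  refine (ev_mono bound).trans ?_
  rw [ev_add, ev_mul_left, ev_const]
  have : ev (fun y => ind (nsq (lin (s \ R) u α y) < κ * tr)) ≤ q := key
  linarith

/-- Small-ball estimate for vector-valued linear forms with no influential index. -/
theorem LSB {δ : ℝ} (hδ : 0 < δ) : ∃ θ κ : ℝ, 0 < θ ∧ 0 < κ ∧ LSBat δ θ κ := by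
  have h : ∀ L : ℕ, ∃ θ κ : ℝ, 0 < θ ∧ 0 < κ ∧ LSBat ((11 / 12) ^ L + δ / 2) θ κ := by
    intro L
    induction L with
    | zero =>
      refine ⟨1, 1, one_pos, one_pos, ?_⟩
      intro ι X _ _ _ u α s _
      exact (pr_le_one _).trans (by norm_num; linarith)
    | succ L ih =>
      obtain ⟨θ, κ, h1, h2, h3⟩ := ih
      obtain ⟨θ', κ', h4, h5, h6⟩ := LSB_step (by positivity) h1 h2 h3
        (show 0 < δ / 24 by positivity)
      refine ⟨θ', κ', h4, h5, ?_⟩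
      convert h6 using 1
      rw [pow_succ]; ring
  obtain ⟨L, hL⟩ := exists_pow_lt_of_lt_one (show 0 < δ / 2 by positivity)
    (show (11 / 12 : ℝ) < 1 by norm_num)
  obtain ⟨θ, κ, h1, h2, h3⟩ := h L
  refine ⟨θ, κ, h1, h2, ?_⟩
  intro ι X _ _ _ u α s hs
  exact (h3 ι X u α s hs).trans (by linarith)

end SmallBall

/-! ### Small-ball estimate for quadratic forms -/

section QuadraticSmallBall
variable {ι X : Type} [Fintype ι] [DecidableEq ι] [Fintype X]

lemma ev_pair {T : Type} [Fintype T] [Nonempty T] {i j : ι} (hij : i ≠ j) (f : T → T → ℝ) :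
    ev (fun c : ι → T => f (c i) (c j)) = ev fun a => ev fun b => f a b := by
  have he : Function.Injective (![i, j] : Fin 2 → ι) := by
    intro a b; fin_cases a <;> fin_cases b <;> simp [hij, hij.symm]
  have := ev_restrict (T := T) ![i, j] he (fun g => f (g 0) (g 1))
  simp only [Matrix.cons_val_zero, Matrix.cons_val_one] at this
  rw [this, ← ev_equiv (finTwoArrowEquiv T).symm, ev_prod]
  rfl

lemma ev_ind_eq {K : ℕ} [NeZero K] : ev (fun a : Fin K => ind (a = 0)) = 1 / K := by
  unfold ev
  rw [sum_eq_single 0 (fun b _ hb => ind_false hb) (by simp), ind_true rfl, Fintype.card_fin]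

/-- Random colouring with `K` colours: some colour class `J` receives a substantial cross weight
while its internal weight is smaller by a factor of order `K`. -/
lemma exists_block (m : ι → ι → ℝ) (hm : ∀ i, m i i = 0) (hm0 : ∀ i j, 0 ≤ m i j) {K : ℕ}
    (hK : 2 ≤ K) : ∃ J : Finset ι, (∑ i, ∑ j, m i j) / K ^ 2 ≤
      4 / K * (∑ i ∈ Jᶜ, ∑ j ∈ J, m i j) - ∑ i ∈ J, ∑ j ∈ J, m i j := by
  classical
  have : NeZero K := ⟨by omega⟩
  let J : (ι → Fin K) → Finset ι := fun c => univ.filter fun i => c i = 0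
  have hK0 : (0 : ℝ) < K := by positivity
  have hK2 : (2 : ℝ) ≤ K := by exact_mod_cast hK
  have e : (∑ i, ∑ j, m i j) / K ^ 2 ≤ ev fun c : ι → Fin K =>
      4 / K * (∑ i ∈ (J c)ᶜ, ∑ j ∈ J c, m i j) - ∑ i ∈ J c, ∑ j ∈ J c, m i j := by
    have h1 : ∀ c : ι → Fin K, 4 / K * (∑ i ∈ (J c)ᶜ, ∑ j ∈ J c, m i j) -
        ∑ i ∈ J c, ∑ j ∈ J c, m i j = ∑ i, ∑ j, m i j *
          (4 / K * ((1 - ind (c i = 0)) * ind (c j = 0)) - ind (c i = 0) * ind (c j = 0)) := by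
      intro c
      have a1 : ∀ g : ι → ℝ, ∑ i ∈ J c, g i = ∑ i, ind (c i = 0) * g i := fun g => by
        simp [J, sum_filter, ind, ite_mul]
      have a2 : ∀ g : ι → ℝ, ∑ i ∈ (J c)ᶜ, g i = ∑ i, (1 - ind (c i = 0)) * g i := fun g => by
        have := sum_compl_add_sum (J c) g
        simp only [sub_mul, one_mul, sum_sub_distrib]
        linarith [a1 g]
      rw [a1, a2]
      simp only [a1]
      rw [mul_sum, ← sum_sub_distrib]
      refine sum_congr rfl fun i _ => ?_
      rw [mul_sum, mul_sum, mul_sum, ← sum_sub_distrib]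
      exact sum_congr rfl fun j _ => by ring
    rw [ev_congr h1, ev_sum, sum_div]
    refine sum_le_sum fun i _ => ?_
    rw [ev_sum, sum_div]
    refine sum_le_sum fun j _ => ?_
    by_cases hij : i = j
    · subst hij; simp [hm, ev_zero]
    rw [ev_mul_left, div_eq_mul_inv]
    refine mul_le_mul_of_nonneg_left ?_ (hm0 i j)
    rw [ev_sub, ev_mul_left, ev_pair hij (fun a b => (1 - ind (a = 0)) * ind (b = 0)),
      ev_pair hij (fun a b => ind (a = 0) * ind (b = 0))]
    simp only [ev_mul_left, ev_mul_right, ev_sub, ev_const, ev_ind_eq]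
    have : 4 / (K : ℝ) * ((1 - 1 / K) * (1 / K)) - 1 / K * (1 / K) - ((K : ℝ) ^ 2)⁻¹ =
      (2 * K - 4) / K ^ 3 := by field_simp; ring
    have h4 : 0 ≤ (2 * (K : ℝ) - 4) / K ^ 3 := div_nonneg (by linarith) (by positivity)
    linarith
  obtain ⟨c, hc⟩ := exists_ge_ev fun c : ι → Fin K =>
      4 / K * (∑ i ∈ (J c)ᶜ, ∑ j ∈ J c, m i j) - ∑ i ∈ J c, ∑ j ∈ J c, m i j
  exact ⟨J c, e.trans hc⟩

lemma offq_congr {s : Finset ι} {S : ι → ι → ℝ} {z z' : ι → ℝ} (h : ∀ i ∈ s, z i = z' i) :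
    offq s S z = offq s S z' := by
  unfold offq
  exact sum_congr rfl fun i hi => sum_congr rfl fun j hj => by rw [h i hi, h j hj]

lemma offq_split (J : Finset ι) (S : ι → ι → ℝ) (hS : ∀ i j, S i j = S j i) (z : ι → ℝ) :
    offq univ S z = offq Jᶜ S z + (∑ j ∈ J, z j * ∑ i ∈ Jᶜ, z i * (2 * S i j)) + offq J S z := by
  unfold offq
  rw [← sum_compl_add_sum J]
  simp only [← sum_compl_add_sum J (fun j => if _ = j then (0 : ℝ) else _), sum_add_distrib]
  have h1 : ∑ i ∈ Jᶜ, ∑ j ∈ J, (if i = j then 0 else z i * z j * S i j) =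
      ∑ j ∈ J, ∑ i ∈ Jᶜ, z i * z j * S i j := by
    rw [sum_comm]
    refine sum_congr rfl fun j hj => sum_congr rfl fun i hi => ?_
    rw [if_neg]; rintro rfl; exact (mem_compl.1 hi) hj
  have h2 : ∑ i ∈ J, ∑ j ∈ Jᶜ, (if i = j then 0 else z i * z j * S i j) =
      ∑ j ∈ J, ∑ i ∈ Jᶜ, z i * z j * S i j := by
    refine sum_congr rfl fun j hj => sum_congr rfl fun i hi => ?_
    rw [if_neg, hS j i]; · ring
    rintro rfl; exact (mem_compl.1 hi) hj
  rw [h1, h2]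
  have h3 : ∑ j ∈ J, z j * ∑ i ∈ Jᶜ, z i * (2 * S i j) =
      2 * ∑ j ∈ J, ∑ i ∈ Jᶜ, z i * z j * S i j := by
    rw [mul_sum]
    refine sum_congr rfl fun j _ => ?_
    rw [mul_sum, mul_sum]
    exact sum_congr rfl fun i _ => by ring
  rw [h3]; ring

lemma ev_nsq_offq (s : Finset ι) (S : ι → ι → X → ℝ) (hS : ∀ i j, S i j = S j i) :
    ev (fun y : ι → Bool => nsq fun x => offq s (fun i j => S i j x) fun i => rad (y i)) =
      2 * ∑ i ∈ s, ∑ j ∈ s, if i = j then 0 else nsq (S i j) := by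
  unfold nsq
  rw [ev_sum]
  have : ∀ x, ev (fun y : ι → Bool => (offq s (fun i j => S i j x) fun i => rad (y i)) ^ 2) =
    2 * ∑ i ∈ s, ∑ j ∈ s, if i = j then 0 else S i j x ^ 2 := fun x =>
      ev_offq_sq s _ fun i j => by rw [hS]
  simp only [this, ← mul_sum]
  congr 1
  rw [sum_comm]
  refine sum_congr rfl fun i _ => ?_
  rw [sum_comm]
  refine sum_congr rfl fun j _ => ?_
  split_ifs <;> simp

set_option maxHeartbeats 2000000 in
/-- Small-ball estimate for a vector-valued off-diagonal quadratic form with no influential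
index. -/
theorem QSB {δ : ℝ} (hδ : 0 < δ) : ∃ θ κ : ℝ, 0 < θ ∧ 0 < κ ∧
    ∀ (ι X : Type) [Fintype ι] [DecidableEq ι] [Fintype X] (S : ι → ι → X → ℝ) (C : X → ℝ),
      (∀ i j, S i j = S j i) →
      (∀ i, (∑ j, if i = j then 0 else nsq (S i j)) ≤
        θ * ∑ i, ∑ j, if i = j then 0 else nsq (S i j)) →
      pr (fun y : ι → Bool => nsq (fun x => C x + offq univ (fun i j => S i j x)
        fun i => rad (y i)) < κ * ∑ i, ∑ j, if i = j then 0 else nsq (S i j)) ≤ δ := by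
  obtain ⟨θ1, κ1, hθ1, hκ1, hL⟩ := LSB (show 0 < δ / 4 by positivity)
  obtain ⟨K, hK⟩ := exists_nat_ge (max 2 (32 / (δ * κ1 ^ 2)))
  have hK2 : 2 ≤ K := by exact_mod_cast (le_max_left _ _).trans hK
  have hK3 : 32 / (δ * κ1 ^ 2) ≤ K := (le_max_right _ _).trans hK
  have hK0 : (0 : ℝ) < K := by positivity
  have hK4 : 32 ≤ δ * κ1 ^ 2 * K := by
    rw [div_le_iff₀ (by positivity)] at hK3; linarith
  set θ : ℝ := min (θ1 / (4 * K)) (δ * θ1 ^ 2 * κ1 ^ 2 / (48 * K)) with hθ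
  have hθ0 : 0 < θ := by rw [hθ]; positivity
  have hθa : θ * (4 * K) ≤ θ1 := by
    rw [← le_div_iff₀ (by positivity)]; exact min_le_left _ _
  have hθb : θ * (48 * K) ≤ δ * θ1 ^ 2 * κ1 ^ 2 := by
    rw [← le_div_iff₀ (by positivity)]; exact min_le_right _ _
  refine ⟨θ, κ1 ^ 2 / (4 * K), hθ0, by positivity, ?_⟩
  intro ι X _ _ _ S C hS hrow
  set m : ι → ι → ℝ := fun i j => if i = j then 0 else nsq (S i j) with hm
  have hm0 : ∀ i j, 0 ≤ m i j := fun i j => by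
    simp only [hm]; split_ifs; exacts [le_rfl, nsq_nonneg _]
  have hms : ∀ i j, m i j = m j i := fun i j => by simp only [hm, hS i j, eq_comm]
  set w := ∑ i, ∑ j, m i j with hw
  have hw0 : 0 ≤ w := sum_nonneg fun i _ => sum_nonneg fun j _ => hm0 i j
  rcases hw0.eq_or_lt with hw0 | hw0
  · rw [pr_false]
    · exact hδ.le
    · intro y; rw [← hw0, mul_zero]; exact not_lt.2 (nsq_nonneg _)
  obtain ⟨J, hJ⟩ := exists_block m (fun i => by simp [hm]) hm0 hK2
  rw [← hw] at hJ
  set Xw := ∑ i ∈ Jᶜ, ∑ j ∈ J, m i j with hXw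
  set Yw := ∑ i ∈ J, ∑ j ∈ J, m i j with hYw
  have hY0 : 0 ≤ Yw := sum_nonneg fun i _ => sum_nonneg fun j _ => hm0 i j
  have hX1 : w ≤ 4 * K * Xw := by
    have h1 : w / K ^ 2 ≤ 4 / K * Xw := by linarith
    have h2 : w / K ^ 2 * K ^ 2 ≤ 4 / K * Xw * K ^ 2 := by gcongr
    have h3 : w / (K : ℝ) ^ 2 * K ^ 2 = w := by field_simp
    have h4 : 4 / K * Xw * (K : ℝ) ^ 2 = 4 * K * Xw := by field_simp
    linarith
  have hX0 : 0 < Xw := by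
    by_contra hc; push Not at hc; nlinarith
  have hY1 : Yw * K ≤ 4 * Xw := by
    have h1 : Yw ≤ 4 / K * Xw := by
      have : 0 ≤ w / (K : ℝ) ^ 2 := by positivity
      linarith
    calc Yw * K ≤ 4 / K * Xw * K := by gcongr
      _ = 4 * Xw := by field_simp
  have hmS : ∀ i ∈ Jᶜ, ∀ j ∈ J, nsq (S i j) = m i j := by
    intro i hi j hj
    have : i ≠ j := by rintro rfl; exact (mem_compl.1 hi) hj
    simp [hm, this]
  -- the linear form in the signs of `J` obtained after fixing the signs outside `J`
  set D : (ι → Bool) → ι → X → ℝ := fun y j => lin Jᶜ (fun _ => 0) (fun i x => 2 * S i j x) y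
    with hD
  set stack : ι → X × ι → ℝ := fun i p => if p.2 ∈ J then 2 * S i p.2 p.1 else 0 with hstack
  have hst : ∀ i ∈ Jᶜ, nsq (stack i) = 4 * ∑ j ∈ J, m i j := by
    intro i hi
    rw [nsq, Fintype.sum_prod_type, sum_comm, mul_sum]
    have : ∀ j, ∑ x, stack i (x, j) ^ 2 = if j ∈ J then 4 * nsq (S i j) else 0 := by
      intro j
      simp only [hstack]
      split_ifs with h
      · rw [nsq, mul_sum]; exact sum_congr rfl fun x _ => by ring
      · simp
    simp only [this, sum_ite_mem, univ_inter]
    exact sum_congr rfl fun j hj => by rw [hmS i hi j hj]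
  have hst' : ∑ i ∈ Jᶜ, nsq (stack i) = 4 * Xw := by
    rw [sum_congr rfl hst, ← mul_sum]
  have hτ : ∀ y, nsq (lin Jᶜ (fun _ => 0) stack y) = ∑ j ∈ J, nsq (D y j) := by
    intro y
    rw [nsq, Fintype.sum_prod_type, sum_comm]
    have : ∀ j, ∑ x, lin Jᶜ (fun _ => 0) stack y (x, j) ^ 2 =
        if j ∈ J then nsq (D y j) else 0 := by
      intro j
      simp only [hstack, lin]
      split_ifs with h
      · simp [nsq, hD, lin]
      · simp
    simp only [this, sum_ite_mem, univ_inter]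
  have hrow1 : ∀ i ∈ Jᶜ, ∑ j ∈ J, m i j ≤ θ * w := fun i _ =>
    (sum_le_sum_of_subset_of_nonneg (subset_univ _) fun j _ _ => hm0 i j).trans (hrow i)
  have hrow2 : ∀ j ∈ J, ∑ i ∈ Jᶜ, m i j ≤ θ * w := fun j _ => by
    simp only [hms _ j]
    exact (sum_le_sum_of_subset_of_nonneg (subset_univ _) fun i _ _ => hm0 j i).trans (hrow j)
  have hθw : θ * w ≤ θ1 * Xw := by
    calc θ * w ≤ θ * (4 * K * Xw) := by gcongr
      _ = θ * (4 * K) * Xw := by ring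
      _ ≤ _ := by gcongr
  have b1 : pr (fun y : ι → Bool => ∑ j ∈ J, nsq (D y j) < κ1 * (4 * Xw)) ≤ δ / 4 := by
    have := hL ι (X × ι) (fun _ => 0) stack Jᶜ (fun i hi => by
      rw [hst', hst i hi]
      have := hrow1 i hi
      linarith)
    simpa only [hst', hτ] using this
  set v := θ1 * (κ1 * (4 * Xw)) with hv
  have hv0 : 0 < v := by rw [hv]; positivity
  have b2 : pr (fun y : ι → Bool => ∃ j ∈ J, v ≤ nsq (D y j)) ≤ δ / 4 := by
    refine (pr_exists_le J _).trans ?_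
    have h1 : ∀ j ∈ J, pr (fun y : ι → Bool => v ≤ nsq (D y j)) ≤
        48 * (θ * w) / v ^ 2 * ∑ i ∈ Jᶜ, m i j := by
      intro j hj
      have h2 : pr (fun y : ι → Bool => v ≤ nsq (D y j)) ≤
          pr (fun y : ι → Bool => v ^ 2 ≤ nsq (D y j) ^ 2) :=
        pr_mono fun y hy => by gcongr
      refine h2.trans ((markov (fun _ => sq_nonneg _) (by positivity)).trans ?_)
      have h3 := ev_nsq_lin_sq Jᶜ (fun _ => 0) (fun i x => 2 * S i j x)
      have h4 : nsq (fun _ : X => (0 : ℝ)) + ∑ i ∈ Jᶜ, nsq (fun x => 2 * S i j x) =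
          4 * ∑ i ∈ Jᶜ, m i j := by
        have : nsq (fun _ : X => (0 : ℝ)) = 0 := by simp [nsq]
        rw [this, zero_add, mul_sum]
        exact sum_congr rfl fun i hi => by rw [nsq_smul, hmS i hi j hj]; norm_num
      rw [h4] at h3
      rw [div_mul_eq_mul_div]
      gcongr
      refine h3.trans ?_
      have h5 := hrow2 j hj
      have h6 : 0 ≤ ∑ i ∈ Jᶜ, m i j := sum_nonneg fun i _ => hm0 i j
      nlinarith
    refine (sum_le_sum h1).trans ?_
    rw [← mul_sum, sum_comm, ← hXw, div_mul_eq_mul_div, div_le_iff₀ (by positivity)]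
    have h7 : θ * w * Xw ≤ θ * (4 * K * Xw) * Xw := by gcongr
    have h8 : θ * (48 * K) * Xw ^ 2 ≤ δ * θ1 ^ 2 * κ1 ^ 2 * Xw ^ 2 := by gcongr
    rw [hv]
    nlinarith
  have b3 : pr (fun y' : ι → Bool => κ1 ^ 2 * Xw ≤
      nsq fun x => offq J (fun i j => S i j x) fun i => rad (y' i)) ≤ δ / 4 := by
    refine pr_le_of_markov (fun _ => nsq_nonneg _) (by positivity) ?_
    rw [ev_nsq_offq J S hS]
    have : 32 * Yw ≤ δ * κ1 ^ 2 * (K * Yw) := by nlinarith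
    have h9 : δ * κ1 ^ 2 * (Yw * K) ≤ δ * κ1 ^ 2 * (4 * Xw) := by gcongr
    nlinarith
  rw [pr_resample J]
  have hdec : ∀ y y' : ι → Bool, ∀ x,
      C x + offq univ (fun i j => S i j x) (fun i => rad (J.piecewise y' y i)) =
      lin J (fun x => C x + offq Jᶜ (fun i j => S i j x) fun i => rad (y i)) (D y) y' x +
      offq J (fun i j => S i j x) fun i => rad (y' i) := by
    intro y y' x
    rw [offq_split J _ (fun i j => by rw [hS])]
    rw [offq_congr (s := Jᶜ) (z' := fun i => rad (y i)) (fun i hi => by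
      rw [piecewise_eq_of_notMem _ _ _ (mem_compl.1 hi)]),
      offq_congr (s := J) (z' := fun i => rad (y' i)) (fun i hi => by
      rw [piecewise_eq_of_mem _ _ _ hi])]
    simp only [lin, hD, zero_add]
    have : ∑ j ∈ J, rad (J.piecewise y' y j) * ∑ i ∈ Jᶜ, rad (J.piecewise y' y i) * (2 * S i j x)
        = ∑ j ∈ J, rad (y' j) * ∑ i ∈ Jᶜ, rad (y i) * (2 * S i j x) := by
      refine sum_congr rfl fun j hj => ?_
      rw [piecewise_eq_of_mem _ _ _ hj]
      congr 1
      exact sum_congr rfl fun i hi => by rw [piecewise_eq_of_notMem _ _ _ (mem_compl.1 hi)]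
    rw [this]; ring
  refine (ev_pr_le _ (fun y => ∑ j ∈ J, nsq (D y j) < κ1 * (4 * Xw) ∨ ∃ j ∈ J, v ≤ nsq (D y j))
    (δ / 4 + δ / 4) (by positivity) ?_).trans ?_
  · intro y hy
    push Not at hy
    obtain ⟨hy1, hy2⟩ := hy
    have b4 := hL ι X (fun x => C x + offq Jᶜ (fun i j => S i j x) fun i => rad (y i)) (D y) J
      (fun j hj => by
        refine (hy2 j hj).le.trans ?_
        rw [hv]; gcongr)
    refine (pr_le_add fun y' hy' => ?_).trans (add_le_add b4 b3)
    by_contra hc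
    push Not at hc
    obtain ⟨hc1, hc2⟩ := hc
    have h := nsq_le_of_add _ _ _ (hdec y y')
    have h2 : κ1 * (κ1 * (4 * Xw)) ≤ κ1 * ∑ j ∈ J, nsq (D y j) := by gcongr
    have h3 : κ1 ^ 2 / (4 * K) * w ≤ κ1 ^ 2 * Xw := by
      rw [div_mul_eq_mul_div, div_le_iff₀ (by positivity)]
      nlinarith [sq_nonneg κ1]
    nlinarith
  · have := pr_or_le (fun y : ι → Bool => ∑ j ∈ J, nsq (D y j) < κ1 * (4 * Xw))
      (fun y => ∃ j ∈ J, v ≤ nsq (D y j))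
    linarith

end QuadraticSmallBall

/-! ### Random symmetric sign matrices and virtual vertices -/

section Virtual
variable {V W U : Type} [Fintype V] [DecidableEq V] [Fintype W] [DecidableEq W] [Fintype U]
  [DecidableEq U]

/-- Revealing the edges inside `j(V)` and the edges from `star` to `k(U)` are independent. -/
lemma ev_border (j : V → W) (hj : Function.Injective j) (star : W) (hs : ∀ v, j v ≠ star)
    (k : U → W) (hk : Function.Injective k) (F : (Sym2 V → Bool) → (U → Bool) → ℝ) :
    ev (fun ω : Sym2 W → Bool => F (fun s => ω (s.map j)) (fun u => ω s(star, k u))) =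
      ev fun ω => ev fun x => F ω x := by
  classical
  let e : Sym2 V ⊕ U → Sym2 W := Sum.elim (Sym2.map j) fun u => s(star, k u)
  have hne : ∀ (s : Sym2 V) u, s.map j ≠ s(star, k u) := by
    intro s u h
    have : star ∈ s.map j := by rw [h]; exact Sym2.mem_mk_left _ _
    obtain ⟨v, _, hv⟩ := Sym2.mem_map.1 this
    exact hs v hv
  have he : Function.Injective e := by
    rintro (a | a) (b | b) h
    · exact congrArg _ (Sym2.map.injective hj h)
    · exact absurd h (hne a b)
    · exact absurd h.symm (hne b a)
    · exact congrArg _ (hk (Sym2.congr_right.1 h))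
  have := ev_restrict (T := Bool) e he
    (fun g => F (fun s => g (Sum.inl s)) (fun u => g (Sum.inr u)))
  rw [ev_sumType] at this
  exact this

/-- The symmetric sign matrix attached to a choice of sign for every unordered pair. -/
noncomputable def sm (ω : Sym2 V → Bool) : Matrix V V ℝ := fun i j => rad (ω s(i, j))

lemma sm_symm (ω : Sym2 V → Bool) (i j : V) : sm ω i j = sm ω j i := by
  simp only [sm, Sym2.eq_swap]

/-- Average over uniformly random symmetric sign matrices indexed by `V`. -/
noncomputable def Ex (V : Type) [Fintype V] [DecidableEq V] (G : Matrix V V ℝ → ℝ) : ℝ :=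
  ev fun ω : Sym2 V → Bool => G (sm ω)

/-- Average over a fresh border: a uniformly random sign row and a random corner sign. -/
noncomputable def evB (A : Matrix V V ℝ) (G : Matrix (Option V) (Option V) ℝ → ℝ) : ℝ :=
  ev fun η : V → Bool => ev fun d : Bool => G (ext A (fun i => rad (η i)) (rad d))

lemma Ex_equiv (e : V ≃ W) (G : Matrix W W ℝ → ℝ) :
    Ex W G = Ex V fun A => G (A.submatrix e.symm e.symm) := by
  unfold Ex
  exact (ev_restrict (Sym2.map e.symm) (Sym2.map.injective e.symm.injective)
    (fun ω : Sym2 W → Bool => G (sm ω))).symm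

lemma Ex_option (G : Matrix (Option V) (Option V) ℝ → ℝ) :
    Ex (Option V) G = Ex V fun A => evB A G := by
  unfold Ex evB
  have := ev_border (V := V) (W := Option V) (U := Option V) some (Option.some_injective _) none
    (by simp) id Function.injective_id
    (fun ω x => G (ext (sm ω) (fun i => rad (x (some i))) (rad (x none))))
  calc _ = _ := ev_congr fun ω => by
        congr 1
        ext i j
        rcases i with _ | i <;> rcases j with _ | j
        · rfl
        · rfl
        · simp only [sm, ext_sn, id, Sym2.eq_swap]
        · rfl
    _ = _ := this
    _ = _ := ev_congr fun ω => by rw [ev_option, ev_comm]; rfl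

variable {ι ρ ρ' : Type} [Fintype ι] [DecidableEq ι] [Fintype ρ'] [DecidableEq ρ']
  [Fintype ρ] [DecidableEq ρ]

/-- The matrix `A` enlarged by virtual vertices `ρ`: all entries meeting a virtual vertex are
signs given by `ω`, except that virtual vertices have zero diagonal. -/
noncomputable def mix (A : Matrix ι ι ℝ) (ω : Sym2 (ι ⊕ ρ) → Bool) : Matrix (ι ⊕ ρ) (ι ⊕ ρ) ℝ
  | Sum.inl i, Sum.inl j => A i j
  | Sum.inl i, Sum.inr w => rad (ω s(Sum.inl i, Sum.inr w))
  | Sum.inr w, Sum.inl i => rad (ω s(Sum.inl i, Sum.inr w))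
  | Sum.inr w, Sum.inr w' => if w = w' then 0 else rad (ω s(Sum.inr w, Sum.inr w'))

lemma mix_symm {A : Matrix ι ι ℝ} (hA : ∀ i j, A i j = A j i) (ω : Sym2 (ι ⊕ ρ) → Bool)
    (p q : ι ⊕ ρ) : mix A ω p q = mix A ω q p := by
  rcases p with p | p <;> rcases q with q | q
  · exact hA p q
  · rfl
  · rfl
  · simp only [mix, Sym2.eq_swap, eq_comm]

/-- The second moment of the permanent after adding the virtual vertices `ρ`. -/
noncomputable def Psi (ρ : Type) [Fintype ρ] [DecidableEq ρ] (A : Matrix ι ι ℝ) : ℝ :=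
  ev fun ω : Sym2 (ι ⊕ ρ) → Bool => per (mix A ω) ^ 2

lemma Psi_nonneg (A : Matrix ι ι ℝ) : 0 ≤ Psi ρ A := ev_nonneg fun _ => sq_nonneg _

lemma mix_comp {ι' : Type} [Fintype ι'] [DecidableEq ι'] (f : ι' ≃ ι) (e : ρ' ≃ ρ)
    (A : Matrix ι ι ℝ) (ω : Sym2 (ι ⊕ ρ) → Bool) :
    mix (A.submatrix f f) (fun s => ω (s.map (Equiv.sumCongr f e))) =
      (mix A ω).submatrix (Equiv.sumCongr f e) (Equiv.sumCongr f e) := by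
  ext p q
  rcases p with p | p <;> rcases q with q | q <;> simp [mix]

lemma ev_map_equiv (e : V ≃ W) (F : (Sym2 V → Bool) → ℝ) :
    ev (fun ω : Sym2 W → Bool => F fun s => ω (s.map e)) = ev F :=
  ev_restrict (Sym2.map e) (Sym2.map.injective e.injective) F

lemma Psi_congr {ι' : Type} [Fintype ι'] [DecidableEq ι'] (f : ι' ≃ ι) (e : ρ' ≃ ρ)
    (A : Matrix ι ι ℝ) : Psi ρ' (A.submatrix f f) = Psi ρ A := by
  unfold Psi
  rw [← ev_map_equiv (Equiv.sumCongr f e)]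
  refine ev_congr fun ω => ?_
  rw [mix_comp, per_submatrix]

lemma Psi_submatrix {ι' : Type} [Fintype ι'] [DecidableEq ι'] (f : ι' ≃ ι)
    (A : Matrix ι ι ℝ) : Psi ρ (A.submatrix f f) = Psi ρ A :=
  Psi_congr f (Equiv.refl ρ) A

lemma Psi_equiv (e : ρ' ≃ ρ) (A : Matrix ι ι ℝ) : Psi ρ' A = Psi ρ A :=
  Psi_congr (Equiv.refl ι) e A

lemma Psi_empty [IsEmpty ρ] (A : Matrix ι ι ℝ) : Psi ρ A = per A ^ 2 := by
  unfold Psi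
  have : ∀ ω : Sym2 (ι ⊕ ρ) → Bool, per (mix A ω) = per A := fun ω => by
    rw [← per_submatrix (Equiv.sumEmpty ι ρ).symm]
    rfl
  rw [ev_congr fun ω => by rw [this ω], ev_const]

/-- Moving the extra index of `Option` into the virtual part. -/
def eVirt : Option (ι ⊕ ρ) ≃ ι ⊕ Option ρ where
  toFun o := o.elim (Sum.inr none) (Sum.map id some)
  invFun := Sum.elim (fun i => some (Sum.inl i)) (fun o => o.map Sum.inr)
  left_inv o := by rcases o with _ | (_ | _) <;> rfl
  right_inv p := by rcases p with _ | (_ | _) <;> rfl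

/-- Moving the extra index of `Option` into the real part. -/
def eReal : Option (ι ⊕ ρ) ≃ Option ι ⊕ ρ where
  toFun o := o.elim (Sum.inl none) (Sum.map some id)
  invFun := Sum.elim (fun o => o.map Sum.inl) (fun w => some (Sum.inr w))
  left_inv o := by rcases o with _ | (_ | _) <;> rfl
  right_inv p := by rcases p with (_ | _) | _ <;> rfl

lemma mix_virt (A : Matrix ι ι ℝ) (ω : Sym2 (ι ⊕ Option ρ) → Bool) :
    (mix A ω).submatrix eVirt eVirt = ext (mix A fun s => ω (s.map (Sum.map id some)))
      (fun p => rad (ω s(Sum.inr none, Sum.map id some p))) 0 := by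
  ext p q
  rcases p with _ | (p | p) <;> rcases q with _ | (q | q) <;>
    simp [mix, eVirt, Sym2.eq_swap]

lemma mix_real (A : Matrix ι ι ℝ) (y : ι → ℝ) (d : ℝ) (ω : Sym2 (Option ι ⊕ ρ) → Bool) :
    (mix (ext A y d) ω).submatrix eReal eReal =
      ext (mix A fun s => ω (s.map (Sum.map some id)))
      (Sum.elim y fun w => rad (ω s(Sum.inl none, Sum.inr w))) d := by
  ext p q
  rcases p with _ | (p | p) <;> rcases q with _ | (q | q) <;>
    simp [mix, eReal]

lemma ev_virt (F : (Sym2 (ι ⊕ ρ) → Bool) → (ι ⊕ ρ → Bool) → ℝ) :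
    ev (fun ω : Sym2 (ι ⊕ Option ρ) → Bool => F (fun s => ω (s.map (Sum.map id some)))
      (fun p => ω s(Sum.inr none, Sum.map id some p))) = ev fun ω => ev fun z => F ω z :=
  ev_border _ (Function.injective_id.sumMap (Option.some_injective _)) _
    (by rintro (_ | _) <;> simp) _ (Function.injective_id.sumMap (Option.some_injective _)) F

lemma ev_real (F : (Sym2 (ι ⊕ ρ) → Bool) → (ρ → Bool) → ℝ) :
    ev (fun ω : Sym2 (Option ι ⊕ ρ) → Bool => F (fun s => ω (s.map (Sum.map some id)))
      (fun w => ω s(Sum.inl none, Sum.inr w))) = ev fun ω => ev fun x => F ω x :=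
  ev_border _ ((Option.some_injective _).sumMap Function.injective_id) _
    (by rintro (_ | _) <;> simp) _ Sum.inr_injective F

/-- A further virtual vertex is a border with zero corner and a random sign row. -/
lemma Psi_virt (A : Matrix ι ι ℝ) : Psi (Option ρ) A =
    ev fun ω : Sym2 (ι ⊕ ρ) → Bool => ev fun z : ι ⊕ ρ → Bool =>
      per (ext (mix A ω) (fun p => rad (z p)) 0) ^ 2 := by
  rw [← ev_virt (fun ω z => per (ext (mix A ω) (fun p => rad (z p)) 0) ^ 2)]
  refine ev_congr fun ω => ?_
  rw [← mix_virt, per_submatrix]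

/-- A further real vertex is a border whose entries at the virtual vertices are averaged. -/
lemma Psi_real (A : Matrix ι ι ℝ) (y : ι → ℝ) (d : ℝ) : Psi ρ (ext A y d) =
    ev fun ω : Sym2 (ι ⊕ ρ) → Bool => ev fun x : ρ → Bool =>
      per (ext (mix A ω) (Sum.elim y fun w => rad (x w)) d) ^ 2 := by
  rw [← ev_real (fun ω x => per (ext (mix A ω) (Sum.elim y fun w => rad (x w)) d) ^ 2)]
  refine ev_congr fun ω => ?_
  rw [← mix_real, per_submatrix]

end Virtual

section Quad
variable {α β : Type} [Fintype α] [DecidableEq α] [Fintype β] [DecidableEq β]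

lemma ev_quad_sq (C : ℝ) (l : α → ℝ) (S : α → α → ℝ) (hS : ∀ i j, S i j = S j i) :
    ev (fun y : α → Bool => (C + ∑ i, rad (y i) * l i + offq univ S fun i => rad (y i)) ^ 2) =
      C ^ 2 + ∑ i, l i ^ 2 + 2 * ∑ i, ∑ j, if i = j then 0 else S i j ^ 2 := by
  have : ∀ y : α → Bool, (C + ∑ i, rad (y i) * l i + offq univ S fun i => rad (y i)) ^ 2 =
      C ^ 2 + (2 * C) * (∑ i, rad (y i) * l i) + (2 * C) * (offq univ S fun i => rad (y i)) +
      (∑ i, rad (y i) * l i) ^ 2 + (offq univ S fun i => rad (y i)) ^ 2 +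
      2 * ∑ i, l i * ((offq univ S fun i => rad (y i)) * rad (y i)) := fun y => by
    have : ∑ i, l i * ((offq univ S fun i => rad (y i)) * rad (y i)) =
      (offq univ S fun i => rad (y i)) * ∑ i, rad (y i) * l i := by
      rw [mul_sum]; exact sum_congr rfl fun i _ => by ring
    rw [this]; ring
  rw [ev_congr this]
  simp only [ev_add, ev_mul_left, ev_const, ev_sum, ev_mul_right, ev_rad, ev_offq, ev_lin_sq,
    ev_offq_sq univ S hS, ev_offq_rad]
  simp

/-- The influence of one index on a quadratic form in signs. -/
lemma ev_quad_flip (C : ℝ) (l : α → ℝ) (S : α → α → ℝ) (hS : ∀ i j, S i j = S j i)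
    (h : (α → Bool) → ℝ)
    (hh : ∀ y, h y = C + ∑ i, rad (y i) * l i + offq univ S fun i => rad (y i)) (i : α) :
    ev (fun y => ((h y - h (flip1 i y)) / 2) ^ 2) =
      l i ^ 2 + 4 * ∑ j, if i = j then 0 else S i j ^ 2 := by
  have h1 : ∀ y, (h y - h (flip1 i y)) / 2 =
      rad (y i) * (l i + ∑ j ∈ univ.erase i, rad (y j) * (2 * S i j)) := by
    intro y
    have a1 : ∑ k, rad (y k) * l k - ∑ k, rad (flip1 i y k) * l k = 2 * rad (y i) * l i := by
      rw [← sum_sub_distrib, sum_eq_single i]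
      · rw [rad_flip1_self]; ring
      · intro b _ hb; rw [flip1_ne hb]; ring
      · simp
    have a2 : (offq univ S fun i => rad (y i)) - (offq univ S fun k => rad (flip1 i y k)) =
        2 * (rad (y i) * ∑ j ∈ univ.erase i, rad (y j) * (2 * S i j)) := by
      have b1 : ∀ z : α → ℝ, offq univ S z = offq ({i}ᶜ) S z +
          z i * ∑ j ∈ univ.erase i, z j * (2 * S i j) := by
        intro z
        rw [offq_split {i} S hS, sum_singleton]
        have : offq {i} S z = 0 := by simp [offq]
        rw [this, add_zero]
        congr 2
        rw [show ({i}ᶜ : Finset α) = univ.erase i by ext; simp]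
        exact sum_congr rfl fun j _ => by rw [hS j i]
      rw [b1, b1, offq_congr (s := {i}ᶜ) (z' := fun i => rad (y i)) (z := fun k => rad (flip1 i y k))
        (fun k hk => by rw [flip1_ne (by simpa using hk)]), rad_flip1_self]
      have : ∑ j ∈ univ.erase i, rad (flip1 i y j) * (2 * S i j) =
        ∑ j ∈ univ.erase i, rad (y j) * (2 * S i j) :=
        sum_congr rfl fun j hj => by rw [flip1_ne (ne_of_mem_erase hj)]
      rw [this]; ring
    rw [hh, hh]
    linear_combination a1 / 2 + a2 / 2
  have : ∀ y : α → Bool, ((h y - h (flip1 i y)) / 2) ^ 2 =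
      (l i + ∑ k, rad (y k) * (if i = k then 0 else 2 * S i k) +
        offq univ (fun _ _ => 0) fun i => rad (y i)) ^ 2 := fun y => by
    rw [h1, mul_pow, rad_sq, one_mul]
    have b2 : offq univ (fun _ _ => 0) (fun i => rad (y i)) = 0 := by simp [offq]
    rw [b2, add_zero, ← add_sum_erase univ _ (mem_univ i)]
    simp only [if_true, mul_zero, zero_add]
    congr 2
    exact sum_congr rfl fun j hj => by rw [if_neg (ne_of_mem_erase hj).symm]
  rw [ev_congr this, ev_quad_sq _ _ _ (fun _ _ => rfl)]
  have b3 : ∑ k, (if i = k then 0 else 2 * S i k) ^ 2 =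
      4 * ∑ j, if i = j then 0 else S i j ^ 2 := by
    rw [mul_sum]
    refine sum_congr rfl fun k _ => ?_
    split_ifs <;> ring
  rw [b3]; simp

/-- Total influence of a quadratic form in signs is at most twice its second moment. -/
lemma ev_quad_influence (C : ℝ) (l : α → ℝ) (S : α → α → ℝ) (hS : ∀ i j, S i j = S j i)
    (h : (α → Bool) → ℝ)
    (hh : ∀ y, h y = C + ∑ i, rad (y i) * l i + offq univ S fun i => rad (y i)) :
    ∑ i, ev (fun y => ((h y - h (flip1 i y)) / 2) ^ 2) ≤ 2 * ev fun y => h y ^ 2 := by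
  simp only [ev_quad_flip C l S hS h hh]
  rw [ev_congr fun y => by rw [hh y], ev_quad_sq C l S hS, sum_add_distrib, ← mul_sum]
  nlinarith [sq_nonneg C, sum_nonneg fun i (_ : i ∈ univ) => sq_nonneg (l i)]

lemma offq_sumType (S : α ⊕ β → α ⊕ β → ℝ) (hS : ∀ i j, S i j = S j i) (y : α → ℝ) (x : β → ℝ) :
    offq univ S (Sum.elim y x) = offq univ (fun a a' => S (Sum.inl a) (Sum.inl a')) y +
      ∑ b, x b * ∑ a, y a * (2 * S (Sum.inl a) (Sum.inr b)) +
      offq univ (fun b b' => S (Sum.inr b) (Sum.inr b')) x := by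
  unfold offq
  rw [Fintype.sum_sum_type]
  simp only [Fintype.sum_sum_type, Sum.elim_inl, Sum.elim_inr, Sum.inl.injEq, Sum.inr.injEq,
    reduceCtorEq, if_false, sum_add_distrib]
  have h1 : ∑ b, x b * ∑ a, y a * (2 * S (Sum.inl a) (Sum.inr b)) =
      ∑ a, ∑ b, y a * x b * S (Sum.inl a) (Sum.inr b) +
      ∑ b, ∑ a, x b * y a * S (Sum.inr b) (Sum.inl a) := by
    rw [sum_comm (f := fun a b => y a * x b * S (Sum.inl a) (Sum.inr b)), ← sum_add_distrib]
    refine sum_congr rfl fun b _ => ?_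
    rw [mul_sum, ← sum_add_distrib]
    refine sum_congr rfl fun a _ => ?_
    rw [hS (Sum.inr b)]; ring
  rw [h1]; ring

end Quad

/-! ### Second-moment identities for virtual vertices -/

section Facts
variable {ι ρ : Type} [Fintype ι] [DecidableEq ι] [Fintype ρ] [DecidableEq ρ]

/-- Symmetric sign matrices. -/
def IsSgn {V : Type} (A : Matrix V V ℝ) : Prop := (∀ i j, A i j = A j i) ∧ ∀ i j, A i j ^ 2 = 1

lemma IsSgn.ext {A : Matrix ι ι ℝ} (hA : IsSgn A) {y : ι → ℝ} (hy : ∀ i, y i ^ 2 = 1) {d : ℝ}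
    (hd : d ^ 2 = 1) : IsSgn (ext A y d) := by
  refine ⟨ext_symm hA.1 y d, ?_⟩
  rintro (_ | i) (_ | j) <;> simp [hy, hd, hA.2]

lemma IsSgn.submatrix {V W : Type} {A : Matrix V V ℝ} (hA : IsSgn A) (f : W → V) :
    IsSgn (A.submatrix f f) := ⟨fun _ _ => hA.1 _ _, fun _ _ => hA.2 _ _⟩

lemma isSgn_sm (ω : Sym2 ι → Bool) : IsSgn (sm ω) := ⟨sm_symm ω, fun _ _ => rad_sq _⟩

/-- Mean square of a cofactor after adding the virtual vertices `ρ`. -/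
noncomputable def cq (A : Matrix ι ι ℝ) (p q : ι ⊕ ρ) : ℝ :=
  ev fun ω : Sym2 (ι ⊕ ρ) → Bool => cof (mix A ω) p q ^ 2

/-- Sum of the diagonal cofactors after adding virtual vertices. -/
noncomputable def trc (A : Matrix ι ι ℝ) (ω : Sym2 (ι ⊕ ρ) → Bool) : ℝ :=
  ∑ p, cof (mix A ω) p p

lemma cq_nonneg (A : Matrix ι ι ℝ) (p q : ι ⊕ ρ) : 0 ≤ cq A p q := ev_nonneg fun _ => sq_nonneg _

lemma cq_symm {A : Matrix ι ι ℝ} (hA : ∀ i j, A i j = A j i) (p q : ι ⊕ ρ) :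
    cq A p q = cq A q p := ev_congr fun ω => by rw [cof_symm (mix_symm hA ω)]

/-- The diagonal part of `Psi (Option ρ) A`. -/
noncomputable def partD (ρ : Type) [Fintype ρ] [DecidableEq ρ] (A : Matrix ι ι ℝ) : ℝ :=
  ev fun ω : Sym2 (ι ⊕ ρ) → Bool => trc A ω ^ 2
/-- The virtual-virtual part of `Psi (Option ρ) A`. -/
noncomputable def partW (ρ : Type) [Fintype ρ] [DecidableEq ρ] (A : Matrix ι ι ℝ) : ℝ :=
  2 * ∑ w : ρ, ∑ v : ρ, if w = v then 0 else cq A (Sum.inr w) (Sum.inr v)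

/-- The real-virtual part of `Psi (Option ρ) A`. -/
noncomputable def partM (ρ : Type) [Fintype ρ] [DecidableEq ρ] (A : Matrix ι ι ℝ) : ℝ :=
  4 * ∑ b : ι, ∑ w : ρ, cq A (Sum.inl b) (Sum.inr w)
/-- The off-diagonal real-real part of `Psi (Option ρ) A`. -/
noncomputable def partB (ρ : Type) [Fintype ρ] [DecidableEq ρ] (A : Matrix ι ι ℝ) : ℝ :=
  2 * ∑ b : ι, ∑ b' : ι, if b = b' then 0 else cq (ρ := ρ) A (Sum.inl b) (Sum.inl b')

lemma ite_nn {p : Prop} [Decidable p] {x : ℝ} (h : 0 ≤ x) : 0 ≤ if p then 0 else x := by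
  split_ifs <;> simp [h]

lemma partD_nonneg (A : Matrix ι ι ℝ) : 0 ≤ partD ρ A := ev_nonneg fun _ => sq_nonneg _
lemma partW_nonneg (A : Matrix ι ι ℝ) : 0 ≤ partW ρ A :=
  mul_nonneg zero_le_two (sum_nonneg fun _ _ => sum_nonneg fun _ _ => ite_nn (cq_nonneg _ _ _))
lemma partB_nonneg (A : Matrix ι ι ℝ) : 0 ≤ partB ρ A :=
  mul_nonneg zero_le_two (sum_nonneg fun _ _ => sum_nonneg fun _ _ => ite_nn (cq_nonneg _ _ _))
lemma partM_nonneg (A : Matrix ι ι ℝ) : 0 ≤ partM ρ A :=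
  mul_nonneg (by norm_num) (sum_nonneg fun _ _ => sum_nonneg fun _ _ => cq_nonneg _ _ _)

lemma Psi_virt_eq {A : Matrix ι ι ℝ} (hA : ∀ i j, A i j = A j i) : Psi (Option ρ) A =
    partD ρ A + 2 * ∑ p : ι ⊕ ρ, ∑ q, if p = q then 0 else cq A p q := by
  rw [Psi_virt]
  have : ∀ ω : Sym2 (ι ⊕ ρ) → Bool, (ev fun z : ι ⊕ ρ → Bool =>
      per (ext (mix A ω) (fun p => rad (z p)) 0) ^ 2) =
      trc A ω ^ 2 + 2 * ∑ p, ∑ q, if p = q then 0 else cof (mix A ω) p q ^ 2 := by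
    intro ω
    have h := ev_quad_sq (trc A ω) (fun _ => 0) (cof (mix A ω)) (cof_symm (mix_symm hA ω))
    simp only [mul_zero, sum_const_zero, add_zero, ne_eq, OfNat.ofNat_ne_zero, not_false_eq_true,
      zero_pow] at h
    rw [← h]
    refine ev_congr fun z => ?_
    rw [per_ext_sign _ _ fun _ => rad_sq _, zero_mul, zero_add]
    rfl
  rw [ev_congr this, ev_add, ev_mul_left, ev_sum]
  unfold partD
  congr 2
  refine sum_congr rfl fun p _ => ?_
  rw [ev_sum]
  refine sum_congr rfl fun q _ => ?_
  split_ifs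
  · exact ev_zero
  · rfl

lemma Psi_virt_parts {A : Matrix ι ι ℝ} (hA : ∀ i j, A i j = A j i) : Psi (Option ρ) A =
    partD ρ A + partW ρ A + partM ρ A + partB ρ A := by
  rw [Psi_virt_eq hA, Fintype.sum_sum_type]
  simp only [Fintype.sum_sum_type, Sum.inl.injEq, Sum.inr.injEq, reduceCtorEq, if_false,
    sum_add_distrib, partW, partM, partB]
  rw [sum_comm (f := fun (w : ρ) (b : ι) => cq A (Sum.inr w) (Sum.inl b))]
  simp only [cq_symm hA (Sum.inr _) (Sum.inl _)]
  ring

/-- Second moment after adding a real vertex with sign row `y`, as a quadratic function of `y`. -/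
lemma Psi_real_eq {A : Matrix ι ι ℝ} (hA : ∀ i j, A i j = A j i) (y : ι → ℝ)
    (hy : ∀ i, y i ^ 2 = 1) (d : ℝ) : Psi ρ (ext A y d) =
    (ev fun ω : Sym2 (ι ⊕ ρ) → Bool => (d * per (mix A ω) + trc A ω +
      offq univ (fun b b' => cof (mix A ω) (Sum.inl b) (Sum.inl b')) y) ^ 2) +
    (ev fun ω : Sym2 (ι ⊕ ρ) → Bool => ∑ w : ρ,
      (∑ b, y b * (2 * cof (mix A ω) (Sum.inl b) (Sum.inr w))) ^ 2) + partW ρ A := by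
  rw [Psi_real]
  have : ∀ ω : Sym2 (ι ⊕ ρ) → Bool, (ev fun x : ρ → Bool =>
      per (ext (mix A ω) (Sum.elim y fun w => rad (x w)) d) ^ 2) =
      (d * per (mix A ω) + trc A ω +
      offq univ (fun b b' => cof (mix A ω) (Sum.inl b) (Sum.inl b')) y) ^ 2 +
      ∑ w : ρ, (∑ b, y b * (2 * cof (mix A ω) (Sum.inl b) (Sum.inr w))) ^ 2 +
      2 * ∑ w : ρ, ∑ w' : ρ, if w = w' then 0 else cof (mix A ω) (Sum.inr w) (Sum.inr w') ^ 2 := by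
    intro ω
    have hs := cof_symm (mix_symm hA ω)
    rw [← ev_quad_sq _ _ (fun w w' => cof (mix A ω) (Sum.inr w) (Sum.inr w')) (fun _ _ => hs _ _)]
    refine ev_congr fun x => ?_
    rw [per_ext_sign, offq_sumType _ hs]
    · congr 1; unfold trc; ring
    · rintro (i | w)
      · exact hy i
      · exact rad_sq _
  rw [ev_congr this, ev_add, ev_add, ev_mul_left]
  unfold partW
  congr 2
  rw [ev_sum]
  refine sum_congr rfl fun p _ => ?_
  rw [ev_sum]
  refine sum_congr rfl fun q _ => ?_
  split_ifs
  · exact ev_zero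
  · rfl

/-- The mean square of half the change of the permanent caused by flipping the sign of the edge
between `b` and `w`. -/
noncomputable def dflip (A : Matrix ι ι ℝ) (b : ι) (w : ρ) : ℝ :=
  ev fun ω : Sym2 (ι ⊕ ρ) → Bool =>
    ((per (mix A ω) - per (mix A (flip1 s(Sum.inl b, Sum.inr w) ω))) / 2) ^ 2

lemma flip1_comp {α β : Type} [Fintype α] [DecidableEq α] [Fintype β] [DecidableEq β]
    (f : α → β) (hf : Function.Injective f) (a : α) (ω : β → Bool) :
    flip1 a (fun s => ω (f s)) = fun s => flip1 (f a) ω (f s) := by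
  ext s
  by_cases h : s = a
  · subst h; simp [flip1]
  · rw [flip1_ne h, flip1_ne fun h' => h (hf h')]

lemma dflip_congr {ι' ρ' : Type} [Fintype ι'] [DecidableEq ι'] [Fintype ρ'] [DecidableEq ρ']
    (f : ι' ≃ ι) (e : ρ' ≃ ρ) (A : Matrix ι ι ℝ) (b : ι') (w : ρ') :
    dflip (A.submatrix f f) b w = dflip A (f b) (e w) := by
  unfold dflip
  rw [← ev_map_equiv (Equiv.sumCongr f e)]
  refine ev_congr fun ω => ?_
  rw [flip1_comp (Sym2.map (Equiv.sumCongr f e))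
    (Sym2.map.injective (Equiv.sumCongr f e).injective), mix_comp, mix_comp, per_submatrix,
    per_submatrix]
  rfl

/-- The sign of the edge from `b` to the last virtual vertex multiplies twice a linear form in the other
edges of that vertex, with the cofactors of row `b` as coefficients. -/
lemma dflip_none {A : Matrix ι ι ℝ} (hA : ∀ i j, A i j = A j i) (b : ι) :
    dflip A b (none : Option ρ) =
      4 * ∑ q : ι ⊕ ρ, if Sum.inl b = q then 0 else cq A (Sum.inl b) q := by
  have h1 : ∀ ω : Sym2 (ι ⊕ Option ρ) → Bool, per (mix A ω) =
      per (ext (mix A fun s => ω (s.map (Sum.map id some)))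
      (fun p => rad (ω s(Sum.inr none, Sum.map id some p))) 0) := fun ω => by
    rw [← mix_virt, per_submatrix]
  let H : (Sym2 (ι ⊕ ρ) → Bool) → (ι ⊕ ρ → Bool) → ℝ := fun ω z =>
    per (ext (mix A ω) (fun p => rad (z p)) 0)
  have h2 : dflip A b (none : Option ρ) =
      ev fun ω => ev fun z => ((H ω z - H ω (flip1 (Sum.inl b) z)) / 2) ^ 2 := by
    rw [← ev_virt (fun ω z => ((H ω z - H ω (flip1 (Sum.inl b) z)) / 2) ^ 2)]
    refine ev_congr fun ω => ?_
    have hj : Function.Injective (Sum.map id some : ι ⊕ ρ → ι ⊕ Option ρ) :=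
      Function.injective_id.sumMap (Option.some_injective _)
    rw [flip1_comp (fun p => s(Sum.inr none, Sum.map id some p))
      (fun p q h => hj (Sym2.congr_right.1 h)) (Sum.inl b) ω, h1, h1]
    have : ∀ s : Sym2 (ι ⊕ ρ), flip1 s(Sum.inl b, Sum.inr none) ω (s.map (Sum.map id some)) =
        ω (s.map (Sum.map id some)) := fun s => by
      apply flip1_ne
      intro h
      have : (Sum.inr none : ι ⊕ Option ρ) ∈ s.map (Sum.map id some) := by rw [h]; simp
      obtain ⟨v, _, hv⟩ := Sym2.mem_map.1 this
      rcases v with v | v <;> simp at hv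
    simp only [this, H]
    rw [show s(Sum.inl b, Sum.inr none) = s((Sum.inr none : ι ⊕ Option ρ),
      Sum.map id some (Sum.inl b : ι ⊕ ρ)) from Sym2.eq_swap]
  rw [h2]
  have h3 : ∀ ω, ev (fun z => ((H ω z - H ω (flip1 (Sum.inl b) z)) / 2) ^ 2) =
      4 * ∑ q : ι ⊕ ρ, if Sum.inl b = q then 0 else cof (mix A ω) (Sum.inl b) q ^ 2 := by
    intro ω
    rw [ev_quad_flip (trc A ω) (fun _ => 0) (cof (mix A ω)) (cof_symm (mix_symm hA ω))]
    · simp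
    · intro y
      simp only [H]
      rw [per_ext_sign _ _ fun _ => rad_sq _]
      simp [trc]
  rw [ev_congr h3, ev_mul_left, ev_sum]
  congr 1
  refine sum_congr rfl fun q _ => ?_
  split_ifs
  · exact ev_zero
  · rfl

lemma dflip_sum_ext {A : Matrix ι ι ℝ} (hA : ∀ i j, A i j = A j i) (y : ι → ℝ)
    (hy : ∀ i, y i ^ 2 = 1) (d : ℝ) :
    ∑ w : ρ, dflip (ext A y d) none w ≤ 2 * Psi ρ (ext A y d) := by
  let H : (Sym2 (ι ⊕ ρ) → Bool) → (ρ → Bool) → ℝ := fun ω x =>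
    per (ext (mix A ω) (Sum.elim y fun w => rad (x w)) d)
  have h1 : ∀ ω : Sym2 (Option ι ⊕ ρ) → Bool, per (mix (ext A y d) ω) =
      per (ext (mix A fun s => ω (s.map (Sum.map some id)))
      (Sum.elim y fun w => rad (ω s(Sum.inl none, Sum.inr w))) d) := fun ω => by
    rw [← mix_real, per_submatrix]
  have h2 : ∀ w : ρ, dflip (ext A y d) none w =
      ev fun ω => ev fun x => ((H ω x - H ω (flip1 w x)) / 2) ^ 2 := fun w => by
    rw [← ev_real (fun ω x => ((H ω x - H ω (flip1 w x)) / 2) ^ 2)]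
    refine ev_congr fun ω => ?_
    rw [flip1_comp (fun w => s(Sum.inl none, Sum.inr w))
      (fun p q h => Sum.inr_injective (Sym2.congr_right.1 h)) w ω, h1, h1]
    have : ∀ s : Sym2 (ι ⊕ ρ), flip1 s(Sum.inl none, Sum.inr w) ω (s.map (Sum.map some id)) =
        ω (s.map (Sum.map some id)) := fun s => by
      apply flip1_ne
      intro h
      have : (Sum.inl none : Option ι ⊕ ρ) ∈ s.map (Sum.map some id) := by rw [h]; simp
      obtain ⟨v, _, hv⟩ := Sym2.mem_map.1 this
      rcases v with v | v <;> simp at hv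
    simp only [this, H]
  simp only [h2]
  rw [← ev_sum, Psi_real, ← ev_mul_left]
  refine ev_mono fun ω => ?_
  have hs := cof_symm (mix_symm hA ω)
  refine ev_quad_influence (d * per (mix A ω) + trc A ω +
      offq univ (fun b b' => cof (mix A ω) (Sum.inl b) (Sum.inl b')) y)
      (fun w => ∑ b, y b * (2 * cof (mix A ω) (Sum.inl b) (Sum.inr w)))
      (fun w w' => cof (mix A ω) (Sum.inr w) (Sum.inr w')) (fun _ _ => hs _ _) (H ω) ?_
  intro x
  simp only [H]
  rw [per_ext_sign, offq_sumType _ hs]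
  · unfold trc; ring
  · rintro (i | w)
    · exact hy i
    · exact rad_sq _

/-- The edges from a real vertex to the virtual ones have bounded total influence, the permanent
being quadratic in the row of that vertex. -/
lemma dflip_sum {A : Matrix ι ι ℝ} (hA : IsSgn A) (b : ι) :
    ∑ w : ρ, dflip A b w ≤ 2 * Psi ρ A := by
  let f := Equiv.optionSubtypeNe b
  have hf : A.submatrix f f = ext (fun i j => A i.1 j.1) (fun i : {x // x ≠ b} => A b i.1) (A b b) := by
    ext i j
    rcases i with _ | i <;> rcases j with _ | j <;> simp [f, hA.1 b] <;> rfl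
  have h1 := dflip_sum_ext (ρ := ρ) (A := fun i j : {x // x ≠ b} => A i.1 j.1)
    (fun _ _ => hA.1 _ _) (fun i => A b i.1) (fun i => hA.2 _ _) (A b b)
  rw [← hf, Psi_submatrix] at h1
  refine le_trans (le_of_eq ?_) h1
  refine sum_congr rfl fun w _ => ?_
  rw [dflip_congr f (Equiv.refl ρ)]
  simp [f]

/-- Exchangeability of the virtual vertices bounds the influence of every real vertex. -/
lemma influence_le {A : Matrix ι ι ℝ} (hA : IsSgn A) (b : ι) :
    (4 * ∑ q : ι ⊕ ρ, if Sum.inl b = q then 0 else cq A (Sum.inl b) q) *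
      (Fintype.card ρ + 1) ≤ 2 * Psi (Option ρ) A := by
  refine le_trans (le_of_eq ?_) (dflip_sum hA b)
  rw [← dflip_none hA.1]
  have : ∀ w : Option ρ, dflip A b w = dflip A b (none : Option ρ) := fun w => by
    have := dflip_congr (Equiv.refl ι) (Equiv.swap none w) A b none
    simp only [Equiv.swap_apply_left] at this
    exact this.symm
  simp only [this, sum_const, card_univ, Fintype.card_option, nsmul_eq_mul]
  push_cast; ring

lemma sq_sum_le_card {κ : Type} (s : Finset κ) (f : κ → ℝ) :
    (∑ i ∈ s, f i) ^ 2 ≤ #s * ∑ i ∈ s, f i ^ 2 := sq_sum_le_card_mul_sum_sq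

/-- Laplace expansion along a virtual row. -/
lemma Psi_le_virtual {A : Matrix ι ι ℝ} (hA : IsSgn A) :
    2 * Fintype.card ρ * Psi ρ A ≤
      (Fintype.card ι + Fintype.card ρ) * (partM ρ A + partW ρ A) := by
  have key : ∀ w : ρ, Psi ρ A ≤ (Fintype.card ι + Fintype.card ρ) *
      (∑ b : ι, cq A (Sum.inl b) (Sum.inr w) +
        ∑ w' : ρ, if w = w' then 0 else cq A (Sum.inr w) (Sum.inr w')) := by
    intro w
    have h1 : ∀ ω : Sym2 (ι ⊕ ρ) → Bool, per (mix A ω) ^ 2 ≤ (Fintype.card ι + Fintype.card ρ) *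
      (∑ b : ι, cof (mix A ω) (Sum.inl b) (Sum.inr w) ^ 2 +
        ∑ w' : ρ, if w = w' then 0 else cof (mix A ω) (Sum.inr w) (Sum.inr w') ^ 2) := by
      intro ω
      rw [laplace _ (Sum.inr w)]
      refine (sq_sum_le_card _ _).trans ?_
      rw [card_univ, Fintype.card_sum]; push_cast
      refine mul_le_mul_of_nonneg_left ?_ (by positivity)
      rw [Fintype.sum_sum_type]
      refine add_le_add (sum_le_sum fun b _ => ?_) (sum_le_sum fun w' _ => ?_)
      · rw [mul_pow, cof_symm (mix_symm hA.1 ω)]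
        simp [mix, rad_sq]
      · rw [mul_pow]
        by_cases h : w = w'
        · simp [mix, h]
        · simp [mix, h, rad_sq]
    refine (ev_mono h1).trans ?_
    rw [ev_mul_left, ev_add, ev_sum, ev_sum]
    refine mul_le_mul_of_nonneg_left (add_le_add le_rfl (sum_le_sum fun w' _ => ?_)) (by positivity)
    split_ifs
    · rw [ev_zero]
    · exact le_rfl
  have h2 := sum_le_sum fun w (_ : w ∈ (univ : Finset ρ)) => key w
  rw [sum_const, card_univ, nsmul_eq_mul, ← mul_sum, sum_add_distrib, sum_comm] at h2
  have h3 : (0 : ℝ) ≤ ∑ b : ι, ∑ w : ρ, cq A (Sum.inl b) (Sum.inr w) :=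
    sum_nonneg fun _ _ => sum_nonneg fun _ _ => cq_nonneg _ _ _
  unfold partM partW
  have h4 : (0 : ℝ) ≤ Fintype.card ι + Fintype.card ρ := by positivity
  nlinarith [mul_nonneg h4 h3]

lemma trc_part_le {A : Matrix ι ι ℝ} (hA : ∀ i j, A i j = A j i) (p : ι ⊕ ρ) :
    4 * ∑ q : ι ⊕ ρ, (if p = q then 0 else cq A p q) ≤ Psi (Option ρ) A := by
  rw [Psi_virt_eq hA]
  have h0 := partD_nonneg (ρ := ρ) A
  have h1 : 2 * ∑ q : ι ⊕ ρ, (if p = q then 0 else cq A p q) ≤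
      ∑ p : ι ⊕ ρ, ∑ q, if p = q then 0 else cq A p q := by
    rw [← add_sum_erase univ (fun p => ∑ q, if p = q then 0 else cq A p q) (mem_univ p), two_mul]
    refine add_le_add le_rfl ?_
    rw [← add_sum_erase _ _ (mem_univ p), if_pos rfl, zero_add]
    refine sum_le_sum fun q hq => ?_
    have hne := ne_of_mem_erase hq
    rw [if_neg hne.symm]
    refine le_trans ?_ (single_le_sum (f := fun q' => if q = q' then 0 else cq A q q')
      (fun i _ => ite_nn (cq_nonneg A q i)) (mem_univ p))
    simp only [if_neg hne]
    rw [cq_symm hA]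
  linarith

/-- Removing a real vertex costs at most a polynomial factor, up to one more virtual vertex. -/
lemma Psi_le_ext {A : Matrix ι ι ℝ} (hA : IsSgn A) (y : ι → ℝ) (hy : ∀ i, y i ^ 2 = 1) (d : ℝ)
    (hd : d ^ 2 = 1) : Psi ρ A ≤ 2 * Psi ρ (ext A y d) +
      (Fintype.card ι + Fintype.card ρ) / 2 * Psi (Option ρ) (ext A y d) := by
  have hA' := hA.ext hy hd
  set A' := ext A y d with hA'def
  have h1 : Psi ρ A = ev fun ω : Sym2 (Option ι ⊕ ρ) → Bool =>
      cof (mix A' ω) (Sum.inl none) (Sum.inl none) ^ 2 := by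
    have := ev_real (ι := ι) (ρ := ρ) (fun ω _ => per (mix A ω) ^ 2)
    unfold Psi
    rw [show (ev fun ω : Sym2 (ι ⊕ ρ) → Bool => per (mix A ω) ^ 2) =
      ev fun ω : Sym2 (ι ⊕ ρ) → Bool => ev fun _ : ρ → Bool => per (mix A ω) ^ 2 from
      ev_congr fun ω => (ev_const _).symm, ← this]
    refine ev_congr fun ω => ?_
    congr 1
    have h := cof_submatrix (eReal (ι := ι) (ρ := ρ)) (mix A' ω) none none
    rw [hA'def, mix_real, cof_ext_nn] at h
    rw [h]; rfl
  have h2 : ∀ ω : Sym2 (Option ι ⊕ ρ) → Bool, cof (mix A' ω) (Sum.inl none) (Sum.inl none) ^ 2 ≤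
      2 * per (mix A' ω) ^ 2 + 2 * ((Fintype.card ι + Fintype.card ρ) *
        ∑ q : Option ι ⊕ ρ, if Sum.inl none = q then 0 else cof (mix A' ω) (Sum.inl none) q ^ 2) := by
    intro ω
    have hl := laplace (mix A' ω) (Sum.inl none)
    rw [← add_sum_erase _ _ (mem_univ (Sum.inl none))] at hl
    set c := cof (mix A' ω) (Sum.inl none) (Sum.inl none)
    set S := ∑ q ∈ univ.erase (Sum.inl none : Option ι ⊕ ρ),
      mix A' ω (Sum.inl none) q * cof (mix A' ω) (Sum.inl none) q with hS
    have h3 : S ^ 2 ≤ (Fintype.card ι + Fintype.card ρ) *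
        ∑ q : Option ι ⊕ ρ, if Sum.inl none = q then 0 else
          cof (mix A' ω) (Sum.inl none) q ^ 2 := by
      refine (sq_sum_le_card _ _).trans ?_
      have hc : (#(univ.erase (Sum.inl none : Option ι ⊕ ρ)) : ℝ) =
          Fintype.card ι + Fintype.card ρ := by
        rw [card_erase_of_mem (mem_univ _), card_univ, Fintype.card_sum, Fintype.card_option]
        rw [show Fintype.card ι + 1 + Fintype.card ρ - 1 = Fintype.card ι + Fintype.card ρ by omega]
        push_cast; ring
      rw [hc]
      refine mul_le_mul_of_nonneg_left ?_ (by positivity)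
      rw [← add_sum_erase _ _ (mem_univ (Sum.inl none : Option ι ⊕ ρ)), if_pos rfl, zero_add]
      refine sum_le_sum fun q hq => ?_
      rw [if_neg (ne_of_mem_erase hq).symm, mul_pow]
      rcases q with q | q
      · simp [mix, hA'.2]
      · simp [mix, rad_sq]
    have h4 : mix A' ω (Sum.inl none) (Sum.inl none) = d := by simp [mix, hA'def]
    rw [h4] at hl
    have h5 : c ^ 2 = (per (mix A' ω) - S) ^ 2 := by
      rw [hl]; linear_combination (-c ^ 2) * hd
    rw [h5]
    nlinarith [sq_nonneg (per (mix A' ω) + S)]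
  have h3 := trc_part_le (ρ := ρ) hA'.1 (Sum.inl none)
  rw [h1]
  refine (ev_mono h2).trans ?_
  rw [ev_add, ev_mul_left, ev_mul_left, ev_mul_left, ev_sum]
  have h4 : ∑ q : Option ι ⊕ ρ, (ev fun ω : Sym2 (Option ι ⊕ ρ) → Bool =>
      if Sum.inl none = q then 0 else cof (mix A' ω) (Sum.inl none) q ^ 2) =
      ∑ q : Option ι ⊕ ρ, if Sum.inl none = q then 0 else cq A' (Sum.inl none) q := by
    refine sum_congr rfl fun q _ => ?_
    split_ifs
    · exact ev_zero
    · rfl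
  rw [h4]
  have h5 : (0 : ℝ) ≤ Fintype.card ι + Fintype.card ρ := by positivity
  have := mul_le_mul_of_nonneg_left h3 h5
  unfold Psi at this ⊢
  linarith

lemma rad_beq (a b : Bool) : rad (a == b) = rad a * rad b := by cases a <;> cases b <;> simp [rad]

/-- Averages of sign monomials are nonnegative. -/
lemma ev_monomial_nonneg {α κ : Type} [Fintype α] [DecidableEq α] (s : Finset κ) (f : κ → α) :
    0 ≤ ev fun ω : α → Bool => ∏ k ∈ s, rad (ω (f k)) := by
  by_cases h : ∃ a : α → Bool, ∏ k ∈ s, rad (a (f k)) = -1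
  · obtain ⟨a, ha⟩ := h
    let e : (α → Bool) ≃ (α → Bool) :=
      { toFun := fun ω s => ω s == a s
        invFun := fun ω s => ω s == a s
        left_inv := fun ω => by ext s; simp only; cases ω s <;> cases a s <;> rfl
        right_inv := fun ω => by ext s; simp only; cases ω s <;> cases a s <;> rfl }
    refine le_of_eq (ev_eq_zero_of_neg e _ fun ω => ?_).symm
    simp only [e, Equiv.coe_fn_mk, rad_beq, prod_mul_distrib, ha]
    ring
  · push Not at h
    refine ev_nonneg fun ω => ?_
    have h2 : (∏ k ∈ s, rad (ω (f k))) ^ 2 = 1 := by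
      rw [← prod_pow]; exact prod_eq_one fun k _ => rad_sq _
    rcases (show ∏ k ∈ s, rad (ω (f k)) = 1 ∨ ∏ k ∈ s, rad (ω (f k)) = -1 by simpa using h2) with h3 | h3
    · rw [h3]; norm_num
    · exact absurd h3 (h ω)

lemma derange_ge (n : ℕ) : (n + 1).factorial ≤ numDerangements (n + 2) := by
  induction n with
  | zero => simp [numDerangements]
  | succ n ih =>
    rw [numDerangements_add_two, Nat.factorial_succ]
    exact Nat.mul_le_mul_left _ (ih.trans (Nat.le_add_left _ _))

/-- With virtual vertices only, expanding the square leaves a nonnegative sum in which every pair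
`(σ, σ)` with `σ` a derangement contributes `1`. -/
lemma Psi_start (n : ℕ) (A : Matrix (Fin 0) (Fin 0) ℝ) :
    ((n + 1).factorial : ℝ) ≤ Psi (Fin (n + 2)) A := by
  let κ := Fin 0 ⊕ Fin (n + 2)
  have h1 : ∀ ω : Sym2 κ → Bool, per (mix A ω) ^ 2 =
      ∑ σ : Equiv.Perm κ, ∑ τ : Equiv.Perm κ, (∏ i, mix A ω i (σ i)) * ∏ i, mix A ω i (τ i) :=
    fun ω => by rw [sq, per, sum_mul_sum]
  have hm : ∀ (ω : Sym2 κ → Bool) (i j : κ), mix A ω i j = if i = j then 0 else rad (ω s(i, j)) := by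
    intro ω i j
    rcases i with i | i
    · exact i.elim0
    rcases j with j | j
    · exact j.elim0
    by_cases h : i = j
    · subst h; rw [if_pos rfl]; simp [mix]
    · rw [if_neg fun h' => h (Sum.inr_injective h')]; simp [mix, h]; rfl
  have h2 : ∀ σ τ : Equiv.Perm κ, 0 ≤ ev fun ω : Sym2 κ → Bool =>
      (∏ i, mix A ω i (σ i)) * ∏ i, mix A ω i (τ i) := by
    intro σ τ
    by_cases h : ∃ i, i = σ i ∨ i = τ i
    · obtain ⟨i, hi⟩ := h
      refine ev_nonneg fun ω => le_of_eq ?_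
      rcases hi with hi | hi
      · rw [prod_eq_zero (mem_univ i) (by rw [hm, if_pos hi]), zero_mul]
      · rw [prod_eq_zero (i := i) (s := univ) (f := fun i => mix A ω i (τ i)) (mem_univ i)
          (by rw [hm, if_pos hi]), mul_zero]
    · push Not at h
      have := ev_monomial_nonneg (univ : Finset (κ ⊕ κ))
        (Sum.elim (fun i => s(i, σ i)) fun i => s(i, τ i))
      refine this.trans (le_of_eq (ev_congr fun ω => ?_))
      rw [Fintype.prod_sum_type]
      congr 1
      · exact prod_congr rfl fun i _ => by rw [hm, if_neg (h i).1]; rfl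
      · exact prod_congr rfl fun i _ => by rw [hm, if_neg (h i).2]; rfl
  have h3 : ∀ σ : Equiv.Perm κ, ind (σ ∈ derangements κ) ≤ ∑ τ : Equiv.Perm κ,
      ev fun ω : Sym2 κ → Bool => (∏ i, mix A ω i (σ i)) * ∏ i, mix A ω i (τ i) := by
    intro σ
    by_cases h : σ ∈ derangements κ
    · refine le_trans ?_ (single_le_sum (fun τ _ => h2 σ τ) (mem_univ σ))
      rw [ind_true h, ← ev_const (Ω := Sym2 κ → Bool) 1]
      refine le_of_eq (ev_congr fun ω => ?_)
      rw [← prod_mul_distrib]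
      refine (prod_eq_one fun i _ => ?_).symm
      rw [hm, if_neg fun h' => h i h'.symm, rad_mul_self]
    · rw [ind_false h]
      exact sum_nonneg fun τ _ => h2 σ τ
  have h4 : Psi (Fin (n + 2)) A = ∑ σ : Equiv.Perm κ, ∑ τ : Equiv.Perm κ,
      ev fun ω : Sym2 κ → Bool => (∏ i, mix A ω i (σ i)) * ∏ i, mix A ω i (τ i) := by
    unfold Psi
    rw [ev_congr h1, ev_sum]
    exact sum_congr rfl fun σ _ => ev_sum _ _
  rw [h4]
  refine le_trans ?_ (sum_le_sum fun σ _ => h3 σ)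
  classical
  have h5 : ∑ σ : Equiv.Perm κ, ind (σ ∈ derangements κ) = (numDerangements (n + 2) : ℝ) := by
    have := card_derangements_eq_numDerangements κ
    rw [show Fintype.card κ = n + 2 by simp [κ]] at this
    rw [← this, Fintype.card_subtype, ← sum_boole]
    refine sum_congr rfl fun σ _ => ?_
    unfold ind
    congr
  rw [h5]
  exact_mod_cast derange_ge n

end Facts

/-! ### One step of the exposure: likely and unlikely losses -/

section Step
variable {ι ρ : Type} [Fintype ι] [DecidableEq ι] [Fintype ρ] [DecidableEq ρ]

lemma nsq_eq_ev {Ω : Type} [Fintype Ω] [Nonempty Ω] (f : Ω → ℝ) :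
    nsq f = Fintype.card Ω * ev fun ω => f ω ^ 2 := by
  unfold nsq ev
  rw [mul_div_cancel₀]
  exact_mod_cast Fintype.card_ne_zero

lemma nsq_prod_eq_ev {Ω Y : Type} [Fintype Ω] [Nonempty Ω] [Fintype Y] (f : Ω × Y → ℝ) :
    nsq f = Fintype.card Ω * ev fun ω => ∑ y, f (ω, y) ^ 2 := by
  unfold nsq ev
  rw [mul_div_cancel₀, Fintype.sum_prod_type]
  exact_mod_cast Fintype.card_ne_zero

lemma ev_bool (f : Bool → ℝ) : ev f = (f true + f false) / 2 := by
  simp [ev]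

/-- If one of `k` measure-preserving moves always leads to `p`, then `p` has probability at least
`1 / k`. -/
lemma pr_ge_of_equivs {Ω : Type} [Fintype Ω] [Nonempty Ω] {k : ℕ} (e : Fin k → Ω ≃ Ω)
    {p : Ω → Prop} (h : ∀ ω, ∃ i, p (e i ω)) : 1 ≤ k * pr p := by
  have h1 : ev (fun ω => ∑ i, ind (p (e i ω))) = k * pr p := by
    rw [ev_sum]
    have : ∀ i, ev (fun ω => ind (p (e i ω))) = pr p := fun i => ev_equiv (e i) fun ω => ind (p ω)
    simp [this]
  rw [← h1, ← ev_const (Ω := Ω) 1]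
  refine ev_mono fun ω => ?_
  obtain ⟨i, hi⟩ := h ω
  exact (ind_true hi).symm.le.trans
    (single_le_sum (f := fun i => ind (p (e i ω))) (fun _ _ => ind_nonneg _) (mem_univ i))

/-- The part of the permanent of the bordered matrix that is free of border signs at virtual
vertices. -/
noncomputable def qpart (A : Matrix ι ι ℝ) (d : ℝ) (y : ι → ℝ) (ω : Sym2 (ι ⊕ ρ) → Bool) : ℝ :=
  d * per (mix A ω) + trc A ω +
    offq univ (fun b c => cof (mix A ω) (Sum.inl b) (Sum.inl c)) y

/-- The coefficients of the border signs at virtual vertices, linear forms in the real border `y`. -/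
noncomputable def lpart (A : Matrix ι ι ℝ) (y : ι → ℝ) (x : (Sym2 (ι ⊕ ρ) → Bool) × ρ) : ℝ :=
  ∑ b, y b * (2 * cof (mix A x.1) (Sum.inl b) (Sum.inr x.2))

lemma Psi_real_parts {A : Matrix ι ι ℝ} (hA : ∀ i j, A i j = A j i) (y : ι → ℝ)
    (hy : ∀ i, y i ^ 2 = 1) (d : ℝ) :
    (Fintype.card (Sym2 (ι ⊕ ρ) → Bool) : ℝ) * Psi ρ (ext A y d) =
      nsq (qpart (ρ := ρ) A d y) + nsq (lpart (ρ := ρ) A y) +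
        Fintype.card (Sym2 (ι ⊕ ρ) → Bool) * partW ρ A := by
  rw [Psi_real_eq hA y hy d, nsq_eq_ev, nsq_prod_eq_ev]
  simp only [qpart, lpart]
  ring

lemma sum_nsq_lcoef (A : Matrix ι ι ℝ) (b : ι) :
    nsq (fun x : (Sym2 (ι ⊕ ρ) → Bool) × ρ => 2 * cof (mix A x.1) (Sum.inl b) (Sum.inr x.2)) =
      Fintype.card (Sym2 (ι ⊕ ρ) → Bool) * (4 * ∑ w : ρ, cq A (Sum.inl b) (Sum.inr w)) := by
  rw [nsq_prod_eq_ev, ev_sum]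
  congr 1
  rw [mul_sum]
  refine sum_congr rfl fun w _ => ?_
  rw [cq, ← ev_mul_left]
  exact ev_congr fun ω => by ring

lemma nsq_qcoef (A : Matrix ι ι ℝ) (b b' : ι) :
    nsq (fun ω : Sym2 (ι ⊕ ρ) → Bool => cof (mix A ω) (Sum.inl b) (Sum.inl b')) =
      Fintype.card (Sym2 (ι ⊕ ρ) → Bool) * cq (ρ := ρ) A (Sum.inl b) (Sum.inl b') := nsq_eq_ev _

lemma sum_nsq_qcoef (A : Matrix ι ι ℝ) :
    2 * (∑ b, ∑ b', if b = b' then 0 else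
      nsq (fun ω : Sym2 (ι ⊕ ρ) → Bool => cof (mix A ω) (Sum.inl b) (Sum.inl b'))) =
      Fintype.card (Sym2 (ι ⊕ ρ) → Bool) * partB ρ A := by
  unfold partB
  simp only [nsq_qcoef, mul_sum]
  refine sum_congr rfl fun b _ => sum_congr rfl fun b' _ => ?_
  split_ifs <;> ring

lemma ev_nsq_qpart {A : Matrix ι ι ℝ} (hA : ∀ i j, A i j = A j i) :
    (ev fun η : ι → Bool => nsq fun ω : Sym2 (ι ⊕ ρ) → Bool =>
      offq univ (fun b b' => cof (mix A ω) (Sum.inl b) (Sum.inl b')) fun b => rad (η b)) =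
      Fintype.card (Sym2 (ι ⊕ ρ) → Bool) * partB ρ A := by
  rw [← sum_nsq_qcoef, ← ev_nsq_offq univ
    (fun b b' (ω : Sym2 (ι ⊕ ρ) → Bool) => cof (mix A ω) (Sum.inl b) (Sum.inl b'))
    (fun i j => funext fun ω => cof_symm (mix_symm hA ω) _ _)]

lemma influence_split {A : Matrix ι ι ℝ} (hA : IsSgn A) (b : ι) :
    (4 * ∑ w : ρ, cq A (Sum.inl b) (Sum.inr w)) * (Fintype.card ρ + 1) ≤ 2 * Psi (Option ρ) A ∧
    (4 * ∑ b' : ι, if b = b' then 0 else cq (ρ := ρ) A (Sum.inl b) (Sum.inl b')) *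
      (Fintype.card ρ + 1) ≤ 2 * Psi (Option ρ) A := by
  have h := influence_le (ρ := ρ) hA b
  rw [Fintype.sum_sum_type] at h
  simp only [Sum.inl.injEq, reduceCtorEq, if_false] at h
  have h1 : 0 ≤ ∑ w : ρ, cq A (Sum.inl b) (Sum.inr w) := sum_nonneg fun _ _ => cq_nonneg _ _ _
  have h2 : 0 ≤ ∑ b' : ι, if b = b' then 0 else cq (ρ := ρ) A (Sum.inl b) (Sum.inl b') :=
    sum_nonneg fun _ _ => ite_nn (cq_nonneg _ _ _)
  have h3 : (0 : ℝ) ≤ Fintype.card ρ + 1 := by positivity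
  constructor <;> nlinarith [mul_nonneg h1 h3, mul_nonneg h2 h3]

set_option maxHeartbeats 2000000 in
/-- With many virtual vertices, trading one of them for a real vertex loses at most a constant
factor in `Psi`, except with small probability, unless the corner term could cancel the diagonal
one. -/
theorem step_large {δ η0 : ℝ} (hδ : 0 < δ) (hη0 : 0 < η0) : ∃ (C : ℕ) (κ : ℝ), 0 < κ ∧
    ∀ (ι ρ : Type) [Fintype ι] [DecidableEq ι] [Fintype ρ] [DecidableEq ρ] (A : Matrix ι ι ℝ),
      IsSgn A → C ≤ Fintype.card ρ →
      (100 * Psi ρ A ≤ Psi (Option ρ) A ∨ η0 * Psi (Option ρ) A ≤ partM ρ A + partW ρ A) →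
      ∀ d : ℝ, d ^ 2 = 1 →
      pr (fun η : ι → Bool => Psi ρ (ext A (fun i => rad (η i)) d) < κ * Psi (Option ρ) A) ≤ δ := by
  obtain ⟨θ1, κ1, hθ1, hκ1, hL⟩ := LSB hδ
  obtain ⟨θ2, κ2, hθ2, hκ2, hQ⟩ := QSB hδ
  set η := min (δ / 16) (min (1 / 100) (η0 / 2)) with hη
  have hηp : 0 < η := by positivity
  have hη1 : η ≤ δ / 16 := min_le_left _ _
  have hη2 : η ≤ 1 / 100 := (min_le_right _ _).trans (min_le_left _ _)
  have hη3 : η ≤ η0 / 2 := (min_le_right _ _).trans (min_le_right _ _)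
  obtain ⟨C, hC⟩ := exists_nat_ge (max (2 / (η * θ1)) (1 / (η * θ2)))
  have hC1 : 2 ≤ η * θ1 * C := by
    have := (le_max_left _ _).trans hC
    rw [div_le_iff₀ (by positivity)] at this; linarith
  have hC2 : 1 ≤ η * θ2 * C := by
    have := (le_max_right _ _).trans hC
    rw [div_le_iff₀ (by positivity)] at this; linarith
  clear_value η
  refine ⟨C, min (1 / 8) (min (κ1 * η) (min (κ2 * η / 2) η)), by positivity, ?_⟩
  intro ι ρ _ _ _ _ A hA hr hor d hd
  set κ := min (1 / 8) (min (κ1 * η) (min (κ2 * η / 2) η))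
  have hk1 : κ ≤ 1 / 8 := min_le_left _ _
  have hk2 : κ ≤ κ1 * η := (min_le_right _ _).trans (min_le_left _ _)
  have hk3 : κ ≤ κ2 * η / 2 := (min_le_right _ _).trans ((min_le_right _ _).trans (min_le_left _ _))
  have hk4 : κ ≤ η := (min_le_right _ _).trans ((min_le_right _ _).trans (min_le_right _ _))
  clear_value κ
  set E := Psi (Option ρ) A with hE
  have hE0 : 0 ≤ E := Psi_nonneg _
  have hsum := Psi_virt_parts (ρ := ρ) hA.1
  rw [← hE] at hsum
  set M : ℝ := (Fintype.card (Sym2 (ι ⊕ ρ) → Bool) : ℝ) with hM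
  have hM0 : 0 < M := by rw [hM]; exact_mod_cast Fintype.card_pos
  clear_value M E
  have hD := partD_nonneg (ρ := ρ) A
  have hW := partW_nonneg (ρ := ρ) A
  have hMm := partM_nonneg (ρ := ρ) A
  have hB := partB_nonneg (ρ := ρ) A
  have hrC : (C : ℝ) ≤ Fintype.card ρ := by exact_mod_cast hr
  have hparts : ∀ η : ι → Bool, M * Psi ρ (ext A (fun i => rad (η i)) d) =
      nsq (qpart (ρ := ρ) A d fun i => rad (η i)) + nsq (lpart (ρ := ρ) A fun i => rad (η i)) +
        M * partW ρ A := by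
    intro η
    rw [hM]
    exact Psi_real_parts hA.1 _ (fun _ => rad_sq _) d
  by_cases c1 : η * E ≤ partW ρ A
  · refine le_trans (le_of_eq (pr_false fun y hy => ?_)) hδ.le
    have h1 := hparts y
    have h2 := nsq_nonneg (qpart (ρ := ρ) A d fun i => rad (y i))
    have h3 := nsq_nonneg (lpart (ρ := ρ) A fun i => rad (y i))
    have h4 : partW ρ A ≤ Psi ρ (ext A (fun i => rad (y i)) d) :=
      le_of_mul_le_mul_left (by linarith) hM0
    nlinarith
  by_cases c2 : η * E ≤ partM ρ A
  · have hco : ∑ b : ι, nsq (fun x : (Sym2 (ι ⊕ ρ) → Bool) × ρ =>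
        2 * cof (mix A x.1) (Sum.inl b) (Sum.inr x.2)) = M * partM ρ A := by
      rw [hM]
      simp only [sum_nsq_lcoef, partM, mul_sum]
    have h := hL ι ((Sym2 (ι ⊕ ρ) → Bool) × ρ) (fun _ => 0)
      (fun b x => 2 * cof (mix A x.1) (Sum.inl b) (Sum.inr x.2)) univ ?_
    · refine (pr_mono fun y hy => ?_).trans h
      rw [hco]
      have h1 := hparts y
      have h2 := nsq_nonneg (qpart (ρ := ρ) A d fun i => rad (y i))
      have h3 : lin univ (fun _ => 0)
        (fun b (x : (Sym2 (ι ⊕ ρ) → Bool) × ρ) => 2 * cof (mix A x.1) (Sum.inl b) (Sum.inr x.2)) y =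
          lpart (ρ := ρ) A fun i => rad (y i) := by
        ext x; simp [lin, lpart]
      rw [h3]
      have h4 : M * Psi ρ (ext A (fun i => rad (y i)) d) < M * (κ * E) :=
        mul_lt_mul_of_pos_left hy hM0
      have h5 : κ * E ≤ κ1 * partM ρ A := by
        calc κ * E ≤ κ1 * η * E := mul_le_mul_of_nonneg_right hk2 hE0
          _ = κ1 * (η * E) := by ring
          _ ≤ _ := mul_le_mul_of_nonneg_left c2 hκ1.le
      have h6 := mul_le_mul_of_nonneg_left h5 hM0.le
      have h7 := mul_nonneg hM0.le hW
      rw [show κ1 * (M * partM ρ A) = M * (κ1 * partM ρ A) by ring]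
      linarith
    · intro b _
      rw [hco, sum_nsq_lcoef, ← hM]
      have h1 := (influence_split (ρ := ρ) hA b).1
      rw [← hE] at h1
      have h0 : 0 ≤ ∑ w : ρ, cq A (Sum.inl b) (Sum.inr w) := sum_nonneg fun _ _ => cq_nonneg _ _ _
      generalize (∑ w : ρ, cq A (Sum.inl b) (Sum.inr w)) = s at h0 h1 ⊢
      have h2 : 4 * s ≤ θ1 * partM ρ A := by
        have h3 : (4 * s) * C ≤ 2 * E := by nlinarith
        have h4 : 2 * (4 * s) ≤ η * θ1 * (2 * E) := by
          calc _ ≤ (η * θ1 * C) * (4 * s) :=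
                mul_le_mul_of_nonneg_right hC1 (by positivity)
            _ = η * θ1 * ((4 * s) * C) := by ring
            _ ≤ _ := mul_le_mul_of_nonneg_left h3 (by positivity)
        nlinarith
      nlinarith
  by_cases c3 : η * E ≤ partB ρ A
  · have hco := sum_nsq_qcoef (ρ := ρ) A
    rw [← hM] at hco
    have h := hQ ι (Sym2 (ι ⊕ ρ) → Bool)
      (fun b b' ω => cof (mix A ω) (Sum.inl b) (Sum.inl b'))
      (fun ω => d * per (mix A ω) + trc A ω)
      (fun i j => funext fun ω => cof_symm (mix_symm hA.1 ω) _ _) ?_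
    · refine (pr_mono fun y hy => ?_).trans h
      have h1 := hparts y
      have h2 := nsq_nonneg (lpart (ρ := ρ) A fun i => rad (y i))
      have h3 : (fun ω : Sym2 (ι ⊕ ρ) → Bool => d * per (mix A ω) + trc A ω +
          offq univ (fun b b' => cof (mix A ω) (Sum.inl b) (Sum.inl b')) fun i => rad (y i)) =
          qpart (ρ := ρ) A d fun i => rad (y i) := rfl
      rw [h3]
      have h4 : M * Psi ρ (ext A (fun i => rad (y i)) d) < M * (κ * E) :=
        mul_lt_mul_of_pos_left hy hM0
      have h5 : κ * E ≤ κ2 / 2 * partB ρ A := by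
        calc κ * E ≤ κ2 * η / 2 * E := mul_le_mul_of_nonneg_right hk3 hE0
          _ = κ2 / 2 * (η * E) := by ring
          _ ≤ _ := mul_le_mul_of_nonneg_left c3 (by positivity)
      have h6 := mul_le_mul_of_nonneg_left h5 hM0.le
      have h7 := mul_nonneg hM0.le hW
      have h8 : κ2 * (∑ b, ∑ b', if b = b' then 0 else
        nsq (fun ω : Sym2 (ι ⊕ ρ) → Bool => cof (mix A ω) (Sum.inl b) (Sum.inl b'))) =
        M * (κ2 / 2 * partB ρ A) := by
        linear_combination κ2 / 2 * hco
      rw [h8]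
      linarith
    · intro b
      have h1 := (influence_split (ρ := ρ) hA b).2
      rw [← hE] at h1
      have hrow : (∑ b', if b = b' then 0 else
          nsq (fun ω : Sym2 (ι ⊕ ρ) → Bool => cof (mix A ω) (Sum.inl b) (Sum.inl b'))) =
          M * ∑ b' : ι, if b = b' then 0 else cq (ρ := ρ) A (Sum.inl b) (Sum.inl b') := by
        simp only [nsq_qcoef, mul_sum]
        exact sum_congr rfl fun b' _ => by split_ifs <;> simp [hM]
      rw [hrow]
      set s := ∑ b' : ι, if b = b' then 0 else cq (ρ := ρ) A (Sum.inl b) (Sum.inl b')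
      have h0 : 0 ≤ s := sum_nonneg fun _ _ => ite_nn (cq_nonneg _ _ _)
      clear_value s
      have h2 : 2 * s ≤ θ2 * partB ρ A := by
        have h3 : 2 * s * C ≤ E := by nlinarith
        have h4 : 1 * (2 * s) ≤ η * θ2 * E := by
          calc _ ≤ (η * θ2 * C) * (2 * s) :=
                mul_le_mul_of_nonneg_right hC2 (by positivity)
            _ = η * θ2 * (2 * s * C) := by ring
            _ ≤ _ := mul_le_mul_of_nonneg_left h3 (by positivity)
        nlinarith
      nlinarith
  push Not at c1 c2 c3
  have hEpos : 0 < E := by nlinarith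
  have hp : 100 * Psi ρ A ≤ E := by
    rcases hor with h | h
    · exact h
    · exfalso; nlinarith
  have hDE : 97 / 100 * E ≤ partD ρ A := by nlinarith
  have hn1 : nsq (fun ω : Sym2 (ι ⊕ ρ) → Bool => trc A ω) = M * partD ρ A := by
    rw [hM]; exact nsq_eq_ev _
  have hn2 : nsq (fun ω : Sym2 (ι ⊕ ρ) → Bool => d * per (mix A ω)) = M * Psi ρ A := by
    rw [nsq_smul, hd, one_mul, hM]; exact nsq_eq_ev _
  have hn3 := nsq_add_le (fun ω : Sym2 (ι ⊕ ρ) → Bool => d * per (mix A ω) + trc A ω)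
    (fun ω => -(d * per (mix A ω))) (fun ω => trc A ω) (fun ω => by ring)
  have hn4 : nsq (fun ω : Sym2 (ι ⊕ ρ) → Bool => -(d * per (mix A ω))) = M * Psi ρ A := by
    rw [← hn2]; unfold nsq; simp
  rw [hn1, hn4] at hn3
  set Qf : (ι → Bool) → (Sym2 (ι ⊕ ρ) → Bool) → ℝ := fun y ω =>
    offq univ (fun b b' => cof (mix A ω) (Sum.inl b) (Sum.inl b')) fun b => rad (y b)
  have hmk : pr (fun y => M * E / 16 ≤ nsq (Qf y)) ≤ δ := by
    refine pr_le_of_markov (fun y => nsq_nonneg _) (by positivity) ?_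
    rw [show (ev fun y => nsq (Qf y)) = M * partB ρ A by rw [hM]; exact ev_nsq_qpart hA.1]
    have : partB ρ A ≤ δ * E / 16 := by nlinarith
    calc M * partB ρ A ≤ M * (δ * E / 16) := mul_le_mul_of_nonneg_left this hM0.le
      _ = _ := by ring
  refine (pr_mono fun y hy => ?_).trans hmk
  by_contra hlt
  push Not at hlt
  have h1 := hparts y
  have h2 := nsq_nonneg (lpart (ρ := ρ) A fun i => rad (y i))
  have h4 : M * Psi ρ (ext A (fun i => rad (y i)) d) < M * (κ * E) :=
    mul_lt_mul_of_pos_left hy hM0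
  have h5 := nsq_add_le (qpart (ρ := ρ) A d fun i => rad (y i)) (fun ω => -Qf y ω)
    (fun ω : Sym2 (ι ⊕ ρ) → Bool => d * per (mix A ω) + trc A ω)
    (fun ω => by simp only [qpart, Qf]; ring)
  have h6 : nsq (fun ω => -Qf y ω) = nsq (Qf y) := by unfold nsq; simp
  rw [h6] at h5
  have h7 : M * (κ * E) ≤ M * (1 / 8 * E) :=
    mul_le_mul_of_nonneg_left (mul_le_mul_of_nonneg_right hk1 hE0) hM0.le
  nlinarith [mul_le_mul_of_nonneg_left hDE hM0.le, mul_le_mul_of_nonneg_left hp hM0.le,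
    mul_nonneg hM0.le hW, mul_pos hM0 hEpos]

lemma exists_ge_avg {α : Type} [Fintype α] [Nonempty α] (f : α → ℝ) :
    ∃ a, ∑ a, f a ≤ Fintype.card α * f a := by
  obtain ⟨a, ha⟩ := exists_ge_ev f
  refine ⟨a, ?_⟩
  unfold ev at ha
  rw [div_le_iff₀ (by exact_mod_cast Fintype.card_pos)] at ha
  linarith

lemma offq_flip4 (S : ι → ι → ℝ) (hS : ∀ i j, S i j = S j i) {b b' : ι} (hb : b ≠ b')
    (y : ι → Bool) :
    (offq univ S fun i => rad (y i)) - (offq univ S fun i => rad (flip1 b y i)) -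
      (offq univ S fun i => rad (flip1 b' y i)) +
      (offq univ S fun i => rad (flip1 b' (flip1 b y) i)) =
      8 * (rad (y b) * rad (y b')) * S b b' := by
  have key : ∀ z : ι → Bool, (offq univ S fun i => rad (z i)) -
      (offq univ S fun i => rad (flip1 b z i)) =
      2 * (rad (z b) * ∑ j ∈ univ.erase b, rad (z j) * (2 * S b j)) := by
    intro z
    have b1 : ∀ z : ι → ℝ, offq univ S z = offq ({b}ᶜ) S z +
        z b * ∑ j ∈ univ.erase b, z j * (2 * S b j) := by
      intro z
      rw [offq_split {b} S hS, sum_singleton]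
      have : offq {b} S z = 0 := by simp [offq]
      rw [this, add_zero]
      congr 2
      rw [show ({b}ᶜ : Finset ι) = univ.erase b by ext; simp]
      exact sum_congr rfl fun j _ => by rw [hS j b]
    rw [b1, b1, offq_congr (s := {b}ᶜ) (z' := fun i => rad (z i)) (z := fun k => rad (flip1 b z k))
      (fun k hk => by rw [flip1_ne (by simpa using hk)]), rad_flip1_self]
    have : ∑ j ∈ univ.erase b, rad (flip1 b z j) * (2 * S b j) =
      ∑ j ∈ univ.erase b, rad (z j) * (2 * S b j) :=
      sum_congr rfl fun j hj => by rw [flip1_ne (ne_of_mem_erase hj)]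
    rw [this]; ring
  have hcomm : flip1 b' (flip1 b y) = flip1 b (flip1 b' y) := by
    ext j
    by_cases h1 : j = b
    · subst h1; rw [flip1_ne hb]; simp [flip1, hb]
    · rw [flip1_ne h1]
      by_cases h2 : j = b'
      · subst h2; simp [flip1, h1]
      · rw [flip1_ne h2, flip1_ne h2, flip1_ne h1]
  have h1 := key y
  have h2 := key (flip1 b' y)
  rw [← hcomm] at h2
  have hmem : b' ∈ univ.erase b := by simp [hb.symm]
  have h3 : ∑ j ∈ univ.erase b, rad (y j) * (2 * S b j) -
      ∑ j ∈ univ.erase b, rad (flip1 b' y j) * (2 * S b j) = 2 * (rad (y b') * (2 * S b b')) := by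
    rw [← sum_sub_distrib, sum_eq_single_of_mem b' hmem]
    · rw [rad_flip1_self]; ring
    · intro j _ hj; rw [flip1_ne hj]; ring
  rw [flip1_ne hb] at h2
  linear_combination h1 - h2 + 2 * rad (y b) * h3

set_option maxHeartbeats 1000000 in
/-- Trading a virtual vertex for a real one loses at most a polynomial factor with probability
at least `1/4`. -/
theorem step_coin {A : Matrix ι ι ℝ} (hA : IsSgn A) :
    1 / 4 ≤ evB A fun B => ind (Psi (Option ρ) A / (2048 * (Fintype.card ι + 1) ^ 2) ≤ Psi ρ B) := by
  set E := Psi (Option ρ) A with hE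
  have hE0 : 0 ≤ E := Psi_nonneg _
  set N : ℝ := (Fintype.card ι : ℝ) with hN
  have hN0 : 0 ≤ N := by positivity
  have hsum := Psi_virt_parts (ρ := ρ) hA.1
  rw [← hE] at hsum
  set M : ℝ := (Fintype.card (Sym2 (ι ⊕ ρ) → Bool) : ℝ) with hM
  have hM0 : 0 < M := by rw [hM]; exact_mod_cast Fintype.card_pos
  have hD := partD_nonneg (ρ := ρ) A
  have hW := partW_nonneg (ρ := ρ) A
  have hMm := partM_nonneg (ρ := ρ) A
  have hB := partB_nonneg (ρ := ρ) A
  set T := E / (2048 * (N + 1) ^ 2) with hT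
  have hTmul : T * (2048 * (N + 1) ^ 2) = E := div_mul_cancel₀ _ (by positivity)
  have hT0 : 0 ≤ T := by positivity
  have hTE : T ≤ E / 2048 := by
    rw [hT, div_le_div_iff₀ (by positivity) (by norm_num)]
    nlinarith [mul_nonneg hE0 hN0, mul_nonneg hE0 (sq_nonneg N)]
  have hparts : ∀ (d : ℝ) (η : ι → Bool), M * Psi ρ (ext A (fun i => rad (η i)) d) =
      nsq (qpart (ρ := ρ) A d fun i => rad (η i)) + nsq (lpart (ρ := ρ) A fun i => rad (η i)) +
        M * partW ρ A := fun d η => Psi_real_parts hA.1 _ (fun _ => rad_sq _) d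
  have hred : evB A (fun B => ind (T ≤ Psi ρ B)) =
      (pr (fun η : ι → Bool => T ≤ Psi ρ (ext A (fun i => rad (η i)) (rad true))) +
      pr (fun η : ι → Bool => T ≤ Psi ρ (ext A (fun i => rad (η i)) (rad false)))) / 2 := by
    unfold evB
    rw [ev_comm, ev_bool]; rfl
  rw [hred]
  have hsuff : (∀ d : ℝ, 1 / 4 ≤
      pr (fun η : ι → Bool => T ≤ Psi ρ (ext A (fun i => rad (η i)) d))) → 1 / 4 ≤
      (pr (fun η : ι → Bool => T ≤ Psi ρ (ext A (fun i => rad (η i)) (rad true))) +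
      pr (fun η : ι → Bool => T ≤ Psi ρ (ext A (fun i => rad (η i)) (rad false)))) / 2 := by
    intro h
    have h1 := h (rad true)
    have h2 := h (rad false)
    linarith
  by_cases c1 : E / 4 ≤ partW ρ A
  · apply hsuff
    intro d
    rw [pr_true]
    · norm_num
    · intro y
      have h1 := hparts d y
      have h2 := nsq_nonneg (qpart (ρ := ρ) A d fun i => rad (y i))
      have h3 := nsq_nonneg (lpart (ρ := ρ) A fun i => rad (y i))
      have h4 : partW ρ A ≤ Psi ρ (ext A (fun i => rad (y i)) d) :=
        le_of_mul_le_mul_left (by linarith) hM0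
      linarith
  by_cases c2 : E / 4 ≤ partM ρ A
  · apply hsuff
    intro d
    have hne : Nonempty ι := by
      by_contra hne
      rw [not_nonempty_iff] at hne
      have : partM ρ A = 0 := by simp [partM]
      exact c1 (by nlinarith)
    obtain ⟨b, hb⟩ := exists_ge_avg fun b : ι => ∑ w : ρ, cq A (Sum.inl b) (Sum.inr w)
    have hb2 : partM ρ A ≤ N * (4 * ∑ w : ρ, cq A (Sum.inl b) (Sum.inr w)) := by
      unfold partM; linarith
    have hcb := sum_nsq_lcoef (ρ := ρ) A b
    set s := ∑ w : ρ, cq A (Sum.inl b) (Sum.inr w)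
    have hs0 : 0 ≤ s := sum_nonneg fun _ _ => cq_nonneg _ _ _
    have hTs : T ≤ 4 * s := by
      have h1 : T * (2048 * (N + 1) ^ 2) ≤ 4 * (N * (4 * s)) := by rw [hTmul]; linarith
      have h2 : N ≤ (N + 1) ^ 2 := by nlinarith
      have h3 : 4 * (N * (4 * s)) ≤ (4 * s) * (2048 * (N + 1) ^ 2) := by nlinarith
      exact le_of_mul_le_mul_right (h1.trans h3) (by positivity)
    have h := pr_ge_of_equivs (k := 2) ![Equiv.refl (ι → Bool), flip1 b]
      (p := fun η : ι → Bool => T ≤ Psi ρ (ext A (fun i => rad (η i)) d)) ?_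
    · push_cast at h; linarith
    · intro y
      by_contra hcon
      push Not at hcon
      have g0 : Psi ρ (ext A (fun i => rad (y i)) d) < T := hcon 0
      have g1 : Psi ρ (ext A (fun i => rad (flip1 b y i)) d) < T := hcon 1
      have g0' := mul_lt_mul_of_pos_left g0 hM0
      have g1' := mul_lt_mul_of_pos_left g1 hM0
      rw [hparts] at g0' g1'
      have i0 := nsq_nonneg (qpart (ρ := ρ) A d fun i => rad (y i))
      have i1 := nsq_nonneg (qpart (ρ := ρ) A d fun i => rad (flip1 b y i))
      have i2 := nsq_add_le (lpart (ρ := ρ) A fun i => rad (y i))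
        (fun x => -lpart (ρ := ρ) A (fun i => rad (flip1 b y i)) x)
        (fun x => (2 * rad (y b)) * (2 * cof (mix A x.1) (Sum.inl b) (Sum.inr x.2))) ?_
      · rw [nsq_smul, hcb, mul_pow, rad_sq] at i2
        have : nsq (fun x => -lpart (ρ := ρ) A (fun i => rad (flip1 b y i)) x) =
          nsq (lpart (ρ := ρ) A (fun i => rad (flip1 b y i))) := by unfold nsq; simp
        rw [this, ← hM] at i2
        nlinarith [mul_le_mul_of_nonneg_left hTs hM0.le, mul_nonneg hM0.le hW,
          mul_nonneg hM0.le hs0]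
      · intro x
        unfold lpart
        rw [← sub_eq_add_neg, ← sum_sub_distrib, sum_eq_single b]
        · beta_reduce; rw [rad_flip1_self]; ring
        · intro b' _ hb'; beta_reduce; rw [flip1_ne hb']; ring
        · simp
  by_cases c3 : E / 1024 ≤ partB ρ A
  · apply hsuff
    intro d
    have hne : Nonempty ι := by
      by_contra hne
      rw [not_nonempty_iff] at hne
      have : partB ρ A = 0 := by simp [partB]
      exact c1 (by nlinarith)
    obtain ⟨b, hb⟩ := exists_ge_avg fun b : ι => ∑ b' : ι,
      if b = b' then 0 else cq (ρ := ρ) A (Sum.inl b) (Sum.inl b')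
    obtain ⟨b', hb'⟩ := exists_ge_avg fun b' : ι =>
      if b = b' then 0 else cq (ρ := ρ) A (Sum.inl b) (Sum.inl b')
    set u := if b = b' then 0 else cq (ρ := ρ) A (Sum.inl b) (Sum.inl b') with hu
    have hu0 : 0 ≤ u := ite_nn (cq_nonneg _ _ _)
    have hb2 : partB ρ A ≤ 2 * (N * (N * u)) := by
      unfold partB
      have := mul_le_mul_of_nonneg_left hb' hN0
      linarith
    have hTs : T ≤ u := by
      have h1 : T * (2048 * (N + 1) ^ 2) ≤ 1024 * (2 * (N * (N * u))) := by rw [hTmul]; linarith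
      have h3 : 1024 * (2 * (N * (N * u))) ≤ u * (2048 * (N + 1) ^ 2) := by
        nlinarith [mul_nonneg hN0 hu0]
      exact le_of_mul_le_mul_right (h1.trans h3) (by positivity)
    rcases eq_or_ne b b' with hbb | hbb
    · have hu00 : u = 0 := by rw [hu, if_pos hbb]
      rw [pr_true]
      · norm_num
      · intro y
        have := Psi_nonneg (ρ := ρ) (ext A (fun i => rad (y i)) d)
        linarith
    have huc : u = cq (ρ := ρ) A (Sum.inl b) (Sum.inl b') := by rw [hu, if_neg hbb]
    have h := pr_ge_of_equivs (k := 4)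
      ![Equiv.refl (ι → Bool), flip1 b, flip1 b', (flip1 b).trans (flip1 b')]
      (p := fun η : ι → Bool => T ≤ Psi ρ (ext A (fun i => rad (η i)) d)) ?_
    · push_cast at h; linarith
    · intro y
      by_contra hcon
      push Not at hcon
      have g0 : Psi ρ (ext A (fun i => rad (y i)) d) < T := hcon 0
      have g1 : Psi ρ (ext A (fun i => rad (flip1 b y i)) d) < T := hcon 1
      have g2 : Psi ρ (ext A (fun i => rad (flip1 b' y i)) d) < T := hcon 2
      have g3 : Psi ρ (ext A (fun i => rad (flip1 b' (flip1 b y) i)) d) < T := hcon 3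
      have gq : ∀ z : ι → Bool, Psi ρ (ext A (fun i => rad (z i)) d) < T →
          nsq (qpart (ρ := ρ) A d fun i => rad (z i)) < M * T := fun z hz => by
        have g' := mul_lt_mul_of_pos_left hz hM0
        rw [hparts] at g'
        linarith [nsq_nonneg (lpart (ρ := ρ) A fun i => rad (z i)), mul_nonneg hM0.le hW]
      have k0 := gq y g0
      have k1 := gq _ g1
      have k2 := gq _ g2
      have k3 := gq _ g3
      have hfour : nsq (fun ω : Sym2 (ι ⊕ ρ) → Bool =>
          (8 * (rad (y b) * rad (y b'))) * cof (mix A ω) (Sum.inl b) (Sum.inl b')) ≤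
          4 * (nsq (qpart (ρ := ρ) A d fun i => rad (y i)) +
          nsq (qpart (ρ := ρ) A d fun i => rad (flip1 b y i)) +
          nsq (qpart (ρ := ρ) A d fun i => rad (flip1 b' y i)) +
          nsq (qpart (ρ := ρ) A d fun i => rad (flip1 b' (flip1 b y) i))) := by
        unfold nsq
        rw [← sum_add_distrib, ← sum_add_distrib, ← sum_add_distrib, mul_sum]
        refine sum_le_sum fun ω _ => ?_
        have hd4 : (8 * (rad (y b) * rad (y b'))) * cof (mix A ω) (Sum.inl b) (Sum.inl b') =
            qpart A d (fun i => rad (y i)) ω - qpart A d (fun i => rad (flip1 b y i)) ω -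
            qpart A d (fun i => rad (flip1 b' y i)) ω +
            qpart A d (fun i => rad (flip1 b' (flip1 b y) i)) ω := by
          have hQ := offq_flip4 (fun b b' => cof (mix A ω) (Sum.inl b) (Sum.inl b'))
            (fun i j => cof_symm (mix_symm hA.1 ω) _ _) hbb y
          simp only [qpart]
          linarith
        beta_reduce
        rw [hd4]
        set a0 := qpart A d (fun i => rad (y i)) ω
        set a1 := qpart A d (fun i => rad (flip1 b y i)) ω
        set a2 := qpart A d (fun i => rad (flip1 b' y i)) ω
        set a3 := qpart A d (fun i => rad (flip1 b' (flip1 b y) i)) ω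
        nlinarith [sq_nonneg (a0 + a1), sq_nonneg (a0 + a2), sq_nonneg (a0 - a3),
          sq_nonneg (a1 - a2), sq_nonneg (a1 + a3), sq_nonneg (a2 + a3)]
      rw [nsq_smul, nsq_qcoef, ← hM, ← huc] at hfour
      have : (8 * (rad (y b) * rad (y b'))) ^ 2 = 64 := by
        rw [mul_pow, mul_pow, rad_sq, rad_sq]; norm_num
      rw [this] at hfour
      nlinarith [mul_le_mul_of_nonneg_left hTs hM0.le, mul_nonneg hM0.le hu0]
  push Not at c1 c2 c3
  have hEpos : 0 < E := by nlinarith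
  have hDE : E / 4 ≤ partD ρ A := by linarith
  have hn1 : nsq (fun ω : Sym2 (ι ⊕ ρ) → Bool => trc A ω) = M * partD ρ A := by
    rw [hM]; exact nsq_eq_ev _
  set F : ℝ → (Sym2 (ι ⊕ ρ) → Bool) → ℝ := fun d ω => d * per (mix A ω) + trc A ω with hF
  have hpm : nsq (F (rad true)) + nsq (F (rad false)) = 2 * (M * partD ρ A) +
      2 * nsq (fun ω : Sym2 (ι ⊕ ρ) → Bool => per (mix A ω)) := by
    rw [← hn1]
    unfold nsq
    rw [mul_sum, mul_sum, ← sum_add_distrib, ← sum_add_distrib]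
    refine sum_congr rfl fun ω _ => ?_
    simp only [hF, rad]
    norm_num; ring
  have hgood : ∀ d : ℝ, M * partD ρ A ≤ nsq (F d) →
      1 / 2 ≤ pr (fun η : ι → Bool => T ≤ Psi ρ (ext A (fun i => rad (η i)) d)) := by
    intro d hdF
    set Qf : (ι → Bool) → (Sym2 (ι ⊕ ρ) → Bool) → ℝ := fun y ω =>
      offq univ (fun b b' => cof (mix A ω) (Sum.inl b) (Sum.inl b')) fun b => rad (y b)
    have hmk : pr (fun y => M * E / 32 ≤ nsq (Qf y)) ≤ 1 / 2 := by
      refine pr_le_of_markov (fun y => nsq_nonneg _) (by positivity) ?_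
      rw [show (ev fun y => nsq (Qf y)) = M * partB ρ A from ev_nsq_qpart hA.1]
      nlinarith [mul_le_mul_of_nonneg_left c3.le hM0.le, mul_pos hM0 hEpos]
    have hnot := pr_not (fun η : ι → Bool => T ≤ Psi ρ (ext A (fun i => rad (η i)) d))
    have hle : pr (fun η : ι → Bool => ¬ T ≤ Psi ρ (ext A (fun i => rad (η i)) d)) ≤ 1 / 2 := by
      refine (pr_mono fun y hy => ?_).trans hmk
      push Not at hy
      by_contra hlt
      push Not at hlt
      have h1 := hparts d y
      have h2 := nsq_nonneg (lpart (ρ := ρ) A fun i => rad (y i))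
      have h4 := mul_lt_mul_of_pos_left hy hM0
      have h5 := nsq_add_le (qpart (ρ := ρ) A d fun i => rad (y i)) (fun ω => -Qf y ω)
        (F d) (fun ω => by simp only [qpart, Qf, hF]; ring)
      have h6 : nsq (fun ω => -Qf y ω) = nsq (Qf y) := by unfold nsq; simp
      rw [h6] at h5
      nlinarith [mul_le_mul_of_nonneg_left hDE hM0.le, mul_le_mul_of_nonneg_left hTE hM0.le,
        mul_nonneg hM0.le hW, mul_pos hM0 hEpos]
    linarith
  have hper := nsq_nonneg (fun ω : Sym2 (ι ⊕ ρ) → Bool => per (mix A ω))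
  rcases le_total (M * partD ρ A) (nsq (F (rad true))) with h | h
  · linarith [hgood _ h, pr_nonneg (fun η : ι → Bool =>
      T ≤ Psi ρ (ext A (fun i => rad (η i)) (rad false)))]
  · linarith [hgood (rad false) (by linarith), pr_nonneg (fun η : ι → Bool =>
      T ≤ Psi ρ (ext A (fun i => rad (η i)) (rad true)))]

end Step

/-! ### Littlewood–Offord estimates -/

section LO

lemma centralBinom_sq_le (n : ℕ) : (2 * n + 1) * n.centralBinom ^ 2 ≤ 16 ^ n := by
  induction n with
  | zero => simp
  | succ n ih =>
    have h := Nat.succ_mul_centralBinom_succ n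
    have h1 : (n + 1) ^ 2 * ((2 * (n + 1) + 1) * (n + 1).centralBinom ^ 2) ≤
        (n + 1) ^ 2 * 16 ^ (n + 1) := by
      calc _ = (2 * n + 3) * ((n + 1) * (n + 1).centralBinom) ^ 2 := by ring
        _ = 4 * ((2 * n + 3) * (2 * n + 1)) * ((2 * n + 1) * n.centralBinom ^ 2) := by
          rw [h]; ring
        _ ≤ 4 * (4 * (n + 1) ^ 2) * 16 ^ n :=
          Nat.mul_le_mul (Nat.mul_le_mul_left _ (by nlinarith)) ih
        _ = _ := by ring
    exact Nat.le_of_mul_le_mul_left h1 (by positivity)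

lemma choose_half_sq_le (n : ℕ) : n * (n.choose (n / 2)) ^ 2 ≤ (2 ^ n) ^ 2 := by
  obtain ⟨r, rfl | rfl⟩ := Nat.even_or_odd' n
  · have h := centralBinom_sq_le r
    rw [Nat.centralBinom_eq_two_mul_choose] at h
    rw [Nat.mul_div_cancel_left r (by norm_num), ← pow_mul, mul_comm (2 * r) 2, ← mul_assoc,
      pow_mul]
    norm_num
    nlinarith [sq_nonneg ((2 * r).choose r)]
  · have h := centralBinom_sq_le (r + 1)
    have h2 : (r + 1).centralBinom = 2 * (2 * r + 1).choose r := by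
      rw [Nat.centralBinom_eq_two_mul_choose, show 2 * (r + 1) = (2 * r + 1) + 1 by ring,
        Nat.choose_succ_succ, Nat.choose_symm_half]
      ring
    rw [show (2 * r + 1) / 2 = r by omega]
    have h3 : (2 ^ (2 * r + 1)) ^ 2 * 4 = 16 ^ (r + 1) := by
      rw [← pow_mul, show (16 : ℕ) = 2 ^ 4 by norm_num, ← pow_mul,
        show 2 ^ ((2 * r + 1) * 2) * 4 = 2 ^ ((2 * r + 1) * 2 + 2) by rw [pow_add]; norm_num]
      congr 1; ring
    rw [h2] at h
    nlinarith [sq_nonneg ((2 * r + 1).choose r)]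

variable {α : Type} [Fintype α] [DecidableEq α]

/-- The Littlewood–Offord inequality, from Sperner's theorem: the sign patterns for which the sum
falls in an interval of length `2τ` form an antichain once signs are aligned with `c`. -/
theorem lo_univ (c : α → ℝ) {τ : ℝ} (hτ : 0 < τ) (h : ∀ i, τ ≤ |c i|) (x : ℝ)
    (hα : 0 < Fintype.card α) :
    pr (fun y : α → Bool => |∑ i, c i * rad (y i) - x| < τ) ≤ 1 / √(Fintype.card α) := by
  classical
  set n := Fintype.card α with hn
  let bad : Finset (α → Bool) := univ.filter fun y => |∑ i, c i * rad (y i) - x| < τ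
  let φ : (α → Bool) → Finset α := fun y => univ.filter fun i => 0 < c i * rad (y i)
  have hc0 : ∀ i, c i ≠ 0 := fun i hi => by
    have := h i; rw [hi, abs_zero] at this; linarith
  have hval : ∀ y i, c i * rad (y i) = if i ∈ φ y then |c i| else -|c i| := by
    intro y i
    simp only [φ, mem_filter, mem_univ, true_and]
    rcases rad_eq_or (y i) with hr | hr <;> rw [hr] <;> rcases lt_or_gt_of_ne (hc0 i) with hc | hc
    · rw [abs_of_neg hc, if_neg (by linarith)]; ring
    · rw [abs_of_pos hc, if_pos (by linarith)]; ring
    · rw [abs_of_neg hc, if_pos (by linarith)]; ring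
    · rw [abs_of_pos hc, if_neg (by linarith)]; ring
  have hinj : Function.Injective φ := by
    intro y y' hyy
    ext i
    have h1 := hval y i
    rw [hyy, ← hval y' i] at h1
    have h2 := mul_left_cancel₀ (hc0 i) h1
    cases h3 : y i <;> cases h4 : y' i <;> rw [h3, h4] at h2 <;> simp [rad] at h2 ⊢ <;> norm_num at h2
  have hanti : IsAntichain (· ⊆ ·) (SetLike.coe (bad.image φ)) := by
    intro a ha b hb hab hsub
    simp only [coe_image, Set.mem_image, mem_coe] at ha hb
    obtain ⟨y, hy, rfl⟩ := ha
    obtain ⟨y', hy', rfl⟩ := hb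
    simp only [bad, mem_filter, mem_univ, true_and] at hy hy'
    obtain ⟨j, hj, hj'⟩ := exists_of_ssubset (ssubset_of_subset_of_ne hsub hab)
    have hle : ∀ i, c i * rad (y i) + (if i = j then 2 * τ else 0) ≤ c i * rad (y' i) := by
      intro i
      rw [hval y, hval y']
      by_cases hij : i = j
      · subst hij; rw [if_neg hj', if_pos hj, if_pos rfl]; linarith [h i]
      · rw [if_neg hij]
        by_cases hi : i ∈ φ y
        · rw [if_pos hi, if_pos (hsub hi)]; simp
        · rw [if_neg hi]; split_ifs <;> linarith [abs_nonneg (c i)]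
    have hs := sum_le_sum fun i (_ : i ∈ univ) => hle i
    rw [sum_add_distrib, sum_ite_eq' univ j, if_pos (mem_univ _)] at hs
    rw [abs_lt] at hy hy'
    linarith
  have hcard := hanti.sperner
  rw [card_image_of_injective _ hinj, ← hn] at hcard
  have hpr : pr (fun y : α → Bool => |∑ i, c i * rad (y i) - x| < τ) = bad.card / 2 ^ n := by
    unfold pr ev ind bad
    rw [sum_boole]; simp [hn]
  rw [hpr, div_le_div_iff₀ (by positivity) (by positivity), one_mul]
  have h2 := choose_half_sq_le n
  have h3 : (n : ℝ) * (n.choose (n / 2) : ℝ) ^ 2 ≤ (2 ^ n) ^ 2 := by exact_mod_cast h2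
  have h4 : (bad.card : ℝ) ≤ n.choose (n / 2) := by exact_mod_cast hcard
  refine (mul_le_mul_of_nonneg_right h4 (Real.sqrt_nonneg _)).trans ?_
  refine abs_le_of_sq_le_sq' ?_ (by positivity) |>.2
  rw [mul_pow, Real.sq_sqrt (by positivity)]
  linarith

/-- The Littlewood–Offord inequality when only the coefficients in `s` are known to be large. -/
theorem lo (c : α → ℝ) {τ : ℝ} (hτ : 0 < τ) (s : Finset α) {k : ℕ} (hk : 0 < k) (hs : k ≤ s.card)
    (h : ∀ i ∈ s, τ ≤ |c i|) (x : ℝ) :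
    pr (fun y : α → Bool => |∑ i, c i * rad (y i) - x| < τ) ≤ 1 / √k := by
  classical
  rw [pr_resample s]
  have key : ∀ y : α → Bool,
      pr (fun y' : α → Bool => |∑ i, c i * rad (s.piecewise y' y i) - x| < τ) ≤ 1 / √k := by
    intro y
    have h1 : ∀ y' : α → Bool, ∑ i, c i * rad (s.piecewise y' y i) - x =
        ∑ i : s, c i * rad (y' i) - (x - ∑ i ∈ sᶜ, c i * rad (y i)) := by
      intro y'
      rw [← sum_add_sum_compl s, ← sum_coe_sort s]
      have h2 : ∀ i : s, c i * rad (s.piecewise y' y i) = c i * rad (y' i) := fun i => by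
        rw [piecewise_eq_of_mem _ _ _ i.2]
      have h3 : ∑ i ∈ sᶜ, c i * rad (s.piecewise y' y i) = ∑ i ∈ sᶜ, c i * rad (y i) :=
        sum_congr rfl fun i hi => by rw [piecewise_eq_of_notMem _ _ _ (mem_compl.1 hi)]
      rw [h3, sum_congr rfl fun i _ => h2 i]; ring
    simp only [h1]
    have h4 := ev_restrict (T := Bool) (fun i : s => (i : α)) Subtype.val_injective
      (fun z => ind (|∑ i : s, c i * rad (z i) - (x - ∑ i ∈ sᶜ, c i * rad (y i))| < τ))
    unfold pr
    rw [h4]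
    have hcs : Fintype.card s = s.card := Fintype.card_coe s
    refine (lo_univ (fun i : s => c i) hτ (fun i => h i i.2) _ (by omega)).trans ?_
    rw [hcs]
    have : (k : ℝ) ≤ s.card := by exact_mod_cast hs
    have hk' : (0 : ℝ) < k := by exact_mod_cast hk
    exact one_div_le_one_div_of_le (Real.sqrt_pos.2 hk') (Real.sqrt_le_sqrt this)
  refine (ev_mono key).trans ?_
  rw [ev_const]

open Classical in
/-- The rows `r l`, `l ∈ S`, are spread: for every vector of targets, except with probability `b`
at least `j` of the signed row sums are at distance at least `σ` from their target. -/
def Spread (S : Finset α) (r : α → α → ℝ) (σ : ℝ) (j : ℕ) (b : ℝ) : Prop :=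
  ∀ x : α → ℝ,
    pr (fun y : α → Bool => (S.filter fun l => σ ≤ |∑ i, r l i * rad (y i) - x l|).card < j) ≤ b

lemma card_filter_add_not {β : Type} (S : Finset β) (p : β → Prop) [DecidablePred p] :
    (S.filter p).card + (S.filter fun l => ¬ p l).card = S.card :=
  card_filter_add_card_filter_not p

open Classical in
/-- Rows with many large entries are spread, by Littlewood–Offord for each row and Markov. -/
theorem spread_many (S : Finset α) (r : α → α → ℝ) {σ : ℝ} (hσ : 0 < σ) {k j : ℕ} (hk : 0 < k)
    (hr : ∀ l ∈ S, k ≤ (univ.filter fun i => σ ≤ |r l i|).card) (hj : 2 * j ≤ S.card) :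
    Spread S r σ j (2 / √k) := by
  intro x
  have hk' : (0 : ℝ) < √k := Real.sqrt_pos.2 (by exact_mod_cast hk)
  rcases Nat.eq_zero_or_pos S.card with h0 | hpos
  · refine le_trans (le_of_eq (pr_false fun y hy => ?_)) (by positivity)
    omega
  have hS : (0 : ℝ) < S.card := by exact_mod_cast hpos
  have hmk : pr (fun y : α → Bool => (S.card : ℝ) / 2 ≤
      ∑ l ∈ S, ind (|∑ i, r l i * rad (y i) - x l| < σ)) ≤ 2 / √k := by
    refine pr_le_of_markov (fun y => sum_nonneg fun _ _ => ind_nonneg _) (by positivity) ?_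
    rw [ev_sum]
    refine (sum_le_sum fun l hl => (lo (r l) hσ _ hk (hr l hl) (by simp) (x l))).trans ?_
    rw [sum_const, nsmul_eq_mul]
    apply le_of_eq; field_simp
  refine (pr_mono fun y hy => ?_).trans hmk
  have h1 := card_filter_add_not S fun l => σ ≤ |∑ i, r l i * rad (y i) - x l|
  have h2 : ∑ l ∈ S, ind (|∑ i, r l i * rad (y i) - x l| < σ) =
      ((S.filter fun l => ¬ σ ≤ |∑ i, r l i * rad (y i) - x l|).card : ℝ) := by
    unfold ind
    rw [sum_boole]
    simp only [not_le]
  rw [h2, div_le_iff₀ (by norm_num)]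
  exact_mod_cast (by omega : S.card ≤
    (S.filter fun l => ¬ σ ≤ |∑ i, r l i * rad (y i) - x l|).card * 2)

lemma exists_sign (t : ℝ) : ∃ w : ℝ, (w = 1 ∨ w = -1) ∧ 0 ≤ w * t := by
  rcases le_total 0 t with h | h
  · exact ⟨1, Or.inl rfl, by linarith⟩
  · exact ⟨-1, Or.inr rfl, by linarith⟩

/-- If the coordinate `l` has a large coefficient in row `l` and a negligible one in the other
rows, then the signs at `S` act as nearly independent coins, one for each row. -/
theorem spread_coins (S : Finset α) (r : α → α → ℝ) {τ τ2 : ℝ} (hτ : 0 < τ)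
    (hd : ∀ l ∈ S, τ ≤ |r l l|) (ho : ∀ l ∈ S, ∀ l' ∈ S, l ≠ l' → |r l l'| ≤ τ2)
    (hτ2 : S.card * τ2 ≤ τ / 4) (h2 : 0 ≤ τ2) {j : ℕ} (hj : 4 * j ≤ S.card) :
    Spread S r (τ / 2) j (4 / S.card) := by
  classical
  intro x
  rcases Nat.eq_zero_or_pos S.card with h0 | hpos
  · refine le_trans (le_of_eq (pr_false fun y hy => ?_)) (by positivity)
    omega
  have hS : (0 : ℝ) < S.card := by exact_mod_cast hpos
  rw [pr_resample S]
  have key : ∀ y : α → Bool, pr (fun y' : α → Bool => (S.filter fun l =>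
      τ / 2 ≤ |∑ i, r l i * rad (S.piecewise y' y i) - x l|).card < j) ≤ 4 / S.card := by
    intro y
    choose w hw hw' using fun l => exists_sign (r l l * (∑ i ∈ Sᶜ, r l i * rad (y i) - x l))
    have hgood : ∀ y' : α → Bool, ∀ l ∈ S, rad (y' l) = w l →
        τ / 2 ≤ |∑ i, r l i * rad (S.piecewise y' y i) - x l| := by
      intro y' l hl hyl
      have e1 : ∑ i, r l i * rad (S.piecewise y' y i) =
          r l l * w l + ∑ i ∈ S.erase l, r l i * rad (y' i) + ∑ i ∈ Sᶜ, r l i * rad (y i) := by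
        rw [← sum_add_sum_compl S, ← add_sum_erase S _ hl]
        congr 1
        · congr 1
          · rw [piecewise_eq_of_mem _ _ _ hl, hyl]
          · exact sum_congr rfl fun i hi => by rw [piecewise_eq_of_mem _ _ _ (mem_of_mem_erase hi)]
        · exact sum_congr rfl fun i hi => by rw [piecewise_eq_of_notMem _ _ _ (mem_compl.1 hi)]
      have e2 : |∑ i ∈ S.erase l, r l i * rad (y' i)| ≤ τ / 4 := by
        refine (abs_sum_le_sum_abs _ _).trans ?_
        calc ∑ i ∈ S.erase l, |r l i * rad (y' i)| ≤ ∑ i ∈ S.erase l, τ2 :=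
              sum_le_sum fun i hi => by
                rw [abs_mul, rad_abs, mul_one]
                exact ho l hl i (mem_of_mem_erase hi) (ne_of_mem_erase hi).symm
          _ ≤ ∑ i ∈ S, τ2 := sum_le_sum_of_subset_of_nonneg (erase_subset _ _) fun _ _ _ => h2
          _ = S.card * τ2 := by rw [sum_const, nsmul_eq_mul]
          _ ≤ _ := hτ2
      set F := ∑ i ∈ Sᶜ, r l i * rad (y i) - x l
      have e3 : τ ≤ |r l l * w l + F| := by
        have hdl := hd l hl
        have hwl := hw' l
        have e4 : (r l l) ^ 2 ≤ (r l l * w l + F) ^ 2 := by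
          have : w l ^ 2 = 1 := by rcases hw l with h | h <;> rw [h] <;> norm_num
          nlinarith [sq_nonneg F]
        exact hdl.trans (sq_le_sq.1 e4)
      rw [e1]
      have e5 : r l l * w l + ∑ i ∈ S.erase l, r l i * rad (y' i) + ∑ i ∈ Sᶜ, r l i * rad (y i) -
          x l = (r l l * w l + F) - (-∑ i ∈ S.erase l, r l i * rad (y' i)) := by
        simp only [F]; ring
      rw [e5]
      have := abs_sub_abs_le_abs_sub (r l l * w l + F) (-∑ i ∈ S.erase l, r l i * rad (y' i))
      rw [abs_neg] at this
      linarith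
    have hch : pr (fun y' : α → Bool => ((S.card : ℝ) / 2) ^ 2 ≤ (∑ l ∈ S, w l * rad (y' l)) ^ 2) ≤
        4 / S.card := by
      refine pr_le_of_markov (fun y => sq_nonneg _) (by positivity) ?_
      have := ev_lin_sq S w
      have h1 : ∑ l ∈ S, w l ^ 2 = S.card := by
        rw [sum_congr rfl fun l _ => show w l ^ 2 = 1 by
          rcases hw l with h | h <;> rw [h] <;> norm_num]
        simp
      have h3 : (ev fun y' : α → Bool => (∑ l ∈ S, w l * rad (y' l)) ^ 2) = S.card := by
        rw [← h1, ← this]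
        exact ev_congr fun y => by simp only [mul_comm]
      rw [h3]
      apply le_of_eq; field_simp; norm_num
    refine (pr_mono fun y' hy' => ?_).trans hch
    have hle : (S.filter fun l => rad (y' l) = w l).card ≤ (S.filter fun l =>
        τ / 2 ≤ |∑ i, r l i * rad (S.piecewise y' y i) - x l|).card :=
      card_le_card fun l hl => by
        rw [mem_filter] at hl ⊢
        exact ⟨hl.1, hgood y' l hl.1 hl.2⟩
    have hlt : (4 * (S.filter fun l => rad (y' l) = w l).card : ℝ) ≤ S.card := by
      exact_mod_cast (by omega : 4 * (S.filter fun l => rad (y' l) = w l).card ≤ S.card)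
    have hval : ∀ l, w l * rad (y' l) = 2 * (if rad (y' l) = w l then 1 else 0) - 1 := by
      intro l
      rcases hw l with h | h <;> rcases rad_eq_or (y' l) with h' | h' <;> rw [h, h'] <;> norm_num
    have hsum : ∑ l ∈ S, w l * rad (y' l) =
        2 * ((S.filter fun l => rad (y' l) = w l).card : ℝ) - S.card := by
      simp only [hval]
      rw [sum_sub_distrib, ← mul_sum, sum_boole]; simp
    rw [hsum]
    nlinarith
  refine (ev_mono key).trans ?_
  rw [ev_const]

end LO

/-! ### Spans of sign vectors -/

section Span
variable {k : ℕ}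

/-- The real sign vector of a Boolean vector. -/
noncomputable def vec (z : Fin k → Bool) : Fin k → ℝ := fun i => rad (z i)

/-- Coefficients with respect to linearly independent sign vectors are bounded, by Cramer's rule
for the Gram matrix, whose determinant is a nonzero integer. -/
theorem coef_bound {β : Type} [Fintype β] [DecidableEq β] (q : β → Fin k → Bool)
    (hq : LinearIndependent ℝ fun i => vec (q i)) (v : Fin k → ℝ) (hv : ∀ i, |v i| ≤ 1)
    (l : β → ℝ) (hl : ∑ i, l i • vec (q i) = v) (i : β) : |l i| ≤ (k : ℝ) ^ (2 * k) := by
  let Z : Matrix β (Fin k) ℤ := fun i a => if q i a then 1 else -1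
  let Y : Matrix β (Fin k) ℝ := fun i a => vec (q i) a
  have hZY : Z.map (Int.cast : ℤ → ℝ) = Y := by
    ext i a
    change (((if q i a then 1 else -1 : ℤ)) : ℝ) = if q i a then 1 else -1
    split_ifs <;> simp
  let G : Matrix β β ℝ := Y * Y.transpose
  have hdet : G.det = ((Z * Z.transpose).det : ℤ) := by
    rw [Int.cast_det]
    congr 1
    ext i j
    change ∑ a, Y i a * Y j a = ((∑ a, Z i a * Z j a : ℤ) : ℝ)
    push_cast
    refine sum_congr rfl fun a _ => ?_
    rw [← hZY]; rfl
  have hne : G.det ≠ 0 := by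
    intro h0
    obtain ⟨μ, hμ, hG⟩ := Matrix.exists_mulVec_eq_zero_iff.2 h0
    have h1 : Matrix.vecMul μ Y = 0 := by
      have h2 : Matrix.vecMul μ Y ⬝ᵥ Matrix.vecMul μ Y = 0 := by
        rw [← Matrix.mulVec_transpose Y μ, Matrix.dotProduct_mulVec, Matrix.vecMul_transpose,
          Matrix.mulVec_mulVec, hG, zero_dotProduct]
      exact dotProduct_self_eq_zero.1 h2
    apply hμ
    have := Fintype.linearIndependent_iff.1 hq μ (by
      ext a
      have := congrFun h1 a
      simpa [Matrix.vecMul, dotProduct, Y] using this)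
    ext i; exact this i
  have hdet1 : 1 ≤ |G.det| := by
    rw [hdet, ← Int.cast_abs]
    have : (Z * Z.transpose).det ≠ 0 := by
      intro h; rw [hdet, h] at hne; simp at hne
    exact_mod_cast Int.one_le_abs this
  have hYle : ∀ i a, |Y i a| ≤ 1 := fun i a => (rad_abs _).le
  have hGle : ∀ i j, |G i j| ≤ k := by
    intro i j
    simp only [G, Matrix.mul_apply, Matrix.transpose_apply]
    refine (abs_sum_le_sum_abs _ _).trans ?_
    refine (sum_le_sum fun a _ => show |Y i a * Y j a| ≤ 1 from ?_).trans (by simp)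
    rw [abs_mul]
    exact mul_le_one₀ (hYle i a) (abs_nonneg _) (hYle j a)
  set w := Y.mulVec v
  have hw : ∀ i, |w i| ≤ k := by
    intro i
    simp only [w, Matrix.mulVec, dotProduct]
    refine (abs_sum_le_sum_abs _ _).trans ?_
    refine (sum_le_sum fun a _ => show |Y i a * v a| ≤ 1 from ?_).trans (by simp)
    rw [abs_mul]
    exact mul_le_one₀ (hYle i a) (abs_nonneg _) (hv a)
  have hGl : G.mulVec l = w := by
    simp only [w, G]
    rw [← Matrix.mulVec_mulVec]
    congr 1
    rw [← hl]
    ext a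
    rw [Finset.sum_apply]
    exact sum_congr rfl fun x _ => mul_comm _ _
  have hcr : G.det * l i = (G.updateCol i w).det := by
    rw [← Matrix.cramer_apply, ← hGl, Matrix.cramer_eq_adjugate_mulVec, Matrix.mulVec_mulVec,
      Matrix.adjugate_mul]
    simp [Matrix.smul_mulVec]
  have hdl : |(G.updateCol i w).det| ≤ (Fintype.card β).factorial • (k : ℝ) ^ Fintype.card β := by
    have := Matrix.det_le (A := G.updateCol i w) (abv := AbsoluteValue.abs) (x := (k : ℝ)) ?_
    · exact this
    · intro a b
      rw [Matrix.updateCol_apply]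
      split_ifs
      · exact hw a
      · exact hGle a b
  have hcard : Fintype.card β ≤ k := by
    have := hq.fintype_card_le_finrank
    simpa using this
  have h1 : |l i| ≤ |(G.updateCol i w).det| := by
    rw [← hcr, abs_mul]
    nlinarith [abs_nonneg (l i)]
  refine (h1.trans hdl).trans ?_
  rw [nsmul_eq_mul]
  have hkpos : 1 ≤ k := (Fintype.card_pos_iff.2 ⟨i⟩ : 0 < Fintype.card β).trans_le hcard
  have h2 : (Fintype.card β).factorial * k ^ Fintype.card β ≤ k ^ (2 * k) := by
    calc _ ≤ k ^ k * k ^ k := Nat.mul_le_mul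
          ((Nat.factorial_le hcard).trans (Nat.factorial_le_pow k))
          (Nat.pow_le_pow_right hkpos hcard)
      _ = _ := by rw [← pow_add]; congr 1; ring
  exact_mod_cast h2

/-- The span of a family of sign vectors. -/
noncomputable def spn (q : Fin k → Fin k → Bool) : Submodule ℝ (Fin k → ℝ) :=
  Submodule.span ℝ (Set.range fun i => vec (q i))

/-- The proportion of sign vectors lying in a subspace. -/
noncomputable def dens (V : Submodule ℝ (Fin k → ℝ)) : ℝ := pr fun z : Fin k → Bool => vec z ∈ V

/-- A nonempty set `Q` of sign vectors contains a family spanning it in which every sign vector of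
the span has bounded coefficients. -/
theorem exists_span (hk : 0 < k) (Q : (Fin k → Bool) → Prop) (hQ : ∃ z, Q z) :
    ∃ q : Fin k → Fin k → Bool, (∀ i, Q (q i)) ∧ (∀ z, Q z → vec z ∈ spn q) ∧
      ∀ v ∈ spn q, (∀ i, |v i| ≤ 1) → ∀ (u : Fin k → ℝ) (τ : ℝ),
        (∀ i, |∑ a, u a * rad (q i a)| ≤ τ) → |∑ a, u a * v a| ≤ (k : ℝ) ^ (2 * k + 1) * τ := by
  classical
  obtain ⟨b, hbs, hspan, hli⟩ := exists_linearIndependent ℝ (vec '' {z | Q z})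
  have hbf : b.Finite := (Set.toFinite _).subset hbs
  have : Fintype b := hbf.fintype
  have hcard : Fintype.card b ≤ k := by
    have := hli.fintype_card_le_finrank
    simpa using this
  have hne : Nonempty b := by
    by_contra hne
    rw [not_nonempty_iff, Set.isEmpty_coe_sort] at hne
    obtain ⟨z, hz⟩ := hQ
    have : vec z ∈ Submodule.span ℝ b := by rw [hspan]; exact Submodule.subset_span ⟨z, hz, rfl⟩
    rw [hne, Submodule.span_empty, Submodule.mem_bot] at this
    exact rad_ne_zero _ (congrFun this ⟨0, hk⟩)
  have hch : ∀ x : b, ∃ z, Q z ∧ vec z = x := fun x => hbs x.2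
  choose zf hzQ hzv using hch
  have hli' : LinearIndependent ℝ fun x : b => vec (zf x) := by
    have : (fun x : b => vec (zf x)) = fun x : b => (x : Fin k → ℝ) := funext hzv
    rw [this]; exact hli
  obtain ⟨f⟩ := Function.Embedding.nonempty_of_card_le (α := b) (β := Fin k) (by simpa using hcard)
  set g := Function.invFun f
  have hg : ∀ x, g (f x) = x := Function.leftInverse_invFun f.injective
  have hsp : spn (fun i => zf (g i)) = Submodule.span ℝ (Set.range fun x : b => vec (zf x)) := by
    unfold spn
    congr 1
    ext v
    constructor
    · rintro ⟨i, rfl⟩; exact ⟨g i, rfl⟩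
    · rintro ⟨x, rfl⟩; exact ⟨f x, by simp only [hg]⟩
  have hsp2 : Submodule.span ℝ (Set.range fun x : b => vec (zf x)) =
      Submodule.span ℝ (vec '' {z | Q z}) := by
    rw [← hspan]; congr 1
    ext v; constructor
    · rintro ⟨x, rfl⟩; simp only [hzv]; exact x.2
    · intro hv; exact ⟨⟨v, hv⟩, hzv _⟩
  refine ⟨fun i => zf (g i), fun i => hzQ _, fun z hz => ?_, ?_⟩
  · rw [hsp, hsp2]; exact Submodule.subset_span ⟨z, hz, rfl⟩
  · intro v hv hv1 u τ hu
    rw [hsp] at hv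
    obtain ⟨l, hl⟩ := (Submodule.mem_span_range_iff_exists_fun ℝ).1 hv
    have hb := coef_bound zf hli' v hv1 l hl
    have hu' : ∀ x : b, |∑ a, u a * rad (zf x a)| ≤ τ := fun x => by
      have := hu (f x); simpa only [hg] using this
    have hτ : 0 ≤ τ := (abs_nonneg _).trans (hu' hne.some)
    have e1 : ∑ a, u a * v a = ∑ x : b, l x * ∑ a, u a * rad (zf x a) := by
      rw [← hl]
      simp only [Finset.sum_apply, Pi.smul_apply, smul_eq_mul, mul_sum]
      rw [sum_comm]
      exact sum_congr rfl fun x _ => sum_congr rfl fun a _ => by simp only [vec]; ring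
    rw [e1]
    refine (abs_sum_le_sum_abs _ _).trans ?_
    calc ∑ x : b, |l x * ∑ a, u a * rad (zf x a)| ≤ ∑ x : b, (k : ℝ) ^ (2 * k) * τ :=
          sum_le_sum fun x _ => by
            rw [abs_mul]
            exact mul_le_mul (hb x) (hu' x) (abs_nonneg _) (by positivity)
      _ = Fintype.card b * ((k : ℝ) ^ (2 * k) * τ) := by simp
      _ ≤ k * ((k : ℝ) ^ (2 * k) * τ) := by
          refine mul_le_mul_of_nonneg_right ?_ (by positivity)
          exact_mod_cast hcard
      _ = _ := by rw [pow_succ]; ring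

end Span

/-! ### Pseudorandomness of the rows of a random symmetric matrix -/

section PR
variable {ι : Type} [Fintype ι] [DecidableEq ι] {k : ℕ}

open Classical in
/-- The rows `c` outside the range of `κ` whose restriction to the columns `κ` lies in `V`. -/
noncomputable def hits (A : Matrix ι ι ℝ) (κ : Fin k → ι) (V : Submodule ℝ (Fin k → ℝ)) :
    Finset ι :=
  univ.filter fun c => (∀ i, c ≠ κ i) ∧ (fun i => A c (κ i)) ∈ V

/-- Every subspace spanned by sign vectors and containing a proportion at least `p` of them is hit
by the expected number of rows, up to a constant factor. -/
def PR (k : ℕ) (p : ℝ) (A : Matrix ι ι ℝ) : Prop :=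
  ∀ κ : Fin k → ι, Function.Injective κ → ∀ q : Fin k → Fin k → Bool, p ≤ dens (spn q) →
    dens (spn q) * Fintype.card ι / 8 ≤ (hits A κ (spn q)).card

open Classical in
/-- If `Q` has density at least `p` and each `z ∈ Q` is almost orthogonal to `u c` for all but `e`
rows `c`, then many rows of `A` are almost orthogonal to their own `u c`. -/
theorem star (hk : 0 < k) {p : ℝ} (hp : 0 < p) {A : Matrix ι ι ℝ} (hA : ∀ i j, |A i j| ≤ 1)
    (hPR : PR k p A) (κ : Fin k → ι) (hκ : Function.Injective κ) (u : ι → Fin k → ℝ) {τ : ℝ} (e : ℕ)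
    (Q : (Fin k → Bool) → Prop) (hQp : p ≤ pr Q)
    (hQ : ∀ z, Q z → (univ.filter fun c => (∀ i, c ≠ κ i) ∧ τ < |∑ a, u c a * rad (z a)|).card ≤ e) :
    pr Q * Fintype.card ι / 8 ≤ (univ.filter fun c => (∀ i, c ≠ κ i) ∧
      |∑ a, u c a * A c (κ a)| ≤ (k : ℝ) ^ (2 * k + 1) * τ).card + k * e := by
  have hne : ∃ z, Q z := by
    by_contra h
    push Not at h
    rw [pr_false h] at hQp; linarith
  obtain ⟨q, hqQ, hqs, hqb⟩ := exists_span hk Q hne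
  have hd : pr Q ≤ dens (spn q) := pr_mono fun z hz => hqs z hz
  have h1 := hPR κ hκ q (hQp.trans hd)
  have hsub : hits A κ (spn q) ⊆ (univ.filter fun c => (∀ i, c ≠ κ i) ∧
      |∑ a, u c a * A c (κ a)| ≤ (k : ℝ) ^ (2 * k + 1) * τ) ∪ univ.biUnion fun i : Fin k =>
        univ.filter fun c => (∀ j, c ≠ κ j) ∧ τ < |∑ a, u c a * rad (q i a)| := by
    intro c hc
    simp only [hits, mem_filter, mem_univ, true_and] at hc
    simp only [mem_union, mem_filter, mem_univ, true_and, mem_biUnion]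
    by_cases h : ∃ i, τ < |∑ a, u c a * rad (q i a)|
    · obtain ⟨i, hi⟩ := h; exact Or.inr ⟨i, hc.1, hi⟩
    · push Not at h
      exact Or.inl ⟨hc.1, hqb _ hc.2 (fun i => hA _ _) (u c) τ h⟩
  have h2 := card_le_card hsub
  have h3 := h2.trans (card_union_le _ _)
  have h4 : (univ.biUnion fun i : Fin k =>
      univ.filter fun c => (∀ j, c ≠ κ j) ∧ τ < |∑ a, u c a * rad (q i a)|).card ≤ k * e := by
    refine card_biUnion_le.trans ?_
    refine (sum_le_sum fun i _ => hQ (q i) (hqQ i)).trans ?_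
    simp
  have h5 : ((hits A κ (spn q)).card : ℝ) ≤ (univ.filter fun c => (∀ i, c ≠ κ i) ∧
      |∑ a, u c a * A c (κ a)| ≤ (k : ℝ) ^ (2 * k + 1) * τ).card + k * e := by
    have h6 := (Nat.cast_le (α := ℝ)).2 (h3.trans (Nat.add_le_add_left h4 _))
    rw [Nat.cast_add, Nat.cast_mul] at h6
    exact h6
  have h6 : pr Q * Fintype.card ι / 8 ≤ dens (spn q) * Fintype.card ι / 8 := by gcongr
  linarith

/-- Functions of distinct coordinates are independent. -/
lemma ev_pi_prod {α T : Type*} [Fintype α] [DecidableEq α] [Fintype T] (g : α → T → ℝ) :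
    ev (fun f : α → T => ∏ a, g a (f a)) = ∏ a, ev (g a) := by
  unfold ev
  rw [prod_div_distrib, prod_univ_sum, Fintype.card_fun, prod_const]
  simp

lemma ev_curry {α β : Type*} [Fintype α] [Fintype β] [DecidableEq α] [DecidableEq β]
    (F : (α → β → Bool) → ℝ) :
    ev F = ev fun f : α × β → Bool => F fun a b => f (a, b) :=
  (ev_equiv (Equiv.curry α β Bool) F).symm

open Classical in
/-- The rows outside the range of `κ` hit `V` independently; a lower tail bound by the exponential
moment method. -/
theorem pr_hits (κ : Fin k → ι) (hκ : Function.Injective κ) (V : Submodule ℝ (Fin k → ℝ))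
    (H : ℕ) :
    pr (fun ω : Sym2 ι → Bool => (hits (sm ω) κ V).card ≤ H) ≤
      2 ^ H * (1 - dens V / 2) ^ (Fintype.card ι - k) := by
  let C := {c : ι // ∀ i, c ≠ κ i}
  have hcC : Fintype.card C = Fintype.card ι - k := by
    have h1 : Fintype.card C = (univ.image κ)ᶜ.card := by
      rw [Fintype.card_subtype]
      congr 1
      ext c; simp [eq_comm]
    rw [h1, card_compl, card_image_of_injective _ hκ]; simp
  let g : (Fin k → Bool) → ℝ := fun z => 1 - ind (vec z ∈ V) / 2
  have hg0 : ∀ z, 0 ≤ g z := fun z => by have := ind_le_one (vec z ∈ V); simp only [g]; linarith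
  let e : C × Fin k → Sym2 ι := fun p => s(p.1.1, κ p.2)
  have he : Function.Injective e := by
    rintro ⟨c, i⟩ ⟨c', i'⟩ h
    simp only [e, Sym2.eq_iff] at h
    rcases h with ⟨h1, h2⟩ | ⟨h1, h2⟩
    · rw [Subtype.ext h1, hκ h2]
    · exact absurd h1 (c.2 i')
  have hev : ev (fun ω : Sym2 ι → Bool => ∏ c : C, g fun i => ω s(c.1, κ i)) =
      (1 - dens V / 2) ^ (Fintype.card ι - k) := by
    have h1 := ev_restrict (T := Bool) e he
      (fun f : C × Fin k → Bool => ∏ c : C, g fun i => f (c, i))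
    have h2 : ev g = 1 - dens V / 2 := by
      simp only [g]
      rw [ev_sub, ev_const, ev_div]; rfl
    rw [h1, ← ev_curry (fun f : C → Fin k → Bool => ∏ c : C, g (f c)),
      ev_pi_prod fun _ : C => g, prod_const, h2, card_univ, hcC]
  have hval : ∀ ω : Sym2 ι → Bool, (∏ c : C, g fun i => ω s(c.1, κ i)) =
      (1 / 2) ^ (hits (sm ω) κ V).card := by
    intro ω
    have h1 : ∀ c : C, g (fun i => ω s(c.1, κ i)) =
        if (fun i => sm ω c.1 (κ i)) ∈ V then (1 / 2 : ℝ) else 1 := by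
      intro c
      simp only [g]
      by_cases h : (fun i => sm ω c.1 (κ i)) ∈ V
      · rw [if_pos h, ind_true (show vec (fun i => ω s(c.1, κ i)) ∈ V from h)]; norm_num
      · rw [if_neg h, ind_false (show vec (fun i => ω s(c.1, κ i)) ∉ V from h)]; norm_num
    rw [prod_congr rfl fun c _ => h1 c, prod_ite, prod_const, prod_const_one, mul_one]
    congr 1
    rw [hits, ← card_map (Function.Embedding.subtype _)]
    congr 1
    ext c
    simp [C, and_comm]
  have hm := pr_le_of_markov (Ω := Sym2 ι → Bool)
    (f := fun ω => ∏ c : C, g fun i => ω s(c.1, κ i)) (a := (1 / 2) ^ H)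
    (b := 2 ^ H * (1 - dens V / 2) ^ (Fintype.card ι - k))
    (fun ω => prod_nonneg fun _ _ => hg0 _) (by positivity) (by
      rw [hev]
      apply le_of_eq
      rw [mul_right_comm, ← mul_pow]; norm_num)
  refine (pr_mono fun ω hω => ?_).trans hm
  rw [hval]
  exact pow_le_pow_of_le_one (by norm_num) (by norm_num) hω

open Real in
/-- A random symmetric sign matrix is pseudorandom with overwhelming probability. -/
theorem pr_not_PR {p : ℝ} (hp : 0 < p) (hk : 4 * k ≤ Fintype.card ι) :
    pr (fun ω : Sym2 ι → Bool => ¬ PR k p (sm ω)) ≤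
      (Fintype.card ι : ℝ) ^ k * 2 ^ (k * k) * exp (-(p * Fintype.card ι / 4)) := by
  classical
  set N : ℝ := (Fintype.card ι : ℝ) with hN
  have hkN : 4 * (k : ℝ) ≤ N := by rw [hN]; exact_mod_cast hk
  have hk0 : (0 : ℝ) ≤ k := by positivity
  let bad : (Fin k → ι) × (Fin k → Fin k → Bool) → (Sym2 ι → Bool) → Prop := fun x ω =>
    Function.Injective x.1 ∧ p ≤ dens (spn x.2) ∧
      ¬ dens (spn x.2) * N / 8 ≤ (hits (sm ω) x.1 (spn x.2)).card
  have h1 : pr (fun ω : Sym2 ι → Bool => ¬ PR k p (sm ω)) ≤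
      pr (fun ω => ∃ x ∈ (univ : Finset ((Fin k → ι) × (Fin k → Fin k → Bool))), bad x ω) := by
    refine pr_mono fun ω hω => ?_
    unfold PR at hω
    push Not at hω
    obtain ⟨κ, hκ, q, h2, h3⟩ := hω
    exact ⟨(κ, q), mem_univ _, hκ, h2, by rw [not_le]; exact h3⟩
  have h2 : ∀ x, pr (bad x) ≤ exp (-(p * N / 4)) := by
    rintro ⟨κ, q⟩
    by_cases hx : Function.Injective κ ∧ p ≤ dens (spn q)
    swap
    · refine le_trans (le_of_eq (pr_false fun ω hω => hx ⟨hω.1, hω.2.1⟩)) (exp_pos _).le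
    obtain ⟨hκ, hd⟩ := hx
    set δ := dens (spn q) with hδ
    have hδ1 : δ ≤ 1 := pr_le_one _
    have hδ0 : 0 < δ := hp.trans_le hd
    set H := ⌊δ * N / 8⌋₊ with hH
    have hHle : (H : ℝ) ≤ δ * N / 8 := Nat.floor_le (by positivity)
    have hb : pr (bad (κ, q)) ≤ 2 ^ H * (1 - δ / 2) ^ (Fintype.card ι - k) := by
      refine (pr_mono fun ω hω => ?_).trans (pr_hits κ hκ (spn q) H)
      have := hω.2.2
      rw [not_le] at this
      exact Nat.le_floor this.le
    refine hb.trans ?_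
    have h3 : (2 : ℝ) ^ H ≤ exp H := by
      rw [← exp_one_pow]
      exact pow_le_pow_left₀ (by norm_num) (by linarith [add_one_le_exp (1 : ℝ)]) _
    have h4 : (1 - δ / 2) ^ (Fintype.card ι - k) ≤ exp (-(δ / 2) * (N - k)) := by
      have h5 : (N - k) = ((Fintype.card ι - k : ℕ) : ℝ) := by
        rw [Nat.cast_sub (by omega)]
      rw [h5, mul_comm, exp_nat_mul]
      exact pow_le_pow_left₀ (by linarith) (by linarith [add_one_le_exp (-(δ / 2))]) _
    calc (2 : ℝ) ^ H * (1 - δ / 2) ^ (Fintype.card ι - k) ≤ exp H * exp (-(δ / 2) * (N - k)) :=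
          mul_le_mul h3 h4 (pow_nonneg (by linarith) _) (exp_pos _).le
      _ = exp (H + -(δ / 2) * (N - k)) := (exp_add _ _).symm
      _ ≤ exp (-(p * N / 4)) := by
          apply exp_le_exp.2
          have h6 : δ * (4 * k) ≤ δ * N := mul_le_mul_of_nonneg_left hkN hδ0.le
          have h7 : p * N ≤ δ * N := mul_le_mul_of_nonneg_right hd (by positivity)
          nlinarith
  refine h1.trans ((pr_exists_le _ _).trans ((sum_le_sum fun x _ => h2 x).trans ?_))
  rw [sum_const, card_univ, nsmul_eq_mul]
  apply le_of_eq
  simp [Fintype.card_prod, pow_mul, hN]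

end PR

/-! ### Matchings in the pattern of large entries -/

section Matching
variable {ι : Type} [Fintype ι] [DecidableEq ι]

open Classical in
/-- Greedy independent set in a conflict graph of bounded degree. -/
lemma exists_indep (X : Finset ι) (conf : ι → ι → Prop) (D : ℕ)
    (h : ∀ x ∈ X, (X.filter fun x' => conf x x' ∨ conf x' x).card ≤ D) :
    ∃ S ⊆ X, X.card ≤ (D + 1) * S.card ∧ ∀ x ∈ S, ∀ x' ∈ S, x ≠ x' → ¬ conf x x' := by
  let fam := X.powerset.filter fun S => ∀ x ∈ S, ∀ x' ∈ S, x ≠ x' → ¬ conf x x'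
  obtain ⟨S, hS, hmax⟩ := exists_max_image fam card ⟨∅, by simp [fam]⟩
  simp only [fam, mem_filter, mem_powerset] at hS hmax
  refine ⟨S, hS.1, ?_, hS.2⟩
  have hsub : X ⊆ S.biUnion fun x => insert x (X.filter fun x' => conf x x' ∨ conf x' x) := by
    intro z hz
    by_contra hcon
    simp only [mem_biUnion, mem_insert, mem_filter, not_exists, not_and, not_or] at hcon
    have hzS : z ∉ S := fun hzS => (hcon z hzS).1 rfl
    have := hmax (insert z S) ⟨insert_subset hz hS.1, ?_⟩
    · rw [card_insert_of_notMem hzS] at this; omega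
    · intro x hx x' hx' hne
      rw [mem_insert] at hx hx'
      rcases hx with rfl | hx <;> rcases hx' with rfl | hx'
      · exact absurd rfl hne
      · exact ((hcon x' hx').2 hz).2
      · exact ((hcon x hx).2 hz).1
      · exact hS.2 x hx x' hx' hne
  refine (card_le_card hsub).trans (card_biUnion_le.trans ?_)
  rw [mul_comm, ← smul_eq_mul, ← sum_const]
  exact sum_le_sum fun x hx => (card_insert_le _ _).trans (Nat.succ_le_succ (h x (hS.1 hx)))

open Classical in
/-- The rows of `P` with at least `k` entries of absolute value at least `t`. -/
noncomputable def heavy (P : ι → ι → ℝ) (t : ℝ) (k : ℕ) : Finset ι :=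
  univ.filter fun c => k ≤ (univ.filter fun b => t ≤ |P c b|).card

open Classical in
/-- The light rows with an entry of size at least `τ` in a light column. -/
noncomputable def linked (P : ι → ι → ℝ) (t τ : ℝ) (k : ℕ) : Finset ι :=
  univ.filter fun c => c ∉ heavy P t k ∧ ∃ b, b ∉ heavy P t k ∧ τ ≤ |P c b|

open Classical in
lemma not_heavy {P : ι → ι → ℝ} {t : ℝ} {k : ℕ} {c : ι} (h : c ∉ heavy P t k) :
    (univ.filter fun b => t ≤ |P c b|).card < k := by
  simpa [heavy] using h

open Classical in
/-- Many linked rows contain a large family of pairs `(f b, b)` of large entries with no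
interaction between different pairs. -/
theorem exists_matching {P : ι → ι → ℝ} (hP : ∀ i j, P i j = P j i) {t τ : ℝ} (ht : t ≤ τ)
    {k L : ℕ} (hX : ((k + 1) ^ 2 + 1) * L ≤ (linked P t τ k).card) :
    ∃ (S : Finset ι) (f : ι → ι), L ≤ S.card ∧ (∀ b ∈ S, τ ≤ |P (f b) b|) ∧
      ∀ b ∈ S, ∀ b' ∈ S, b ≠ b' → |P (f b) b'| < t ∧ f b ≠ b' := by
  set H := heavy P t k
  set X := linked P t τ k
  have hch : ∀ b : ι, ∃ c, b ∈ X → c ∉ H ∧ τ ≤ |P c b| := by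
    intro b
    by_cases hb : b ∈ X
    · obtain ⟨c, hc1, hc2⟩ := (mem_filter.1 hb).2.2
      exact ⟨c, fun _ => ⟨hc1, by rw [hP]; exact hc2⟩⟩
    · exact ⟨b, fun h => absurd h hb⟩
  choose f hf using hch
  have hdeg : ∀ b ∈ X, (X.filter fun b' => (t ≤ |P (f b) b'| ∨ f b = b') ∨
      (t ≤ |P (f b') b| ∨ f b' = b)).card ≤ (k + 1) ^ 2 := by
    intro b hb
    have hbH : b ∉ H := (mem_filter.1 hb).2.1
    have hsub : (X.filter fun b' => (t ≤ |P (f b) b'| ∨ f b = b') ∨ (t ≤ |P (f b') b| ∨ f b' = b)) ⊆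
        ((univ.filter fun b' => t ≤ |P (f b) b'|) ∪ {f b}) ∪
        (((univ.filter fun c => t ≤ |P b c|).biUnion fun c => X.filter fun b' => f b' = c) ∪
          (univ.filter fun b' => t ≤ |P b b'|)) := by
      intro b' hb'
      rw [mem_filter] at hb'
      obtain ⟨hbX, hcase⟩ := hb'
      simp only [mem_union, mem_filter, mem_univ, true_and, mem_singleton, mem_biUnion]
      rcases hcase with (h | h) | (h | h)
      · exact Or.inl (Or.inl h)
      · exact Or.inl (Or.inr h.symm)
      · exact Or.inr (Or.inl ⟨f b', by rw [hP]; exact h, hbX, rfl⟩)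
      · refine Or.inr (Or.inr ?_)
        rw [← h]
        exact ht.trans (hf b' hbX).2
    have h1 := not_heavy (hf b hb).1
    have h2 := not_heavy hbH
    have h3 : ((univ.filter fun c => t ≤ |P b c|).biUnion fun c => X.filter fun b' => f b' = c).card ≤
        k * k := by
      refine card_biUnion_le.trans ?_
      refine (sum_le_sum fun c _ => show (X.filter fun b' => f b' = c).card ≤ k from ?_).trans ?_
      · rcases (X.filter fun b' => f b' = c).eq_empty_or_nonempty with h0 | ⟨b', hb'⟩
        · rw [h0]; simp
        · rw [mem_filter] at hb'
          have hc : c ∉ H := hb'.2 ▸ (hf b' hb'.1).1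
          refine (card_le_card fun d hd => ?_).trans (not_heavy hc).le
          rw [mem_filter] at hd ⊢
          exact ⟨mem_univ _, hd.2 ▸ ht.trans (hf d hd.1).2⟩
      · rw [sum_const, smul_eq_mul]; exact Nat.mul_le_mul_right _ h2.le
    refine (card_le_card hsub).trans ((card_union_le _ _).trans ?_)
    have h4 := card_union_le (univ.filter fun b' => t ≤ |P (f b) b'|) {f b}
    have h5 := card_union_le ((univ.filter fun c => t ≤ |P b c|).biUnion
      fun c => X.filter fun b' => f b' = c) (univ.filter fun b' => t ≤ |P b b'|)
    rw [card_singleton] at h4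
    nlinarith
  obtain ⟨S, hSX, hcard, hind⟩ := exists_indep X (fun b b' => t ≤ |P (f b) b'| ∨ f b = b')
    ((k + 1) ^ 2) (by convert hdeg)
  refine ⟨S, f, ?_, fun b hb => (hf b (hSX hb)).2, fun b hb b' hb' hne => ?_⟩
  · exact Nat.le_of_mul_le_mul_left (hX.trans hcard) (by positivity)
  · have := hind b hb b' hb' hne
    push Not at this
    exact this

open Classical in
/-- A light row which is not linked is small outside the heavy columns. -/
lemma row_small {P : ι → ι → ℝ} {t τ : ℝ} (ht : 0 ≤ t) (hτ : 0 ≤ τ) {k : ℕ} {c : ι}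
    (hc : c ∉ heavy P t k) (hc' : c ∉ linked P t τ k) (K : Finset ι) (hK : heavy P t k ⊆ K) :
    ∑ b ∈ Kᶜ, |P c b| ≤ Fintype.card ι * t + k * τ := by
  have h1 : ∀ b ∈ Kᶜ, |P c b| ≤ t + τ * if t ≤ |P c b| then 1 else 0 := by
    intro b hb
    have hbH : b ∉ heavy P t k := fun h => (mem_compl.1 hb) (hK h)
    split_ifs with h
    · have : |P c b| < τ := by
        by_contra hcon
        exact hc' (mem_filter.2 ⟨mem_univ _, hc, b, hbH, not_lt.1 hcon⟩)
      linarith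
    · linarith
  refine (sum_le_sum h1).trans ?_
  rw [sum_add_distrib, sum_const, nsmul_eq_mul, ← mul_sum, sum_boole]
  have h2 : ((Kᶜ.card : ℕ) : ℝ) ≤ Fintype.card ι := by exact_mod_cast card_le_univ _
  have h3 : (((Kᶜ.filter fun b => t ≤ |P c b|).card : ℕ) : ℝ) ≤ k := by
    exact_mod_cast (card_le_card (filter_subset_filter _ (subset_univ _))).trans (not_heavy hc).le
  have h4 := mul_le_mul_of_nonneg_right h2 ht
  have h5 := mul_le_mul_of_nonneg_right h3 hτ
  linarith

end Matching

/-! ### Most rows of the cofactor matrix see a random sign vector -/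

section RowSpread
variable {ι : Type} [Fintype ι] [DecidableEq ι]

lemma exists_enum (K : Finset ι) {k : ℕ} (hK : K.card = k) :
    ∃ κ : Fin k → ι, Function.Injective κ ∧ (∀ c, (∀ a, c ≠ κ a) ↔ c ∉ K) ∧
      ∀ g : ι → ℝ, ∑ a, g (κ a) = ∑ i ∈ K, g i := by
  let e := K.equivFinOfCardEq hK
  refine ⟨fun a => (e.symm a).1, fun a b h => e.symm.injective (Subtype.ext h), fun c => ?_, fun g => ?_⟩
  · constructor
    · intro h hc
      exact h (e ⟨c, hc⟩) (by simp)
    · intro h a hc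
      exact h (hc ▸ (e.symm a).2)
  · rw [← sum_coe_sort K g]
    exact Equiv.sum_comp e.symm fun x : K => g x.1

lemma abs_sum_mul_le (s : Finset ι) (f g : ι → ℝ) (hg : ∀ i, |g i| ≤ 1) :
    |∑ i ∈ s, f i * g i| ≤ ∑ i ∈ s, |f i| := by
  refine (abs_sum_le_sum_abs _ _).trans (sum_le_sum fun i _ => ?_)
  rw [abs_mul]
  exact mul_le_of_le_one_right (abs_nonneg _) (hg i)

open Classical in
/-- For a symmetric `P` satisfying the Laplace identities of a pseudorandom sign matrix `A`, a
random sign vector has many inner products with rows of `P` that are not small. -/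
theorem row_spread {A : Matrix ι ι ℝ} {P : ι → ι → ℝ} (hA : ∀ i j, |A i j| ≤ 1) (hP : ∀ i j, P i j = P j i)
    (hlap : ∀ c, ∑ j, A c j * P c j = 1) {k L s : ℕ} {p β τ τ2 : ℝ} (hk : 0 < k)
    (hkN : k ≤ Fintype.card ι) (hs : 2 * s ≤ k) (hsL : 4 * s ≤ L) (hL : 0 < L) (hp : 0 < p)
    (hpβ : p ≤ β) (hkβ : 2 / √k ≤ β) (hLβ : 4 / L ≤ β) (hPR : PR k p A) (hτ : 0 < τ) (hτ2 : 0 < τ2)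
    (hN : Fintype.card ι * τ2 ≤ τ / 4)
    (h1 : (k : ℝ) ^ (2 * k + 1) * (τ2 + (Fintype.card ι * τ2 + k * τ)) +
      (Fintype.card ι * τ2 + k * τ) < 1)
    (h2 : (k * (s + ((k + 1) ^ 2 + 1) * L) + ((k + 1) ^ 2 + 1) * L : ℕ) < p * Fintype.card ι / 8) :
    pr (fun y : ι → Bool =>
      (univ.filter fun c => τ2 ≤ |∑ i, P c i * rad (y i)|).card < s) ≤ β := by
  have hN1 : (1 : ℝ) ≤ Fintype.card ι := by exact_mod_cast hk.trans_le hkN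
  have hτ2τ : τ2 ≤ τ / 4 := le_trans (by nlinarith) hN
  by_cases hH : k ≤ (heavy P τ2 k).card
  · have := spread_many (heavy P τ2 k) P hτ2 (k := k) (j := s) hk
      (fun l hl => by simpa [heavy] using hl) (hs.trans hH) 0
    refine le_trans (pr_mono fun y hy => ?_) (this.trans hkβ)
    refine lt_of_le_of_lt (card_le_card fun l hl => ?_) hy
    simpa using (mem_filter.1 hl).2
  by_cases hX : ((k + 1) ^ 2 + 1) * L ≤ (linked P τ2 τ k).card
  · obtain ⟨S, f, hSL, hSd, hSo⟩ := exists_matching hP (by linarith) hX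
    have hSN : (S.card : ℝ) ≤ Fintype.card ι := by exact_mod_cast card_le_univ _
    have := spread_coins S (fun b => P (f b)) hτ hSd (fun l hl l' hl' hne => (hSo l hl l' hl' hne).1.le)
      (le_trans (by nlinarith) hN) hτ2.le (hsL.trans hSL) 0
    refine le_trans (pr_mono fun y hy => ?_) (this.trans (le_trans ?_ hLβ))
    · refine lt_of_le_of_lt ?_ hy
      refine card_le_card_of_injOn f (fun l hl => ?_) fun l hl l' hl' hff => ?_
      · have := (mem_filter.1 hl).2
        simp only [Pi.zero_apply, sub_zero] at this
        simp only [coe_filter, mem_univ, true_and, Set.mem_ofPred_eq]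
        linarith
      · by_contra hne
        have h3 := (hSo l (mem_filter.1 hl).1 l' (mem_filter.1 hl').1 hne).1
        have h4 := hSd l' (mem_filter.1 hl').1
        rw [hff] at h3
        linarith
    · have : (L : ℝ) ≤ S.card := by exact_mod_cast hSL
      have : (0 : ℝ) < L := by exact_mod_cast hL
      gcongr
  by_contra hcon
  rw [not_le] at hcon hH hX
  obtain ⟨K, hHK, hKk⟩ := exists_superset_card_eq hH.le hkN
  obtain ⟨κ, hκ, hκK, hκs⟩ := exists_enum K hKk
  set bad : (ι → Bool) → Prop := fun y =>
    (univ.filter fun c => τ2 ≤ |∑ i, P c i * rad (y i)|).card < s with hbad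
  set η : ℝ := Fintype.card ι * τ2 + k * τ with hη
  set Q : (Fin k → Bool) → Prop := fun z => ∃ y, (fun a => y (κ a)) = z ∧ bad y
  have hrow : ∀ c ∉ K, c ∉ linked P τ2 τ k → ∑ b ∈ Kᶜ, |P c b| ≤ η := fun c hc hc' =>
    row_small hτ2.le hτ.le (fun h => hc (hHK h)) hc' K hHK
  have hQb : pr bad ≤ pr Q := by
    have h3 : pr (fun y : ι → Bool => Q fun a => y (κ a)) = pr Q :=
      ev_restrict κ hκ fun z => ind (Q z)
    rw [← h3]
    exact pr_mono fun y hy => ⟨y, rfl, hy⟩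
  have hstar := star (u := fun c a => P c (κ a)) (τ := τ2 + η) hk hp hA hPR κ hκ
    (s + ((k + 1) ^ 2 + 1) * L) Q (by linarith) ?_
  · have h5 : p * Fintype.card ι / 8 ≤ pr Q * Fintype.card ι / 8 := by
      have : p ≤ pr Q := by linarith
      gcongr
    have h6 := (h2.trans_le h5).trans_le hstar
    have h7 : (linked P τ2 τ k).card < (univ.filter fun c => (∀ i, c ≠ κ i) ∧
      |∑ a, P c (κ a) * A c (κ a)| ≤ (k : ℝ) ^ (2 * k + 1) * (τ2 + η)).card := by
      refine hX.trans ?_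
      have h8 : ((k * (s + ((k + 1) ^ 2 + 1) * L) + ((k + 1) ^ 2 + 1) * L : ℕ) : ℝ) <
        ((univ.filter fun c => (∀ i, c ≠ κ i) ∧
          |∑ a, P c (κ a) * A c (κ a)| ≤ (k : ℝ) ^ (2 * k + 1) * (τ2 + η)).card +
            k * (s + ((k + 1) ^ 2 + 1) * L) : ℕ) := by
        refine h6.trans_le (le_of_eq ?_)
        push_cast
        rfl
      have h9 := Nat.cast_lt.1 h8
      omega
    obtain ⟨c, hc, hcX⟩ := exists_mem_notMem_of_card_lt_card h7
    rw [mem_filter, hκK, hκs fun i => P c i * A c i] at hc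
    have h10 := hrow c hc.2.1 hcX
    have h11 := abs_sum_mul_le Kᶜ (P c) (A c) (hA c)
    have h12 := hlap c
    rw [← sum_add_sum_compl K] at h12
    simp only [mul_comm (A c _)] at h12
    have h13 := le_abs_self (∑ i ∈ K, P c i * A c i)
    have h14 := le_abs_self (∑ i ∈ Kᶜ, P c i * A c i)
    linarith [hc.2.2]
  · rintro z ⟨y, rfl, hy⟩
    have hsub : (univ.filter fun c => (∀ i, c ≠ κ i) ∧ τ2 + η < |∑ a, P c (κ a) * rad (y (κ a))|) ⊆
        (univ.filter fun c => τ2 ≤ |∑ i, P c i * rad (y i)|) ∪ linked P τ2 τ k := by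
      intro c hc
      rw [mem_filter, hκK, hκs fun i => P c i * rad (y i)] at hc
      rw [mem_union]
      by_cases hcX : c ∈ linked P τ2 τ k
      · exact Or.inr hcX
      · refine Or.inl (mem_filter.2 ⟨mem_univ _, ?_⟩)
        have h10 := hrow c hc.2.1 hcX
        have h11 := abs_sum_mul_le Kᶜ (P c) (fun i => rad (y i)) (fun i => (rad_abs _).le)
        rw [← sum_add_sum_compl K]
        have := abs_sub_abs_le_abs_sub (∑ i ∈ K, P c i * rad (y i)) (-∑ i ∈ Kᶜ, P c i * rad (y i))
        rw [abs_neg, sub_neg_eq_add] at this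
        linarith [hc.2.2]
    refine (card_le_card hsub).trans ((card_union_le _ _).trans ?_)
    have : (univ.filter fun c => τ2 ≤ |∑ i, P c i * rad (y i)|).card < s := hy
    omega

end RowSpread

/-! ### Small ball estimate for the quadratic form of the cofactor matrix -/

section Quadratic
variable {ι : Type} [Fintype ι] [DecidableEq ι]

open Classical in
lemma Spread.image {S : Finset ι} {r : ι → ι → ℝ} {f : ι → ι} {σ b : ℝ} {j : ℕ}
    (hf : Set.InjOn f S) (h : Spread S (fun l => r (f l)) σ j b) : Spread (S.image f) r σ j b := by
  intro x
  refine (pr_mono fun y hy => ?_).trans (h fun l => x (f l))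
  refine lt_of_le_of_lt (card_le_card_of_injOn f (fun l hl => ?_) (hf.mono ?_)) hy
  · have hl' := mem_filter.1 hl
    exact mem_coe.2 (mem_filter.2 ⟨mem_image_of_mem f hl'.1, hl'.2⟩)
  · exact fun l hl => (mem_filter.1 hl).1

open Classical in
/-- Decoupling: by Cauchy–Schwarz over the coordinates in `J`, the small ball probability of a
quadratic form is bounded through the spread of the rows indexed by `J`, restricted to the
columns outside `J`. -/
theorem decouple {P : ι → ι → ℝ} (hP : ∀ i j, P i j = P j i) (J : Finset ι) {σ b : ℝ} {j : ℕ}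
    (hσ : 0 < σ) (hj : 0 < j) (h : Spread J (fun a i => if i ∈ J then 0 else P a i) σ j b) (x : ℝ) :
    pr (fun y : ι → Bool => |x + offq univ P (fun i => rad (y i))| < σ) ^ 2 ≤ b + 1 / √j := by
  set C : (ι → Bool) → ι → ℝ := fun v a => ∑ i ∈ Jᶜ, rad (v i) * (2 * P i a) with hC
  set D : (ι → Bool) → (ι → Bool) → ℝ := fun v u => offq Jᶜ P (fun i => rad (v i)) +
    (∑ a ∈ J, rad (u a) * C v a) + offq J P (fun i => rad (u i)) with hD
  have hbad : pr (fun y : ι → Bool => |x + offq univ P (fun i => rad (y i))| < σ) =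
      ev fun u => pr fun v => |x + D v u| < σ := by
    rw [pr_resample J]
    unfold pr
    rw [ev_comm]
    refine ev_congr fun u => ev_congr fun v => ?_
    have : offq univ P (fun i => rad (J.piecewise u v i)) = D v u := by
      rw [offq_split J P hP]
      rw [offq_congr (s := Jᶜ) (z' := fun i => rad (v i)) (fun i hi => by
        rw [piecewise_eq_of_notMem _ _ _ (mem_compl.1 hi)]),
        offq_congr (s := J) (z' := fun i => rad (u i)) (fun i hi => by
        rw [piecewise_eq_of_mem _ _ _ hi])]
      simp only [hD, hC]
      congr 2
      refine sum_congr rfl fun a ha => ?_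
      rw [piecewise_eq_of_mem _ _ _ ha]
      congr 1
      refine sum_congr rfl fun i hi => ?_
      rw [piecewise_eq_of_notMem _ _ _ (mem_compl.1 hi)]
    beta_reduce
    rw [this]
  rw [hbad]
  have hstep : (ev fun u => pr fun v => |x + D v u| < σ) ^ 2 ≤
      ev fun v' => ev fun v => pr fun u => |D v u - D v' u| < 2 * σ := by
    refine (ev_sq_le _).trans ?_
    have h1 : ∀ u, (pr fun v => |x + D v u| < σ) ^ 2 ≤
        ev fun v' => ev fun v => ind (|D v u - D v' u| < 2 * σ) := by
      intro u
      rw [sq]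
      nth_rewrite 1 [pr]
      rw [← ev_mul_right]
      refine ev_mono fun v' => ?_
      unfold pr
      rw [← ev_mul_left]
      refine ev_mono fun v => ?_
      by_cases ha : |x + D v' u| < σ
      · rw [ind_true ha, one_mul]
        refine ind_mono fun hb => ?_
        have ha' := abs_lt.1 ha
        have hb' := abs_lt.1 hb
        rw [abs_lt]
        constructor <;> linarith [ha'.1, ha'.2, hb'.1, hb'.2]
      · rw [ind_false ha, zero_mul]; exact ind_nonneg _
    refine (ev_mono h1).trans (le_of_eq ?_)
    unfold pr
    rw [ev_comm]
    exact ev_congr fun v' => ev_comm _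
  refine hstep.trans ?_
  have hfin : ∀ v', (ev fun v => pr fun u => |D v u - D v' u| < 2 * σ) ≤ b + 1 / √j := by
    intro v'
    have hCr : ∀ v a, C v a = 2 * ∑ i, (if i ∈ J then 0 else P a i) * rad (v i) := by
      intro v a
      simp only [hC, mul_sum]
      rw [← sum_subset (subset_univ Jᶜ)]
      · refine sum_congr rfl fun i hi => ?_
        rw [if_neg (mem_compl.1 hi), hP i a]; ring
      · intro i _ hi
        rw [if_pos (by simpa using hi)]; ring
    refine (ev_pr_le _ (fun v => (J.filter fun l => σ ≤
      |∑ i, (if i ∈ J then 0 else P l i) * rad (v i) - C v' l / 2|).card < j) (1 / √j)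
      (by positivity) fun v hv => ?_).trans (add_le_add (h fun l => C v' l / 2) le_rfl)
    rw [not_lt] at hv
    have hlo := lo (fun a => if a ∈ J then C v a - C v' a else 0) (τ := 2 * σ) (by linarith) _ hj hv
      (fun a ha => by
        rw [mem_filter] at ha
        simp only [if_pos ha.1]
        have : C v a - C v' a = 2 * (∑ i, (if i ∈ J then 0 else P a i) * rad (v i) - C v' a / 2) := by
          rw [hCr v a]; ring
        rw [this, abs_mul, abs_two]
        linarith [ha.2])
      (-(offq Jᶜ P (fun i => rad (v i)) - offq Jᶜ P (fun i => rad (v' i))))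
    refine le_trans (le_of_eq (pr_congr fun u => ?_)) hlo
    have : D v u - D v' u = ∑ i, (if i ∈ J then C v i - C v' i else 0) * rad (u i) -
        -(offq Jᶜ P (fun i => rad (v i)) - offq Jᶜ P (fun i => rad (v' i))) := by
      simp only [hD, ite_mul, zero_mul]
      rw [sum_ite_mem, univ_inter]
      have : ∑ a ∈ J, (C v a - C v' a) * rad (u a) =
          ∑ a ∈ J, rad (u a) * C v a - ∑ a ∈ J, rad (u a) * C v' a := by
        rw [← sum_sub_distrib]
        exact sum_congr rfl fun a _ => by ring
      rw [this]; ring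
    rw [this]
  have hne : Nonempty (ι → Bool) := inferInstance
  refine (ev_mono hfin).trans (le_of_eq (ev_const _))

lemma offq_abs_le (K : Finset ι) (P : ι → ι → ℝ) (y : ι → Bool) {η : ℝ} (hη : 0 ≤ η)
    (h : ∀ c ∈ K, ∑ b ∈ K, |P c b| ≤ η) :
    |offq K P (fun i => rad (y i))| ≤ Fintype.card ι * η := by
  unfold offq
  refine (abs_sum_le_sum_abs _ _).trans ?_
  have h1 : ∀ c ∈ K, |∑ j ∈ K, if c = j then 0 else rad (y c) * rad (y j) * P c j| ≤ η := by
    intro c hc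
    refine ((abs_sum_le_sum_abs _ _).trans (sum_le_sum fun j _ => ?_)).trans (h c hc)
    split_ifs
    · simp
    · rw [abs_mul, abs_mul, rad_abs, rad_abs]; simp
  refine (sum_le_sum h1).trans ?_
  rw [sum_const, nsmul_eq_mul]
  have : (K.card : ℝ) ≤ Fintype.card ι := by exact_mod_cast card_le_univ _
  gcongr

open Classical in
/-- The indices `c` whose row of `P` has fewer than `s` off-diagonal entries comparable to the
diagonal entry, the latter being nonzero. -/
noncomputable def atyp (P : ι → ι → ℝ) (l : ℝ) (s : ℕ) : Finset ι :=
  univ.filter fun c => P c c ≠ 0 ∧ (univ.filter fun b => b ≠ c ∧ l * |P c c| ≤ |P c b|).card < s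

open Classical in
/-- Small ball estimate for the quadratic form of a symmetric matrix `P` satisfying the Laplace
identities of a pseudorandom sign matrix and having few atypical rows. -/
theorem quad_small {A : Matrix ι ι ℝ} {P : ι → ι → ℝ} (hA : ∀ i j, |A i j| ≤ 1) (hP : ∀ i j, P i j = P j i)
    (hlap : ∀ c, ∑ j, A c j * P c j = 1) {k k' L j j0 e s : ℕ} {p β l1 l τ t : ℝ}
    (hj0 : 0 < j0) (hj : 2 * j0 ≤ j) (hL : 4 * j0 ≤ L) (hk' : j < k') (he : 0 < e)
    (hk : j + ((k' + 1) ^ 2 + 1) * L ≤ k) (hkN : k ≤ Fintype.card ι) (hjs : j ≤ s)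
    (hp : 0 < p) (hPR : PR k p A) (hβ : 0 ≤ β)
    (hb1 : 2 / √((k' - j : ℕ) : ℝ) + 1 / √j0 ≤ β ^ 2) (hb2 : 4 / L + 1 / √j0 ≤ β ^ 2)
    (hb3 : 1 / √e ≤ β / 2) (hb4 : p ≤ β / 2)
    (ht : 0 < t) (hτ : 0 < τ) (hl : l ≤ t) (hN : Fintype.card ι * t ≤ τ / 4) (hτl : τ ≤ l1 / 2)
    (h1 : (k : ℝ) ^ (2 * k + 1) * (t + Fintype.card ι * (Fintype.card ι * t + k' * τ)) +
      (Fintype.card ι * t + k' * τ) ≤ 1 / 2)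
    (h2 : (atyp P l1 s).card + k * e < β / 2 * Fintype.card ι / 8) (x : ℝ) :
    pr (fun y : ι → Bool => |x + offq univ P (fun i => rad (y i))| < l) ≤ β := by
  have hk0 : 0 < k := by omega
  have hN1 : (1 : ℝ) ≤ Fintype.card ι := by exact_mod_cast hk0.trans_le hkN
  have htτ : t ≤ τ / 4 := le_trans (by nlinarith) hN
  set P' : ι → ι → ℝ := fun i j => if i = j then 0 else P i j with hP'd
  have hP' : ∀ i j, P' i j = P' j i := fun i j => by
    simp only [hP'd, eq_comm (a := i), hP i j]
  have hoff : ∀ z, offq univ P z = offq univ P' z := fun z => by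
    unfold offq
    refine sum_congr rfl fun i _ => sum_congr rfl fun j _ => ?_
    split_ifs with h
    · rfl
    · simp [hP'd, h]
  simp only [hoff]
  have hsq : ∀ q : ℝ, q ^ 2 ≤ β ^ 2 → q ≤ β := fun q hq => le_of_sq_le_sq hq hβ
  by_cases hH : j ≤ (heavy P' t k').card
  · obtain ⟨J, hJH, hJ⟩ := exists_subset_card_eq hH
    have hsp := spread_many J (fun a i => if i ∈ J then 0 else P' a i) ht (k := k' - j) (j := j0)
      (by omega) (fun c hc => ?_) (by omega)
    · refine hsq _ ((pow_le_pow_left₀ (pr_nonneg _) (pr_mono fun y hy => ?_) 2).trans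
        ((decouple hP' J ht hj0 hsp x).trans hb1))
      exact lt_of_lt_of_le hy hl
    · have h3 : k' ≤ (univ.filter fun b => t ≤ |P' c b|).card := by simpa [heavy] using hJH hc
      have h4 : (univ.filter fun b => t ≤ |P' c b|) ⊆
          (univ.filter fun i => t ≤ |if i ∈ J then 0 else P' c i|) ∪ J := by
        intro b hb
        by_cases hbJ : b ∈ J
        · exact mem_union_right _ hbJ
        · refine mem_union_left _ (mem_filter.2 ⟨mem_univ _, ?_⟩)
          rw [if_neg hbJ]; exact (mem_filter.1 hb).2
      have h5 := (card_le_card h4).trans (card_union_le _ _)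
      omega
  by_cases hX : ((k' + 1) ^ 2 + 1) * L ≤ (linked P' t τ k').card
  · obtain ⟨S, f, hSL, hSd, hSo⟩ := exists_matching hP' (by linarith) hX
    have hSN : (S.card : ℝ) ≤ Fintype.card ι := by exact_mod_cast card_le_univ _
    have hinj : Set.InjOn f S := by
      intro b hb b' hb' hff
      by_contra hne
      have h3 := (hSo b hb b' hb' hne).1
      have h4 := hSd b' hb'
      rw [hff] at h3
      linarith
    have hnot : ∀ b ∈ S, b ∉ S.image f := by
      intro b hb hmem
      obtain ⟨b', hb', hfb⟩ := mem_image.1 hmem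
      by_cases hbb : b' = b
      · have := hSd b' hb'
        rw [hfb, hbb] at this
        simp only [hP'd, if_true, abs_zero] at this
        linarith
      · exact (hSo b' hb' b hb hbb).2 hfb
    have hsp := spread_coins S (fun b i => if i ∈ S.image f then 0 else P' (f b) i) (j := j0)
      (τ2 := t) hτ
      (fun b hb => by simp only [if_neg (hnot b hb)]; exact hSd b hb)
      (fun b hb b' hb' hne => by
        simp only [if_neg (hnot b' hb')]; exact (hSo b hb b' hb' hne).1.le)
      (le_trans (by nlinarith) hN) ht.le (hL.trans hSL)
    have hsp2 := Spread.image (r := fun a i => if i ∈ S.image f then 0 else P' a i) hinj hsp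
    have hd := decouple hP' (S.image f) (by linarith) hj0 hsp2 x
    refine hsq _ ((pow_le_pow_left₀ (pr_nonneg _) (pr_mono fun y hy => ?_) 2).trans
        (hd.trans (le_trans ?_ hb2)))
    · exact lt_of_lt_of_le hy (by linarith)
    · have : (L : ℝ) ≤ S.card := by exact_mod_cast hSL
      have : (0 : ℝ) < L := by exact_mod_cast (by omega : 0 < L)
      gcongr
  by_contra hcon
  rw [not_le] at hcon hH hX
  have hKc : (heavy P' t k' ∪ linked P' t τ k').card ≤ k := (card_union_le _ _).trans (by omega)
  obtain ⟨K, hHK, hKk⟩ := exists_superset_card_eq hKc hkN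
  obtain ⟨κ, hκ, hκK, hκs⟩ := exists_enum K hKk
  set η : ℝ := Fintype.card ι * t + k' * τ with hη
  have hη0 : 0 ≤ η := by positivity
  set τ3 : ℝ := t + Fintype.card ι * η with hτ3
  have hτ30 : 0 < τ3 := by positivity
  have hcH : ∀ c ∉ K, c ∉ heavy P' t k' := fun c hc h => hc (hHK (mem_union_left _ h))
  have hcX : ∀ c ∉ K, c ∉ linked P' t τ k' := fun c hc h => hc (hHK (mem_union_right _ h))
  have hrow : ∀ c ∉ K, ∑ b ∈ Kᶜ, |P' c b| ≤ η := fun c hc =>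
    row_small ht.le hτ.le (hcH c hc) (hcX c hc) K (subset_union_left.trans hHK)
  set Q : (Fin k → Bool) → Prop := fun z =>
    (univ.filter fun c => (∀ i, c ≠ κ i) ∧ τ3 < |∑ a, P c (κ a) * rad (z a)|).card ≤ e with hQ
  have hQP : pr (fun y : ι → Bool => |x + offq univ P' (fun i => rad (y i))| < l) ≤
      pr Q + 1 / √e := by
    have h3 : pr (fun y : ι → Bool => Q fun a => y (κ a)) = pr Q :=
      ev_restrict κ hκ fun z => ind (Q z)
    rw [pr_resample Kᶜ, ← h3]
    refine ev_pr_le _ _ _ (by positivity) fun y hy => ?_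
    have hy' := (not_le.1 hy).le
    have hlo := lo (fun c => if c ∈ K then 0 else 2 * ∑ i ∈ K, P c i * rad (y i)) hτ30 _ he hy'
      (fun c hc => by
        rw [mem_filter, hκK, hκs fun i => P c i * rad (y i)] at hc
        simp only [if_neg hc.2.1, abs_mul, abs_two]
        linarith [hc.2.2])
      (-(x + offq K P' (fun i => rad (y i))))
    refine (pr_mono fun y' hy' => ?_).trans hlo
    rw [offq_split Kᶜ P' hP', compl_compl] at hy'
    rw [offq_congr (s := K) (z' := fun i => rad (y i)) (fun i hi => by
        rw [piecewise_eq_of_notMem _ _ _ (by simpa using hi)]),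
        offq_congr (s := Kᶜ) (z' := fun i => rad (y' i)) (fun i hi => by
        rw [piecewise_eq_of_mem _ _ _ hi])] at hy'
    have h4 := offq_abs_le Kᶜ P' y' hη0 fun c hc => hrow c (mem_compl.1 hc)
    have h5 : ∑ c ∈ Kᶜ, rad (Kᶜ.piecewise y' y c) * ∑ i ∈ K, rad (Kᶜ.piecewise y' y i) * (2 * P' i c) =
        ∑ c, (if c ∈ K then 0 else 2 * ∑ i ∈ K, P c i * rad (y i)) * rad (y' c) := by
      rw [← sum_subset (subset_univ Kᶜ)]
      · refine sum_congr rfl fun c hc => ?_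
        rw [if_neg (mem_compl.1 hc), piecewise_eq_of_mem _ _ _ hc, mul_comm (rad _), mul_sum]
        congr 1
        refine sum_congr rfl fun i hi => ?_
        rw [piecewise_eq_of_notMem _ _ _ (by simpa using hi)]
        have : i ≠ c := fun h => (mem_compl.1 hc) (h ▸ hi)
        simp only [hP'd, if_neg this]
        rw [hP i c]; ring
      · intro c _ hc
        rw [if_pos (by simpa using hc), zero_mul]
    rw [h5] at hy'
    rw [abs_lt] at hy' ⊢
    rw [abs_le] at h4
    constructor <;> linarith [h4.1, h4.2, hy'.1, hy'.2]
  have hQp : β / 2 ≤ pr Q := by linarith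
  have hstar := star (u := fun c a => P c (κ a)) (τ := τ3) hk0 hp hA hPR κ hκ e Q (by linarith)
    fun z hz => hz
  have h5 : β / 2 * Fintype.card ι / 8 ≤ pr Q * Fintype.card ι / 8 := by gcongr
  have hsub : (univ.filter fun c => (∀ i, c ≠ κ i) ∧
      |∑ a, P c (κ a) * A c (κ a)| ≤ (k : ℝ) ^ (2 * k + 1) * τ3) ⊆ atyp P l1 s := by
    intro c hc
    rw [mem_filter, hκK, hκs fun i => P c i * A c i] at hc
    have hcK := hc.2.1
    have h10 := hrow c hcK
    have hdiag : 1 / 2 ≤ |P c c| := by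
      have h11 := abs_sum_mul_le Kᶜ (P' c) (A c) (hA c)
      have h12 := hlap c
      rw [← sum_add_sum_compl K] at h12
      simp only [mul_comm (A c _)] at h12
      have h15 : ∑ i ∈ Kᶜ, P c i * A c i = P c c * A c c + ∑ i ∈ Kᶜ, P' c i * A c i := by
        have : ∀ i, P c i * A c i = (if c = i then P c c * A c c else 0) + P' c i * A c i := by
          intro i
          simp only [hP'd]
          split_ifs with h
          · subst h; ring
          · ring
        rw [sum_congr rfl fun i _ => this i, sum_add_distrib, sum_ite_eq, if_pos (mem_compl.2 hcK)]
      have h13 := le_abs_self (∑ i ∈ K, P c i * A c i)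
      have h14 := le_abs_self (∑ i ∈ Kᶜ, P' c i * A c i)
      have h16 : P c c * A c c ≤ |P c c| := by
        refine (le_abs_self _).trans ?_
        rw [abs_mul]
        exact mul_le_of_le_one_right (abs_nonneg _) (hA c c)
      linarith [hc.2.2]
    refine mem_filter.2 ⟨mem_univ _, fun h0 => ?_, ?_⟩
    · rw [h0, abs_zero] at hdiag; norm_num at hdiag
    · refine lt_of_le_of_lt (card_le_card fun b hb => ?_) (hH.trans_le hjs)
      obtain ⟨hbc, hbl⟩ := (mem_filter.1 hb).2
      by_contra hbH
      refine hcX c hcK (mem_filter.2 ⟨mem_univ _, hcH c hcK, b, hbH, ?_⟩)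
      simp only [hP'd, if_neg (Ne.symm hbc)]
      nlinarith
  have h6 : ((univ.filter fun c => (∀ i, c ≠ κ i) ∧
      |∑ a, P c (κ a) * A c (κ a)| ≤ (k : ℝ) ^ (2 * k + 1) * τ3).card : ℝ) ≤ (atyp P l1 s).card := by
    exact_mod_cast card_le_card hsub
  linarith

end Quadratic

/-! ### One random border rarely decreases a nonzero permanent by much -/

section Border
variable {V : Type} [Fintype V] [DecidableEq V]

open Classical in
lemma mem_atyp_submatrix (e : V ≃ V) (A : Matrix V V ℝ) (l : ℝ) (s : ℕ) (c : V) :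
    c ∈ atyp (cof (A.submatrix e e)) l s ↔ e c ∈ atyp (cof A) l s := by
  simp only [atyp, mem_filter, mem_univ, true_and, cof_submatrix]
  have : (univ.filter fun b => b ≠ c ∧ l * |cof A (e c) (e c)| ≤ |cof A (e c) (e b)|).card =
      (univ.filter fun b => b ≠ e c ∧ l * |cof A (e c) (e c)| ≤ |cof A (e c) b|).card := by
    refine card_bij (fun b _ => e b) (fun b hb => ?_) (fun b _ b' _ h => e.injective h)
      fun b hb => ⟨e.symm b, ?_, by simp⟩
    · simpa using hb
    · rw [mem_filter] at hb ⊢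
      refine ⟨mem_univ _, fun h => hb.2.1 (by rw [← h]; simp), ?_⟩
      simpa using hb.2.2
  rw [this]

/-- Exchangeability: the expected number of atypical indices is determined by the last index. -/
lemma Ex_atyp (l : ℝ) (s : ℕ) : Ex (Option V) (fun B => ((atyp (cof B) l s).card : ℝ)) =
    (Fintype.card V + 1) * Ex (Option V) fun B => ind (none ∈ atyp (cof B) l s) := by
  have h1 : ∀ c : Option V, Ex (Option V) (fun B => ind (c ∈ atyp (cof B) l s)) =
      Ex (Option V) fun B => ind (none ∈ atyp (cof B) l s) := by
    intro c
    rw [Ex_equiv (Equiv.swap none c) fun B => ind (none ∈ atyp (cof B) l s)]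
    unfold Ex
    refine ev_congr fun ω => ?_
    beta_reduce
    rw [mem_atyp_submatrix]
    simp
  have h2 : ∀ B : Matrix (Option V) (Option V) ℝ, ((atyp (cof B) l s).card : ℝ) =
      ∑ c, ind (c ∈ atyp (cof B) l s) := by
    intro B
    rw [← sum_subset (subset_univ (atyp (cof B) l s)) fun c _ hc => ind_false hc,
      sum_congr rfl fun c hc => ind_true hc, sum_const, nsmul_eq_mul, mul_one]
  simp only [h2]
  have h3 : Ex (Option V) (fun B => ∑ c, ind (c ∈ atyp (cof B) l s)) =
      ∑ c, Ex (Option V) fun B => ind (c ∈ atyp (cof B) l s) := ev_sum _ _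
  rw [h3, sum_congr rfl fun c _ => h1 c, sum_const, nsmul_eq_mul, card_univ, Fintype.card_option]
  push_cast
  rfl

open Classical in
/-- Whether the new index of a bordered matrix is atypical only depends on the inner products of the
border with the rows of cofactors, the diagonal cofactor being `per A`. -/
lemma evB_atyp {A : Matrix V V ℝ} (hA : IsSgn A) {l β : ℝ} {s : ℕ} (hβ : 0 ≤ β)
    (h : per A ≠ 0 → pr (fun y : V → Bool =>
      (univ.filter fun c => l ≤ |∑ i, cof A c i / per A * rad (y i)|).card < s) ≤ β) :
    evB A (fun B => ind (none ∈ atyp (cof B) l s)) ≤ β := by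
  unfold evB
  by_cases h0 : per A = 0
  · refine le_trans (le_of_eq ?_) hβ
    rw [← ev_const (Ω := V → Bool) (0 : ℝ)]
    refine ev_congr fun η => ?_
    rw [← ev_const (Ω := Bool) (0 : ℝ)]
    refine ev_congr fun d => ind_false fun hn => ?_
    exact (mem_filter.1 hn).2.1 (by rw [cof_ext_nn, h0])
  · refine le_trans (ev_mono fun η => ?_) (h h0)
    rw [← ev_const (Ω := Bool) (ind _)]
    refine ev_mono fun d => ind_mono fun hn => ?_
    refine lt_of_le_of_lt ?_ (mem_filter.1 hn).2.2
    refine card_le_card_of_injOn some (fun c hc => ?_) (Option.some_injective _).injOn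
    have hc' := (mem_filter.1 hc).2
    refine mem_coe.2 (mem_filter.2 ⟨mem_univ _, by simp, ?_⟩)
    rw [cof_ext_nn, cof_ext_ns]
    have : ∑ i, cof A c i / per A * rad (η i) = (∑ i, rad (η i) * cof A i c) / per A := by
      rw [sum_div]
      refine sum_congr rfl fun i _ => ?_
      rw [cof_symm hA.1 i c]; ring
    rw [this, abs_div, le_div_iff₀ (abs_pos.2 h0)] at hc'
    exact hc'

lemma evB_per_small {A : Matrix V V ℝ} {l β : ℝ} (hβ : 0 ≤ β)
    (h : per A ≠ 0 → ∀ x : ℝ, pr (fun y : V → Bool =>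
      |x + offq univ (fun i j => cof A i j / per A) (fun i => rad (y i))| < l) ≤ β) :
    evB A (fun B => ind (per A ≠ 0 ∧ |per B| < l * |per A|)) ≤ β := by
  unfold evB
  by_cases h0 : per A = 0
  · refine le_trans (le_of_eq ?_) hβ
    have h1 : ∀ (η : V → Bool) (d : Bool), ind (per A ≠ 0 ∧ |per (_root_.ext A (fun i => rad (η i)) (rad d))| < l * |per A|) = 0 :=
      fun η d => ind_false fun hn => hn.1 h0
    simp only [h1, ev_zero]
  · rw [ev_comm, ← ev_const (Ω := Bool) β]
    refine ev_mono fun d => le_trans (ev_mono fun η => ?_)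
      (h h0 (rad d + (∑ i, cof A i i) / per A))
    refine ind_mono fun hn => ?_
    have h1 := hn.2
    rw [per_ext_sign _ _ (fun i => rad_sq _)] at h1
    have h2 : offq univ (fun i j => cof A i j / per A) (fun i => rad (η i)) =
        offq univ (cof A) (fun i => rad (η i)) / per A := by
      unfold offq
      rw [sum_div]
      refine sum_congr rfl fun i _ => ?_
      rw [sum_div]
      refine sum_congr rfl fun j _ => ?_
      split_ifs
      · simp
      · ring
    have h3 : rad d + (∑ i, cof A i i) / per A + offq univ (cof A) (fun i => rad (η i)) / per A =
        (rad d * per A + ∑ i, cof A i i + offq univ (cof A) fun i => rad (η i)) / per A := by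
      field_simp
    beta_reduce
    rw [h2, h3, abs_div, div_lt_iff₀ (abs_pos.2 h0)]
    exact h1

lemma isSgn_abs {A : Matrix V V ℝ} (hA : IsSgn A) (i j : V) : |A i j| ≤ 1 :=
  (sq_le_one_iff_abs_le_one _).1 (hA.2 i j).le

lemma laplace_norm {A : Matrix V V ℝ} (h0 : per A ≠ 0) (c : V) :
    ∑ j, A c j * (cof A c j / per A) = 1 := by
  have := laplace A c
  rw [← div_self h0]
  nth_rewrite 2 [this]
  rw [sum_div]
  exact sum_congr rfl fun j _ => by ring

open Classical in
lemma atyp_div {A : Matrix V V ℝ} (h0 : per A ≠ 0) (l : ℝ) (s : ℕ) :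
    atyp (fun i j => cof A i j / per A) l s = atyp (cof A) l s := by
  unfold atyp
  refine filter_congr fun c _ => ?_
  have hp := abs_pos.2 h0
  simp only [abs_div, ne_eq, div_eq_zero_iff, h0, or_false, ← mul_div_assoc, div_le_div_iff_of_pos_right hp]

end Border

/-! ### Parameters of the border estimate -/

section BorderParam
variable {V : Type} [Fintype V] [DecidableEq V]

lemma pow_gap {x : ℝ} (hx : 1000 ≤ x) {a b : ℕ} (h : a < b) : 1000 * x ^ a ≤ x ^ b := by
  obtain ⟨c, rfl⟩ := Nat.exists_eq_add_of_lt h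
  have h1 : 1 ≤ x ^ c := one_le_pow₀ (by linarith)
  have h2 : 0 ≤ x ^ a := by positivity
  have h3 : (1000 : ℝ) ≤ x ^ c * x := by nlinarith
  calc 1000 * x ^ a ≤ (x ^ c * x) * x ^ a := by gcongr
    _ = x ^ (a + c + 1) := by ring

/-- The factor `k ^ (2 k + 1)` of the orthogonality transfer, for `k = m ^ 20`. -/
noncomputable def bigB (m : ℕ) : ℝ := ((m ^ 20 : ℕ) : ℝ) ^ (2 * m ^ 20 + 1)

/-- The scale below which the ratio of successive permanents is rare. -/
noncomputable def lam (m : ℕ) : ℝ :=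
  1 / (4096 * ((m : ℝ) ^ 20) ^ 2 * bigB m ^ 2 * ((m : ℝ) ^ 101) ^ 5)

open Real in
lemma pr_not_PR_le {m : ℕ} (hm : 1000 ≤ m) (h1 : m ^ 100 ≤ Fintype.card V)
    (h2 : Fintype.card V ≤ m ^ 101) :
    pr (fun ω : Sym2 V → Bool => ¬ PR (m ^ 20) (1 / (m : ℝ) ^ 5) (sm ω)) ≤ 1 / (m : ℝ) ^ 4 := by
  have hx : (1000 : ℝ) ≤ m := by exact_mod_cast hm
  obtain ⟨x, hxd⟩ : ∃ x : ℝ, x = m := ⟨m, rfl⟩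
  rw [← hxd] at hx ⊢
  have hx0 : 0 < x := by linarith
  have hN1 : x ^ 100 ≤ Fintype.card V := by rw [hxd]; exact_mod_cast h1
  have hN2 : (Fintype.card V : ℝ) ≤ x ^ 101 := by rw [hxd]; exact_mod_cast h2
  have h4 : 4 * m ^ 20 ≤ Fintype.card V := by
    have := pow_gap hx (show 20 < 100 by norm_num)
    have h5 : 0 < x ^ 20 := by positivity
    have : 4 * x ^ 20 ≤ Fintype.card V := by linarith
    rw [hxd] at this
    exact_mod_cast this
  refine (pr_not_PR (by positivity) h4).trans ?_
  have hb1 : (Fintype.card V : ℝ) ^ (m ^ 20) ≤ exp (101 * x * x ^ 20) := by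
    have h6 : (Fintype.card V : ℝ) ≤ exp (101 * x) := by
      refine hN2.trans ?_
      have : x ≤ exp x := by linarith [add_one_le_exp x]
      calc x ^ 101 ≤ exp x ^ 101 := by gcongr
        _ = exp (101 * x) := by rw [← exp_nat_mul]; norm_num
    calc (Fintype.card V : ℝ) ^ (m ^ 20) ≤ exp (101 * x) ^ (m ^ 20) := by gcongr
      _ = exp (101 * x * x ^ 20) := by
        rw [← exp_nat_mul]; congr 1; rw [hxd]; push_cast; ring
  have hb2 : (2 : ℝ) ^ (m ^ 20 * m ^ 20) ≤ exp (x ^ 40) := by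
    have : (2 : ℝ) ≤ exp 1 := by linarith [add_one_le_exp (1 : ℝ)]
    calc (2 : ℝ) ^ (m ^ 20 * m ^ 20) ≤ exp 1 ^ (m ^ 20 * m ^ 20) := by gcongr
      _ = exp (x ^ 40) := by
        rw [← exp_nat_mul]; congr 1; rw [hxd]; push_cast; ring
  have hb3 : exp (-(1 / x ^ 5 * Fintype.card V / 4)) ≤ exp (-(x ^ 95 / 4)) := by
    rw [exp_le_exp, neg_le_neg_iff]
    have : x ^ 95 = 1 / x ^ 5 * x ^ 100 := by field_simp
    rw [this]
    gcongr
  calc (Fintype.card V : ℝ) ^ (m ^ 20) * 2 ^ (m ^ 20 * m ^ 20) *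
        exp (-(1 / x ^ 5 * Fintype.card V / 4))
      ≤ exp (101 * x * x ^ 20) * exp (x ^ 40) * exp (-(x ^ 95 / 4)) := by gcongr
    _ = exp (101 * x * x ^ 20 + x ^ 40 + -(x ^ 95 / 4)) := by rw [exp_add, exp_add]
    _ ≤ exp (-(x ^ 4)) := by
      rw [exp_le_exp]
      have a1 := pow_gap hx (show 21 < 95 by norm_num)
      have a2 := pow_gap hx (show 40 < 95 by norm_num)
      have a3 := pow_gap hx (show 4 < 95 by norm_num)
      have a4 : 0 < x ^ 95 := by positivity
      linarith
    _ ≤ 1 / x ^ 4 := by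
      rw [exp_neg, ← one_div]
      have := add_one_le_exp (x ^ 4)
      gcongr
      linarith

lemma inv_sqrt_pow {x : ℝ} (hx : 0 < x) (a : ℕ) : √(x ^ (2 * a)) = x ^ a := by
  rw [mul_comm, pow_mul, Real.sqrt_sq (by positivity)]

set_option maxHeartbeats 2000000 in
/-- For all large dimensions, a random border multiplies a nonzero permanent by a factor below
`lam m` only with small probability. -/
theorem border_small {m : ℕ} (hm : 1000 ≤ m) (hV1 : m ^ 100 ≤ Fintype.card V)
    (hV2 : Fintype.card V + 1 ≤ m ^ 101) :
    Ex (Option V) (fun A => evB A fun B => ind (per A ≠ 0 ∧ |per B| < lam m * |per A|)) ≤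
      4 / (m : ℝ) := by
  have hx : (1000 : ℝ) ≤ m := by exact_mod_cast hm
  obtain ⟨x, hxd⟩ : ∃ x : ℝ, x = m := ⟨m, rfl⟩
  rw [← hxd] at hx ⊢
  have hx0 : 0 < x := by linarith
  have hV1' : x ^ 100 ≤ Fintype.card V := by rw [hxd]; exact_mod_cast hV1
  have hV2' : (Fintype.card V : ℝ) + 1 ≤ x ^ 101 := by rw [hxd]; exact_mod_cast hV2
  set K : ℝ := x ^ 20 with hK
  have hkK : ((m ^ 20 : ℕ) : ℝ) = K := by rw [hK, hxd]; push_cast; rfl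
  set B : ℝ := bigB m with hB
  have hK1 : 1 ≤ K := one_le_pow₀ (by linarith)
  have hB1 : 1 ≤ B := by
    rw [hB, bigB, hkK]; exact one_le_pow₀ hK1
  obtain ⟨U, hU⟩ : ∃ U : ℝ, U = x ^ 101 := ⟨_, rfl⟩
  have hU1 : 1 ≤ U := by rw [hU]; exact one_le_pow₀ (by linarith)
  -- the nested scales of the two applications
  obtain ⟨τ, hτd⟩ : ∃ τ : ℝ, τ = 1 / (16 * K * B) := ⟨_, rfl⟩
  obtain ⟨l1, hl1⟩ : ∃ l1 : ℝ, l1 = τ / (4 * U ^ 2) := ⟨_, rfl⟩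
  obtain ⟨τ', hτ'⟩ : ∃ τ' : ℝ, τ' = l1 / (16 * K * B * U) := ⟨_, rfl⟩
  have hlam : lam m = τ' / (4 * U ^ 2) := by
    rw [lam, hτ', hl1, hτd, hU, ← hxd, ← hB, ← hK]
    have : x ≠ 0 := hx0.ne'
    have : K ≠ 0 := by positivity
    have : B ≠ 0 := by positivity
    field_simp
    ring
  have hτ0 : 0 < τ := by rw [hτd]; positivity
  have hl10 : 0 < l1 := by rw [hl1]; positivity
  have hτ'0 : 0 < τ' := by rw [hτ']; positivity
  have hlam0 : 0 < lam m := by rw [hlam]; positivity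
  have hKBτ : K * B * τ = 1 / 16 := by rw [hτd]; field_simp
  have hKBτ' : K * B * U * τ' = l1 / 16 := by rw [hτ']; field_simp
  have hU2 : U ≤ U ^ 2 := by nlinarith
  have hUl1 : U * l1 ≤ τ / 4 := by
    rw [hl1, mul_div_assoc', div_le_div_iff₀ (by positivity) (by norm_num)]
    nlinarith
  have hUlam : U * lam m ≤ τ' / 4 := by
    rw [hlam, mul_div_assoc', div_le_div_iff₀ (by positivity) (by norm_num)]
    nlinarith
  have hτ1 : τ ≤ K * B * τ :=
    le_mul_of_one_le_left hτ0.le (one_le_mul_of_one_le_of_one_le hK1 hB1)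
  have hl11 : l1 ≤ U * l1 := le_mul_of_one_le_left hl10.le hU1
  -- probability that the base matrix has an atypical new row
  have hq := pr_not_PR_le (V := V) hm hV1 (by omega)
  have hq2 := pr_not_PR_le (V := Option V) hm (by rw [Fintype.card_option]; omega)
    (by rw [Fintype.card_option]; omega)
  rw [← hxd] at hq hq2
  have hat : Ex (Option V) (fun B => ind (none ∈ atyp (cof B) l1 (m ^ 5))) ≤
      1 / x ^ 4 + 1 / x ^ 5 := by
    rw [Ex_option]
    have key : ∀ ω : Sym2 V → Bool, evB (sm ω) (fun B => ind (none ∈ atyp (cof B) l1 (m ^ 5))) ≤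
        ind (¬ PR (m ^ 20) (1 / x ^ 5) (sm ω)) + 1 / x ^ 5 := by
      intro ω
      have hle1 : evB (sm ω) (fun B => ind (none ∈ atyp (cof B) l1 (m ^ 5))) ≤ 1 := by
        refine evB_atyp (isSgn_sm ω) (by norm_num) fun _ => pr_le_one _
      have hp5 : 0 < 1 / x ^ 5 := by positivity
      by_cases hPR : PR (m ^ 20) (1 / x ^ 5) (sm ω)
      · rw [ind_false (not_not.2 hPR), zero_add]
        refine evB_atyp (isSgn_sm ω) hp5.le fun h0 => ?_
        refine row_spread (A := sm ω) (P := fun i j => cof (sm ω) i j / per (sm ω))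
          (isSgn_abs (isSgn_sm ω)) (fun i j => by rw [cof_symm (sm_symm ω)])
          (laplace_norm h0) (k := m ^ 20) (L := m ^ 21) (s := m ^ 5) (τ := τ) (by positivity) ?_ ?_ ?_
          (by positivity) hp5 le_rfl ?_ ?_ hPR hτ0 hl10 ?_ ?_ ?_
        · exact (Nat.pow_le_pow_right (by omega) (by norm_num)).trans hV1
        · have := pow_gap hx (show 5 < 20 by norm_num)
          have h5 : 0 < x ^ 5 := by positivity
          have : 2 * x ^ 5 ≤ x ^ 20 := by linarith
          rw [hxd] at this; exact_mod_cast this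
        · have := pow_gap hx (show 5 < 21 by norm_num)
          have h5 : 0 < x ^ 5 := by positivity
          have : 4 * x ^ 5 ≤ x ^ 21 := by linarith
          rw [hxd] at this; exact_mod_cast this
        · rw [hkK, hK, inv_sqrt_pow hx0 10, div_le_div_iff₀ (by positivity) (by positivity)]
          have := pow_gap hx (show 5 < 10 by norm_num)
          have h5 : 0 < x ^ 5 := by positivity
          linarith
        · push_cast
          rw [← hxd, div_le_div_iff₀ (by positivity) (by positivity)]
          have := pow_gap hx (show 5 < 21 by norm_num)
          have h5 : 0 < x ^ 5 := by positivity
          linarith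
        · refine le_trans ?_ hUl1
          have : (Fintype.card V : ℝ) ≤ U := by rw [hU]; linarith
          gcongr
        · have h6 : (Fintype.card V : ℝ) * l1 ≤ τ / 4 := by
            refine le_trans ?_ hUl1
            have : (Fintype.card V : ℝ) ≤ U := by rw [hU]; linarith
            gcongr
          rw [hkK, show K ^ (2 * m ^ 20 + 1) = B by rw [hB, bigB, hkK]]
          have h7 : l1 ≤ U * l1 := le_mul_of_one_le_left hl10.le hU1
          have h8 : τ ≤ K * τ := le_mul_of_one_le_left hτ0.le hK1
          have h9 : K * τ ≤ B * (K * τ) := le_mul_of_one_le_left (by positivity) hB1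
          have h10 : l1 + (Fintype.card V * l1 + K * τ) ≤ 2 * (K * τ) := by linarith
          have h11 : B * (l1 + (Fintype.card V * l1 + K * τ)) ≤ B * (2 * (K * τ)) := by gcongr
          have h12 : B * (2 * (K * τ)) = 1 / 8 := by linarith [hKBτ]
          linarith
        · push_cast
          rw [← hxd]
          have h6 : x ^ 95 / 8 ≤ 1 / x ^ 5 * Fintype.card V / 8 := by
            have : x ^ 95 = 1 / x ^ 5 * x ^ 100 := by field_simp
            rw [this]
            gcongr
          refine lt_of_lt_of_le ?_ h6
          have a0 := pow_gap hx (show 21 < 95 by norm_num)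
          have a1 := pow_gap hx (show 25 < 95 by norm_num)
          have a2 := pow_gap hx (show 41 < 95 by norm_num)
          have a3 := pow_gap hx (show 61 < 95 by norm_num)
          have a4 := pow_gap hx (show 81 < 95 by norm_num)
          have a5 : 0 < x ^ 95 := by positivity
          linarith
      · rw [ind_true hPR]; linarith
    refine (ev_mono key).trans ?_
    rw [ev_add, ev_const]
    exact add_le_add hq le_rfl
  -- few atypical rows in total
  have hfew : pr (fun ω : Sym2 (Option V) → Bool =>
      ((Fintype.card V : ℝ) + 1) / (32 * x) ≤ (atyp (cof (sm ω)) l1 (m ^ 5)).card) ≤ 1 / x := by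
    refine pr_le_of_markov (fun _ => by positivity) (by positivity) ?_
    have h1 := Ex_atyp (V := V) l1 (m ^ 5)
    have h2 : Ex (Option V) (fun B => ((atyp (cof B) l1 (m ^ 5)).card : ℝ)) ≤
        ((Fintype.card V : ℝ) + 1) * (1 / x ^ 4 + 1 / x ^ 5) := by
      rw [h1]; gcongr
    refine h2.trans ?_
    have h3 : 1 / x ^ 4 + 1 / x ^ 5 ≤ 1 / x * (1 / (32 * x)) := by
      rw [div_add_div _ _ (by positivity) (by positivity), div_mul_div_comm,
        div_le_div_iff₀ (by positivity) (by positivity)]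
      have a0 := pow_gap hx (show 6 < 9 by norm_num)
      have a1 := pow_gap hx (show 7 < 9 by norm_num)
      have a5 : 0 < x ^ 9 := by positivity
      have a6 : 0 < x ^ 7 := by positivity
      have a7 : 0 < x ^ 6 := by positivity
      linarith
    calc ((Fintype.card V : ℝ) + 1) * (1 / x ^ 4 + 1 / x ^ 5)
        ≤ ((Fintype.card V : ℝ) + 1) * (1 / x * (1 / (32 * x))) := by gcongr
      _ = _ := by ring
  have key : ∀ ω : Sym2 (Option V) → Bool, evB (sm ω) (fun B =>
      ind (per (sm ω) ≠ 0 ∧ |per B| < lam m * |per (sm ω)|)) ≤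
      (ind (¬ PR (m ^ 20) (1 / x ^ 5) (sm ω)) + ind (((Fintype.card V : ℝ) + 1) / (32 * x) ≤
        (atyp (cof (sm ω)) l1 (m ^ 5)).card)) + 2 / x := by
    intro ω
    have hle1 : evB (sm ω) (fun B => ind (per (sm ω) ≠ 0 ∧ |per B| < lam m * |per (sm ω)|)) ≤ 1 :=
      evB_per_small (by norm_num) fun _ _ => pr_le_one _
    have hp5 : 0 < 1 / x ^ 5 := by positivity
    have h2x : 0 < 2 / x := by positivity
    by_cases hPR : PR (m ^ 20) (1 / x ^ 5) (sm ω)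
    swap
    · rw [ind_true hPR]
      linarith [ind_nonneg (((Fintype.card V : ℝ) + 1) / (32 * x) ≤
        (atyp (cof (sm ω)) l1 (m ^ 5)).card)]
    by_cases hA : ((Fintype.card V : ℝ) + 1) / (32 * x) ≤ (atyp (cof (sm ω)) l1 (m ^ 5)).card
    · rw [ind_true hA]
      linarith [ind_nonneg (¬ PR (m ^ 20) (1 / x ^ 5) (sm ω))]
    rw [ind_false (not_not.2 hPR), ind_false hA, add_zero, zero_add]
    refine evB_per_small h2x.le fun h0 z => ?_
    rw [not_le] at hA
    have hcard : (Fintype.card (Option V) : ℝ) = Fintype.card V + 1 := by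
      rw [Fintype.card_option]; push_cast; rfl
    have hcU : (Fintype.card (Option V) : ℝ) ≤ U := by rw [hcard, hU]; exact hV2'
    have hN0 : (Fintype.card (Option V) : ℝ) * lam m ≤ τ' / 4 :=
      le_trans (by gcongr) hUlam
    refine quad_small (A := sm ω) (P := fun i j => cof (sm ω) i j / per (sm ω))
      (isSgn_abs (isSgn_sm ω)) (fun i j => by rw [cof_symm (sm_symm ω)])
      (laplace_norm h0) (k := m ^ 20) (k' := m ^ 6) (L := m ^ 5) (j := m ^ 5) (j0 := m ^ 4)
      (e := m ^ 2) (s := m ^ 5) (p := 1 / x ^ 5) (l1 := l1) (τ := τ') (t := lam m) (by positivity)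
      ?_ ?_ (Nat.pow_lt_pow_right (by omega) (by norm_num)) (by positivity) ?_ ?_ le_rfl hp5 hPR
      h2x.le ?_ ?_ ?_ ?_ hlam0 hτ'0 le_rfl hN0 ?_ ?_ ?_ z
    · calc 2 * m ^ 4 ≤ m * m ^ 4 := Nat.mul_le_mul_right _ (by omega)
        _ = m ^ 5 := by ring
    · calc 4 * m ^ 4 ≤ m * m ^ 4 := Nat.mul_le_mul_right _ (by omega)
        _ = m ^ 5 := by ring
    · have a1 := pow_gap hx (show 5 < 20 by norm_num)
      have a2 := pow_gap hx (show 11 < 20 by norm_num)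
      have a3 := pow_gap hx (show 17 < 20 by norm_num)
      have a5 : 0 < x ^ 20 := by positivity
      have : x ^ 5 + ((x ^ 6 + 1) ^ 2 + 1) * x ^ 5 ≤ x ^ 20 := by linarith
      rw [hxd] at this; exact_mod_cast this
    · rw [Fintype.card_option]
      exact ((Nat.pow_le_pow_right (by omega) (by norm_num)).trans hV1).trans (Nat.le_succ _)
    · have h4 : x ^ 4 ≤ ((m ^ 6 - m ^ 5 : ℕ) : ℝ) := by
        rw [Nat.cast_sub (Nat.pow_le_pow_right (by omega) (by norm_num))]
        push_cast
        rw [← hxd]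
        have a1 := pow_gap hx (show 5 < 6 by norm_num)
        have a2 := pow_gap hx (show 4 < 6 by norm_num)
        have a5 : 0 < x ^ 6 := by positivity
        linarith
      have h5 : x ^ 2 ≤ √((m ^ 6 - m ^ 5 : ℕ) : ℝ) := by
        rw [← inv_sqrt_pow hx0 2]; exact Real.sqrt_le_sqrt h4
      have h6 : √((m ^ 4 : ℕ) : ℝ) = x ^ 2 := by
        push_cast; rw [← hxd, ← inv_sqrt_pow hx0 2]
      rw [h6]
      have h7 : 2 / √((m ^ 6 - m ^ 5 : ℕ) : ℝ) ≤ 2 / x ^ 2 := by gcongr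
      have h8 : (2 / x) ^ 2 = 2 / x ^ 2 + 1 / x ^ 2 + 1 / x ^ 2 := by field_simp; norm_num
      have h9 : 0 < 1 / x ^ 2 := by positivity
      linarith
    · have h6 : √((m ^ 4 : ℕ) : ℝ) = x ^ 2 := by
        push_cast; rw [← hxd, ← inv_sqrt_pow hx0 2]
      rw [h6]
      have h7 : 4 / ((m ^ 5 : ℕ) : ℝ) ≤ 1 / x ^ 2 := by
        push_cast
        rw [← hxd, div_le_div_iff₀ (by positivity) (by positivity)]
        have a1 := pow_gap hx (show 2 < 5 by norm_num)
        have a5 : 0 < x ^ 2 := by positivity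
        linarith
      have h8 : (2 / x) ^ 2 = 2 / x ^ 2 + 1 / x ^ 2 + 1 / x ^ 2 := by field_simp; norm_num
      have h9 : 0 < 2 / x ^ 2 := by positivity
      linarith
    · have h6 : √((m ^ 2 : ℕ) : ℝ) = x := by
        push_cast; rw [← hxd, Real.sqrt_sq hx0.le]
      rw [h6]
      exact le_of_eq (by ring)
    · rw [div_div, div_le_div_iff₀ (by positivity) (by positivity)]
      have a1 := pow_gap hx (show 1 < 5 by norm_num)
      linarith [pow_one x]
    · have : 16 * K * B * U * τ' = l1 := by linarith
      have h5 : 1 ≤ K * B * U := one_le_mul_of_one_le_of_one_le (one_le_mul_of_one_le_of_one_le hK1 hB1) hU1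
      have h6 : τ' ≤ K * B * U * τ' := le_mul_of_one_le_left hτ'0.le h5
      linarith
    · have hk6 : ((m ^ 6 : ℕ) : ℝ) ≤ K := by
        rw [hK]; push_cast; rw [← hxd]
        exact pow_le_pow_right₀ (by linarith) (by norm_num)
      rw [hkK, show K ^ (2 * m ^ 20 + 1) = B by rw [hB, bigB, hkK]]
      set N : ℝ := (Fintype.card (Option V) : ℝ)
      have hN1 : 1 ≤ N := by
        rw [hcard]; linarith [(Nat.cast_nonneg (Fintype.card V) : (0 : ℝ) ≤ _)]
      have h8 : τ' ≤ K * τ' := le_mul_of_one_le_left hτ'0.le hK1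
      have h9 : N * lam m + ((m ^ 6 : ℕ) : ℝ) * τ' ≤ 5 / 4 * (K * τ') := by
        have : ((m ^ 6 : ℕ) : ℝ) * τ' ≤ K * τ' := by gcongr
        linarith
      have h10 : N * (N * lam m + ((m ^ 6 : ℕ) : ℝ) * τ') ≤ U * (5 / 4 * (K * τ')) := by gcongr
      have h11 : lam m ≤ N * lam m := le_mul_of_one_le_left hlam0.le hN1
      have h12 : K * τ' ≤ U * (K * τ') := le_mul_of_one_le_left (by positivity) hU1
      have h13 : U * (K * τ') ≤ B * (U * (K * τ')) :=
        le_mul_of_one_le_left (by positivity) hB1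
      have h14 : B * (lam m + N * (N * lam m + ((m ^ 6 : ℕ) : ℝ) * τ')) ≤
          B * (3 / 2 * (U * (K * τ'))) := by
        gcongr
        linarith
      have h15 : B * (U * (K * τ')) ≤ 1 / 16 := by linarith [hKBτ']
      linarith
    · rw [atyp_div h0, hkK, hK, hcard]
      have h6 : ((m ^ 2 : ℕ) : ℝ) = x ^ 2 := by push_cast; rw [← hxd]
      rw [h6]
      have h7 : x ^ 20 * x ^ 2 ≤ ((Fintype.card V : ℝ) + 1) / (16 * x) := by
        rw [le_div_iff₀ (by positivity)]
        have a1 := pow_gap hx (show 23 < 100 by norm_num)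
        have a5 : 0 < x ^ 23 := by positivity
        linarith
      have h8 : 2 / x / 2 * ((Fintype.card V : ℝ) + 1) / 8 =
          4 * (((Fintype.card V : ℝ) + 1) / (32 * x)) := by field_simp; norm_num
      have h9 : ((Fintype.card V : ℝ) + 1) / (16 * x) =
          2 * (((Fintype.card V : ℝ) + 1) / (32 * x)) := by field_simp; norm_num
      have h10 : 0 < ((Fintype.card V : ℝ) + 1) / (32 * x) := by positivity
      linarith
  refine (ev_mono key).trans ?_
  rw [ev_add, ev_add, ev_const]
  have h4 : 1 / x ^ 4 ≤ 1 / x := by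
    have : x ≤ x ^ 4 := by
      have a1 := pow_gap hx (show 1 < 4 by norm_num)
      linarith [pow_one x]
    gcongr
  have h5 : 4 / x = 1 / x + 1 / x + 2 / x := by ring
  have hfew' : ev (fun ω : Sym2 (Option V) → Bool => ind (((Fintype.card V : ℝ) + 1) / (32 * x) ≤
        (atyp (cof (sm ω)) l1 (m ^ 5)).card)) ≤ 1 / x := hfew
  have hq2' : ev (fun ω : Sym2 (Option V) → Bool => ind (¬ PR (m ^ 20) (1 / x ^ 5) (sm ω))) ≤
    1 / x ^ 4 := hq2
  linarith

end BorderParam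

/-! ### The second moments as a sequence -/

section Seq
variable {ι : Type} [Fintype ι] [DecidableEq ι]

/-- The second moments of the permanent of `A` completed by `r` virtual random vertices. -/
noncomputable def seq (A : Matrix ι ι ℝ) (r : ℕ) : ℝ := Psi (Fin r) A

lemma seq_nonneg (A : Matrix ι ι ℝ) (r : ℕ) : 0 ≤ seq A r := Psi_nonneg _

lemma seq_zero (A : Matrix ι ι ℝ) : seq A 0 = per A ^ 2 := Psi_empty _

lemma seq_succ (A : Matrix ι ι ℝ) (r : ℕ) : seq A (r + 1) = Psi (Option (Fin r)) A :=
  Psi_equiv (finSuccEquiv r) A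

lemma seq_submatrix {ι' : Type} [Fintype ι'] [DecidableEq ι'] (f : ι' ≃ ι)
    (A : Matrix ι ι ℝ) : seq (A.submatrix f f) = seq A :=
  funext fun _ => Psi_submatrix f A

lemma Ex_mono {G H : Matrix ι ι ℝ → ℝ} (h : ∀ A, IsSgn A → G A ≤ H A) : Ex ι G ≤ Ex ι H :=
  ev_mono fun ω => h _ (isSgn_sm ω)

lemma Ex_add (G H : Matrix ι ι ℝ → ℝ) : Ex ι (fun A => G A + H A) = Ex ι G + Ex ι H :=
  ev_add _ _

lemma Ex_mul (c : ℝ) (G : Matrix ι ι ℝ → ℝ) : Ex ι (fun A => c * G A) = c * Ex ι G :=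
  ev_mul_left _ _

lemma Ex_const (c : ℝ) : Ex ι (fun _ => c) = c := ev_const _

lemma Ex_step (t : ℕ) (H : (ℕ → ℝ) → ℝ) :
    Ex (Fin (t + 1)) (fun A => H (seq A)) = Ex (Fin t) fun A => evB A fun B => H (seq B) := by
  rw [Ex_equiv (finSuccEquiv t).symm]
  have : ∀ A : Matrix (Option (Fin t)) (Option (Fin t)) ℝ,
      H (seq (A.submatrix (finSuccEquiv t).symm.symm (finSuccEquiv t).symm.symm)) = H (seq A) :=
    fun A => by rw [seq_submatrix]
  simp_rw [this]
  exact Ex_option _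

lemma evB_mono {A : Matrix ι ι ℝ}
    {G H : Matrix (Option ι) (Option ι) ℝ → ℝ}
    (h : ∀ y : ι → ℝ, (∀ i, y i ^ 2 = 1) → ∀ d : ℝ, d ^ 2 = 1 →
      G (_root_.ext A y d) ≤ H (_root_.ext A y d)) : evB A G ≤ evB A H :=
  ev_mono fun _ => ev_mono fun d => h _ (fun _ => rad_sq _) _ (rad_sq d)

lemma evB_add (A : Matrix ι ι ℝ) (G H : Matrix (Option ι) (Option ι) ℝ → ℝ) :
    evB A (fun B => G B + H B) = evB A G + evB A H := by
  unfold evB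
  rw [← ev_add]
  exact ev_congr fun η => ev_add _ _

lemma evB_mul (c : ℝ) (A : Matrix ι ι ℝ) (G : Matrix (Option ι) (Option ι) ℝ → ℝ) :
    evB A (fun B => c * G B) = c * evB A G := by
  unfold evB
  rw [← ev_mul_left]
  exact ev_congr fun η => ev_mul_left _ _

lemma evB_const (A : Matrix ι ι ℝ) (c : ℝ) : evB A (fun _ => c) = c := by
  unfold evB
  rw [ev_congr fun η => ev_const c, ev_const]

/-- The step from level `r + 1` to level `r` for large `r`. -/
theorem seq_large {δ : ℝ} (hδ : 0 < δ) {η0 : ℝ} (hη0 : 0 < η0) : ∃ (C : ℕ) (κ : ℝ), 0 < κ ∧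
    ∀ (ι : Type) [Fintype ι] [DecidableEq ι] (A : Matrix ι ι ℝ), IsSgn A → ∀ r : ℕ, C ≤ r →
      (100 * seq A r ≤ seq A (r + 1) ∨
        η0 * seq A (r + 1) ≤ partM (Fin r) A + partW (Fin r) A) →
      evB A (fun B => ind (seq B r < κ * seq A (r + 1))) ≤ δ := by
  obtain ⟨C, κ, hκ, h⟩ := step_large hδ hη0
  refine ⟨C, κ, hκ, fun ι _ _ A hA r hr hc => ?_⟩
  rw [seq_succ] at hc ⊢
  unfold evB
  rw [ev_comm]
  have h1 : ∀ d : Bool, ev (fun η : ι → Bool =>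
      ind (seq (_root_.ext A (fun i => rad (η i)) (rad d)) r < κ * Psi (Option (Fin r)) A)) ≤ δ :=
    fun d => h ι (Fin r) A hA (by simpa using hr) hc (rad d) (rad_sq d)
  calc _ ≤ ev (fun _ : Bool => δ) := ev_mono h1
    _ = δ := ev_const _

/-- A level carrying a positive proportion `α` of virtual vertices always falls by one level,
up to a constant factor, with probability close to one. -/
theorem seq_large_prop {δ α : ℝ} (hδ : 0 < δ) (hα : 0 < α) : ∃ (C : ℕ) (κ : ℝ), 0 < κ ∧
    ∀ (ι : Type) [Fintype ι] [DecidableEq ι] (A : Matrix ι ι ℝ), IsSgn A → ∀ r : ℕ, C ≤ r →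
      1 ≤ r → α * (Fintype.card ι + r) ≤ r →
      evB A (fun B => ind (seq B r < κ * seq A (r + 1))) ≤ δ := by
  obtain ⟨C, κ, hκ, h⟩ := seq_large hδ (η0 := α / 50) (by positivity)
  refine ⟨C, κ, hκ, fun ι _ _ A hA r hr hr1 hc => h ι A hA r hr ?_⟩
  by_cases h1 : 100 * seq A r ≤ seq A (r + 1)
  · exact Or.inl h1
  right
  push Not at h1
  have h2 := Psi_le_virtual (ρ := Fin r) hA
  rw [Fintype.card_fin] at h2
  have h3 : seq A (r + 1) / 100 ≤ Psi (Fin r) A := by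
    have : seq A r = Psi (Fin r) A := rfl
    linarith
  obtain ⟨F, hF⟩ : ∃ F, F = seq A (r + 1) := ⟨_, rfl⟩
  have hF0 : 0 ≤ F := hF ▸ seq_nonneg _ _
  rw [← hF] at h3 ⊢
  have hr1' : (1 : ℝ) ≤ r := by exact_mod_cast hr1
  have hs : (0 : ℝ) < Fintype.card ι + r := by positivity
  have h4 : 2 * (α * (Fintype.card ι + r)) * (F / 100) ≤ 2 * r * Psi (Fin r) A := by
    gcongr
  have h5 : (Fintype.card ι + r : ℝ) * (α / 50 * F) ≤
      (Fintype.card ι + r) * (partM (Fin r) A + partW (Fin r) A) := by linarith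
  exact le_of_mul_le_mul_left h5 hs

/-- The step from level `r + 1` to level `r` for arbitrary `r`, at polynomial cost. -/
lemma seq_coin {A : Matrix ι ι ℝ} (hA : IsSgn A) (r : ℕ) :
    1 / 4 ≤ evB A fun B =>
      ind (seq A (r + 1) / (2048 * (Fintype.card ι + 1) ^ 2) ≤ seq B r) := by
  rw [seq_succ]
  exact step_coin hA

/-- Whatever the border is, the mass of level `r` survives on level `r` or on level `r + 1`. -/
lemma seq_ext {A : Matrix ι ι ℝ} (hA : IsSgn A) {y : ι → ℝ} (hy : ∀ i, y i ^ 2 = 1) {d : ℝ}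
    (hd : d ^ 2 = 1) (r : ℕ) {q : ℝ} (hq : 0 < q) (h : (Fintype.card ι + r : ℝ) ≤ q) :
    seq A r / 4 ≤ seq (_root_.ext A y d) r ∨ seq A r / q ≤ seq (_root_.ext A y d) (r + 1) := by
  by_contra! hc
  obtain ⟨h1, h2⟩ := hc
  have h3 := Psi_le_ext (ρ := Fin r) hA y hy d hd
  rw [← seq_succ, Fintype.card_fin] at h3
  change seq A r ≤ 2 * seq _ r + _ at h3
  have h4 := seq_nonneg (_root_.ext A y d) (r + 1)
  rw [lt_div_iff₀ hq] at h2
  have h5 : (Fintype.card ι + r : ℝ) / 2 * seq (_root_.ext A y d) (r + 1) ≤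
    q / 2 * seq (_root_.ext A y d) (r + 1) := by gcongr
  linarith
end Seq

/-! ### First phase: most vertices become real -/

section PhaseOne

/-- After `t` real vertices, some level `r` whose excess `r + t - N0` over the main path is at
most `2 u` still carries mass; every unit of `u` costs a factor `q`. -/
def Good (N0 : ℕ) (κ Λ q : ℝ) (t u : ℕ) (s : ℕ → ℝ) : Prop :=
  ∃ r, N0 ≤ r + t ∧ r + t ≤ N0 + 2 * u ∧ κ ^ t * Λ / q ^ u ≤ s r

variable {N0 t1 U : ℕ} {κ Λ q δ : ℝ}

/-- A failure of the likely step can be absorbed by raising `u` by one. -/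
lemma good_step (hκ : 0 < κ) (hκ4 : κ ≤ 1 / 4) (hΛ : 0 ≤ Λ) (hq : 1 ≤ q) (hδ : 0 ≤ δ)
    (hN : t1 ≤ N0) (hqU : ((N0 + 2 * U : ℕ) : ℝ) ≤ q)
    (H : ∀ t < t1, ∀ A : Matrix (Fin t) (Fin t) ℝ, IsSgn A → ∀ r, N0 ≤ r + 1 + t →
      evB A (fun B => ind (seq B r < κ * seq A (r + 1))) ≤ δ)
    {t u : ℕ} (ht : t < t1) (hu : u < U) {A : Matrix (Fin t) (Fin t) ℝ} (hA : IsSgn A) :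
    evB A (fun B => ind (¬ Good N0 κ Λ q (t + 1) (u + 1) (seq B))) ≤
      ind (¬ Good N0 κ Λ q t (u + 1) (seq A)) + δ * ind (¬ Good N0 κ Λ q t u (seq A)) := by
  have hq0 : 0 < q := by linarith
  have hb : 0 ≤ κ ^ t * Λ := by positivity
  by_cases h1 : Good N0 κ Λ q t u (seq A)
  · have h0 : evB A (fun B => ind (¬ Good N0 κ Λ q (t + 1) (u + 1) (seq B))) ≤ 0 := by
      rw [← evB_const A 0]
      refine evB_mono fun y hy d hd => ?_
      rw [ind_false]
      rw [not_not]
      obtain ⟨r, hr1, hr2, hr3⟩ := h1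
      have hcard : (Fintype.card (Fin t) + r : ℝ) ≤ q := by
        rw [Fintype.card_fin]
        refine le_trans ?_ hqU
        have : t + r ≤ N0 + 2 * U := by omega
        exact_mod_cast this
      have hq1 : κ ^ t * Λ / q ^ (u + 1) ≤ κ ^ t * Λ / q ^ u :=
        div_le_div_of_nonneg_left hb (by positivity) (pow_le_pow_right₀ hq (by omega))
      have e1 : κ ^ (t + 1) * Λ / q ^ (u + 1) = κ * (κ ^ t * Λ / q ^ (u + 1)) := by ring
      have hp : 0 ≤ κ ^ t * Λ / q ^ (u + 1) := by positivity
      rcases seq_ext hA hy hd r hq0 hcard with h2 | h2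
      · refine ⟨r, by omega, by omega, ?_⟩
        rw [e1]
        have : κ * (κ ^ t * Λ / q ^ (u + 1)) ≤ 1 / 4 * (κ ^ t * Λ / q ^ (u + 1)) := by gcongr
        linarith
      · refine ⟨r + 1, by omega, by omega, ?_⟩
        rw [e1]
        have h3 : κ * (κ ^ t * Λ / q ^ (u + 1)) ≤ 1 * (κ ^ t * Λ / q ^ (u + 1)) := by
          gcongr; linarith
        have h4 : κ ^ t * Λ / q ^ u / q ≤ seq A r / q := by gcongr
        have h5 : κ ^ t * Λ / q ^ u / q = κ ^ t * Λ / q ^ (u + 1) := by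
          rw [div_div, pow_succ]
        linarith
    have := ind_nonneg (¬ Good N0 κ Λ q t (u + 1) (seq A))
    have := ind_nonneg (¬ Good N0 κ Λ q t u (seq A))
    have := mul_nonneg hδ this
    linarith
  rw [ind_true h1]
  by_cases h2 : Good N0 κ Λ q t (u + 1) (seq A)
  · rw [ind_false (not_not.mpr h2)]
    obtain ⟨r, hr1, hr2, hr3⟩ := h2
    obtain ⟨r, rfl⟩ : ∃ r', r = r' + 1 := ⟨r - 1, by omega⟩
    have h3 : evB A (fun B => ind (¬ Good N0 κ Λ q (t + 1) (u + 1) (seq B))) ≤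
        evB A (fun B => ind (seq B r < κ * seq A (r + 1))) := by
      refine evB_mono fun y hy d hd => ind_mono fun h => ?_
      by_contra! h4
      refine h ⟨r, by omega, by omega, le_trans ?_ h4⟩
      have e1 : κ ^ (t + 1) * Λ / q ^ (u + 1) = κ * (κ ^ t * Λ / q ^ (u + 1)) := by ring
      rw [e1]
      gcongr
    have := H t ht A hA r (by omega)
    linarith
  · rw [ind_true h2]
    have : evB A (fun B => ind (¬ Good N0 κ Λ q (t + 1) (u + 1) (seq B))) ≤ 1 := by
      rw [← evB_const A 1]
      exact evB_mono fun y hy d hd => ind_le_one _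
    linarith

/-- A Pascal-type recursion in `t` and `u` started at `u = 0`, where the bound is trivial. -/
theorem good_prob (hκ : 0 < κ) (hκ4 : κ ≤ 1 / 4) (hΛ : 0 ≤ Λ) (hq : 1 ≤ q) (hδ : 0 ≤ δ)
    (hN : t1 ≤ N0) (hqU : ((N0 + 2 * U : ℕ) : ℝ) ≤ q)
    (H : ∀ t < t1, ∀ A : Matrix (Fin t) (Fin t) ℝ, IsSgn A → ∀ r, N0 ≤ r + 1 + t →
      evB A (fun B => ind (seq B r < κ * seq A (r + 1))) ≤ δ)
    (h0 : ∀ A : Matrix (Fin 0) (Fin 0) ℝ, Λ ≤ seq A N0) :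
    ∀ t ≤ t1, ∀ u ≤ U,
      Ex (Fin t) (fun A => ind (¬ Good N0 κ Λ q t u (seq A))) ≤ 2 ^ t * δ ^ u := by
  intro t
  induction t with
  | zero =>
    intro _ u _
    have : Ex (Fin 0) (fun A => ind (¬ Good N0 κ Λ q 0 u (seq A))) ≤ Ex (Fin 0) fun _ => 0 := by
      refine Ex_mono fun A _ => le_of_eq (ind_false (not_not.mpr ⟨N0, by omega, by omega, ?_⟩))
      rw [pow_zero, one_mul]
      exact (div_le_self hΛ (one_le_pow₀ hq)).trans (h0 A)
    rw [Ex_const] at this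
    refine this.trans (by positivity)
  | succ t ih =>
    intro ht u hu
    rcases u with _ | u
    · have : Ex (Fin (t + 1)) (fun A => ind (¬ Good N0 κ Λ q (t + 1) 0 (seq A))) ≤
          Ex (Fin (t + 1)) fun _ => 1 := Ex_mono fun A _ => ind_le_one _
      rw [Ex_const] at this
      rw [pow_zero, mul_one]
      exact this.trans (one_le_pow₀ (by norm_num))
    · rw [Ex_step t fun s => ind (¬ Good N0 κ Λ q (t + 1) (u + 1) s)]
      have h1 := Ex_mono (ι := Fin t) (fun A hA => good_step (N0 := N0) (t1 := t1) (U := U)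
        (κ := κ) (Λ := Λ) (q := q) (δ := δ) hκ hκ4 hΛ hq hδ hN hqU H (t := t) (u := u)
        (by omega) (by omega) hA)
      rw [Ex_add, Ex_mul] at h1
      have h2 := ih (by omega) (u + 1) hu
      have h3 := mul_le_mul_of_nonneg_left (ih (by omega) u (by omega)) hδ
      have h4 : (2 : ℝ) ^ (t + 1) * δ ^ (u + 1) = 2 ^ t * δ ^ (u + 1) + δ * (2 ^ t * δ ^ u) := by
        ring
      linarith
end PhaseOne

/-! ### Second phase: a potential for the lowest massive level -/

section Potential

/-- Increments of the potential: geometrically decreasing up to `C`, doubling beyond. -/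
noncomputable def potInc (C i : ℕ) : ℝ := if i ≤ C then (1 / 16) ^ i else (1 / 16) ^ C * 2 ^ (i - C)

/-- The potential of the level `r`. -/
noncomputable def pot (C r : ℕ) : ℝ := ∑ i ∈ range r, potInc C i

/-- The contraction rate of the potential. -/
noncomputable def rate (C : ℕ) : ℝ := 1 / (16 * 16 ^ C)

variable {C r : ℕ}

lemma potInc_pos (C i : ℕ) : 0 < potInc C i := by unfold potInc; split_ifs <;> positivity

lemma potInc_low (h : r < C) : potInc C (r + 1) = potInc C r / 16 := by
  unfold potInc
  rw [if_pos (by omega), if_pos (by omega)]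
  ring

lemma potInc_high (h : C ≤ r) : potInc C (r + 1) = 2 * potInc C r := by
  unfold potInc
  rw [if_neg (by omega)]
  rcases h.eq_or_lt with rfl | h
  · rw [if_pos le_rfl, show C + 1 - C = 1 by omega]; ring
  · rw [if_neg (by omega), show r + 1 - C = (r - C) + 1 by omega]; ring

lemma potInc_le (C i : ℕ) : potInc C i ≤ 2 ^ i := by
  unfold potInc
  split_ifs with h
  · exact pow_le_pow_left₀ (by norm_num) (by norm_num) i
  · calc (1 / 16 : ℝ) ^ C * 2 ^ (i - C) ≤ 1 * 2 ^ i := by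
          gcongr
          · exact pow_le_one₀ (by norm_num) (by norm_num)
          · norm_num
          · omega
      _ = 2 ^ i := one_mul _

lemma pot_zero (C : ℕ) : pot C 0 = 0 := by simp [pot]
lemma pot_succ (C r : ℕ) : pot C (r + 1) = pot C r + potInc C r := sum_range_succ _ _
lemma pot_one (C : ℕ) : pot C 1 = 1 := by simp [pot, potInc]

lemma pot_mono (C : ℕ) : Monotone (pot C) := monotone_nat_of_le_succ fun r => by
  rw [pot_succ]; linarith [potInc_pos C r]

lemma pot_nonneg (C r : ℕ) : 0 ≤ pot C r := by
  rw [← pot_zero C]; exact pot_mono C (Nat.zero_le r)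

lemma pot_le (C r : ℕ) : pot C r ≤ 2 ^ r := by
  induction r with
  | zero => simp [pot]
  | succ r ih => rw [pot_succ, pow_succ]; linarith [potInc_le C r]

lemma pot_add_le (r : ℕ) (h : r ≤ C) : pot C (r + 1) + potInc C r ≤ 2 := by
  induction r with
  | zero => rw [pot_one]; simp [potInc]; norm_num
  | succ r ih =>
    have h1 := ih (by omega)
    have h2 := potInc_low (C := C) (r := r) (by omega)
    have h3 := potInc_pos C r
    rw [pot_succ]
    linarith

lemma pot_le_inc (C r : ℕ) : pot C (r + 1) ≤ 2 * 16 ^ C * potInc C r := by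
  have h16 : (1 : ℝ) ≤ 16 ^ C := one_le_pow₀ (by norm_num)
  rcases le_total r C with h | h
  · have h1 := pot_add_le r h
    have h2 : (1 : ℝ) ≤ 16 ^ C * potInc C r := by
      unfold potInc
      rw [if_pos h, one_div, inv_pow, ← div_eq_mul_inv, one_le_div (by positivity)]
      exact pow_le_pow_right₀ (by norm_num) h
    linarith [potInc_pos C r]
  · induction r, h using Nat.le_induction with
    | base =>
      have h1 := pot_add_le C le_rfl
      have h2 : (16 : ℝ) ^ C * potInc C C = 1 := by
        unfold potInc
        rw [if_pos le_rfl, ← mul_pow]; norm_num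
      linarith [potInc_pos C C]
    | succ r hr ih =>
      have h3 := potInc_pos C r
      have h4 : potInc C r ≤ 16 ^ C * potInc C r := le_mul_of_one_le_left h3.le h16
      rw [pot_succ, potInc_high hr]
      linarith

lemma rate_pos (C : ℕ) : 0 < rate C := by unfold rate; positivity

lemma rate_le (C : ℕ) : rate C ≤ 1 / 16 := by
  unfold rate
  have h16 : (1 : ℝ) ≤ 16 ^ C := one_le_pow₀ (by norm_num)
  exact one_div_le_one_div_of_le (by norm_num) (by linarith)

lemma rate_pot (C r : ℕ) : rate C * pot C (r + 1) ≤ potInc C r / 8 := by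
  have h := mul_le_mul_of_nonneg_left (pot_le_inc C r) (rate_pos C).le
  have : rate C * (2 * 16 ^ C * potInc C r) = potInc C r / 8 := by
    unfold rate; field_simp; ring
  linarith

lemma pot_low (h : r < C) :
    3 / 4 * pot C (r + 2) + 1 / 4 * pot C r ≤ (1 - rate C) * pot C (r + 1) := by
  have h1 := rate_pot C r
  have h2 := potInc_low h
  have h3 := potInc_pos C r
  rw [pot_succ C (r + 1)]
  have h4 := pot_succ C r
  linarith

lemma pot_high (h : C ≤ r) :
    1 / 4 * pot C (r + 2) + 3 / 4 * pot C r ≤ (1 - rate C) * pot C (r + 1) := by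
  have h1 := rate_pot C r
  have h2 := potInc_high h
  have h3 := potInc_pos C r
  rw [pot_succ C (r + 1)]
  have h4 := pot_succ C r
  linarith

/-- Some level `r ≤ t` carries mass at least `L * 100 ^ r`. -/
def Alive (t : ℕ) (L : ℝ) (s : ℕ → ℝ) : Prop := ∃ r, r ≤ t ∧ L * 100 ^ r ≤ s r

open Classical in
/-- The potential of the lowest level witnessing `Alive`; zero if there is none. -/
noncomputable def phi (C t : ℕ) (L : ℝ) (s : ℕ → ℝ) : ℝ :=
  if h : Alive t L s then pot C (Nat.find h) else 0

lemma phi_dead {t : ℕ} {L : ℝ} {s : ℕ → ℝ} (h : ¬ Alive t L s) : phi C t L s = 0 := by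
  unfold phi; rw [dif_neg h]

lemma phi_le {t : ℕ} {L : ℝ} {s : ℕ → ℝ} (hr : r ≤ t) (h : L * 100 ^ r ≤ s r) :
    phi C t L s ≤ pot C r := by
  classical
  unfold phi
  rw [dif_pos ⟨r, hr, h⟩]
  exact pot_mono C (Nat.find_min' _ ⟨hr, h⟩)

lemma phi_spec {t : ℕ} {L : ℝ} {s : ℕ → ℝ} (h : Alive t L s) :
    ∃ r, r ≤ t ∧ L * 100 ^ r ≤ s r ∧ (∀ r' < r, s r' < L * 100 ^ r') ∧ phi C t L s = pot C r := by
  classical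
  refine ⟨Nat.find h, (Nat.find_spec h).1, (Nat.find_spec h).2, fun r' hr' => ?_, ?_⟩
  · have := Nat.find_min h hr'
    by_contra! hc
    exact this ⟨hr'.le.trans (Nat.find_spec h).1, hc⟩
  · unfold phi
    rw [dif_pos h]

lemma phi_nonneg (t : ℕ) (L : ℝ) (s : ℕ → ℝ) : 0 ≤ phi C t L s := by
  unfold phi
  split_ifs
  exacts [pot_nonneg _ _, le_rfl]

lemma phi_le_pow (t : ℕ) (L : ℝ) (s : ℕ → ℝ) : phi C t L s ≤ 2 ^ t := by
  by_cases h : Alive t L s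
  · obtain ⟨r, hr, h1, -, h2⟩ := phi_spec (C := C) h
    rw [h2]
    exact (pot_le C r).trans (pow_le_pow_right₀ (by norm_num) hr)
  · rw [phi_dead h]; positivity

/-- A small value at level zero means that the chain is dead or that its lowest level is positive, in
which case the potential is at least `pot C 1 = 1`. -/
lemma ind_lt_le_phi {t : ℕ} {L : ℝ} {s : ℕ → ℝ} :
    ind (s 0 < L) ≤ ind (¬ Alive t L s) + phi C t L s := by
  by_cases h : Alive t L s
  · obtain ⟨r, hr, h1, -, h2⟩ := phi_spec (C := C) h
    rw [h2, ind_false (not_not.mpr h), zero_add]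
    rcases r with _ | r
    · rw [ind_false]
      · exact pot_nonneg _ _
      · simpa using h1
    · refine (ind_le_one _).trans ?_
      rw [← pot_one C]
      exact pot_mono C (by omega)
  · rw [ind_true h]
    linarith [ind_le_one (s 0 < L), phi_nonneg (C := C) t L s]

end Potential

section PhaseTwo
variable {C t : ℕ} {κ L q : ℝ}

lemma alive_up {A : Matrix (Fin t) (Fin t) ℝ} (hA : IsSgn A) (hL : 0 < L) (hq0 : 0 < q)
    (hqt : q * (100 * ((t : ℝ) + 1) ^ 2) ≤ 1) {y : Fin t → ℝ} (hy : ∀ i, y i ^ 2 = 1) {d : ℝ}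
    (hd : d ^ 2 = 1) {r : ℕ} (hr : r ≤ t) (h : L * 100 ^ r ≤ seq A r) :
    L * q * 100 ^ r ≤ seq (_root_.ext A y d) r ∨
      L * q * 100 ^ (r + 1) ≤ seq (_root_.ext A y d) (r + 1) := by
  have ht0 : (0 : ℝ) ≤ t := by positivity
  have hr' : (r : ℝ) ≤ t := by exact_mod_cast hr
  have hp : 0 < L * 100 ^ r := by positivity
  have hq1 : q * 100 ≤ 1 := by
    refine le_trans ?_ hqt
    gcongr
    nlinarith
  have hc : (Fintype.card (Fin t) + r : ℝ) ≤ ((t : ℝ) + 1) ^ 2 := by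
    rw [Fintype.card_fin]; nlinarith
  rcases seq_ext hA hy hd r (by positivity) hc with h1 | h1
  · left
    have : L * 100 ^ r * q ≤ L * 100 ^ r * (1 / 4) := by gcongr; linarith
    linarith
  · right
    have h2 : L * 100 ^ r / ((t : ℝ) + 1) ^ 2 ≤ seq A r / ((t : ℝ) + 1) ^ 2 := by gcongr
    refine le_trans ?_ (h2.trans h1)
    rw [le_div_iff₀ (by positivity)]
    have : L * 100 ^ r * (q * (100 * ((t : ℝ) + 1) ^ 2)) ≤ L * 100 ^ r * 1 := by gcongr
    calc _ = L * 100 ^ r * (q * (100 * ((t : ℝ) + 1) ^ 2)) := by ring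
      _ ≤ _ := by linarith

/-- A live chain stays alive, whatever the border is. -/
lemma dead_step {A : Matrix (Fin t) (Fin t) ℝ} (hA : IsSgn A) (hL : 0 < L) (hq0 : 0 < q)
    (hqt : q * (100 * ((t : ℝ) + 1) ^ 2) ≤ 1) :
    evB A (fun B => ind (¬ Alive (t + 1) (L * q) (seq B))) ≤ ind (¬ Alive t L (seq A)) := by
  rw [← evB_const A (ind (¬ Alive t L (seq A)))]
  refine evB_mono fun y hy d hd => ind_mono fun h hal => h ?_
  obtain ⟨r, hr, h1⟩ := hal
  rcases alive_up hA hL hq0 hqt hy hd hr h1 with h2 | h2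
  exacts [⟨r, by omega, h2⟩, ⟨r + 1, by omega, h2⟩]

/-- The potential contracts in the mean. At level zero it can only grow to `pot C 1 = 1`, and only
if the permanent drops by more than the allowed loss `q`. -/
lemma phi_step
    (HS : ∀ (A : Matrix (Fin t) (Fin t) ℝ), IsSgn A → ∀ r : ℕ, C ≤ r →
      100 * seq A r ≤ seq A (r + 1) →
      evB A (fun B => ind (seq B r < κ * seq A (r + 1))) ≤ 1 / 4)
    {A : Matrix (Fin t) (Fin t) ℝ} (hA : IsSgn A) (hκ : 0 < κ) (hL : 0 < L) (hq0 : 0 < q)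
    (hqt : q * (100 * ((t : ℝ) + 1) ^ 2) ≤ 1) (hqκ : q ≤ 100 * κ) :
    evB A (fun B => phi C (t + 1) (L * q) (seq B)) ≤
      (1 - rate C) * phi C t L (seq A) +
      evB A (fun B => ind (0 < seq A 0 ∧ seq B 0 < q * seq A 0)) +
      2 ^ (t + 1) * ind (¬ Alive t L (seq A)) := by
  have hev0 : 0 ≤ evB A (fun B => ind (0 < seq A 0 ∧ seq B 0 < q * seq A 0)) := by
    rw [← evB_const A 0]
    exact evB_mono fun y hy d hd => ind_nonneg _
  by_cases hal : Alive t L (seq A)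
  swap
  · rw [ind_true hal, phi_dead hal]
    have : evB A (fun B => phi C (t + 1) (L * q) (seq B)) ≤ 2 ^ (t + 1) := by
      rw [← evB_const A (2 ^ (t + 1))]
      exact evB_mono fun y hy d hd => phi_le_pow _ _ _
    linarith
  rw [ind_false (not_not.mpr hal), mul_zero, add_zero]
  obtain ⟨r, hr, h1, hmin, h2⟩ := phi_spec (C := C) hal
  rw [h2]
  have hup : ∀ y : Fin t → ℝ, (∀ i, y i ^ 2 = 1) → ∀ d : ℝ, d ^ 2 = 1 →
      phi C (t + 1) (L * q) (seq (_root_.ext A y d)) ≤ pot C (r + 1) := by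
    intro y hy d hd
    rcases alive_up hA hL hq0 hqt hy hd hr h1 with h3 | h3
    · exact (phi_le (by omega) h3).trans (pot_mono C (by omega))
    · exact phi_le (by omega) h3
  rcases r with _ | r
  · rw [pot_zero, mul_zero, zero_add]
    refine evB_mono fun y hy d hd => ?_
    have h3 : 0 < seq A 0 := lt_of_lt_of_le hL (by simpa using h1)
    by_cases h4 : seq (_root_.ext A y d) 0 < q * seq A 0
    · rw [ind_true ⟨h3, h4⟩, ← pot_one C]
      exact hup y hy d hd
    · refine le_trans ?_ (ind_nonneg _)
      rw [← pot_zero C]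
      refine phi_le (by omega) ?_
      push Not at h4
      refine le_trans ?_ h4
      rw [pow_zero, mul_one, mul_comm]
      gcongr
      simpa using h1
  have hmono : pot C r ≤ pot C (r + 2) := pot_mono C (by omega)
  have e100 : L * 100 ^ (r + 1) = 100 * (L * 100 ^ r) := by ring
  rcases le_or_gt C r with hCr | hCr
  · have h3 := HS A hA r hCr (by have := hmin r (by omega); linarith)
    have h4 : evB A (fun B => phi C (t + 1) (L * q) (seq B)) ≤ evB A (fun B =>
        pot C r + (pot C (r + 2) - pot C r) * ind (seq B r < κ * seq A (r + 1))) := by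
      refine evB_mono fun y hy d hd => ?_
      by_cases h5 : seq (_root_.ext A y d) r < κ * seq A (r + 1)
      · rw [ind_true h5]
        have := hup y hy d hd
        linarith
      · rw [ind_false h5, mul_zero, add_zero]
        refine phi_le (by omega) ?_
        push Not at h5
        refine le_trans ?_ h5
        calc L * q * 100 ^ r ≤ L * (100 * κ) * 100 ^ r := by gcongr
          _ = κ * (L * 100 ^ (r + 1)) := by ring
          _ ≤ _ := by gcongr
    rw [evB_add, evB_const, evB_mul] at h4
    have h5 := mul_le_mul_of_nonneg_left h3 (sub_nonneg.mpr hmono)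
    have h6 := pot_high hCr
    linarith
  · have h3 := seq_coin hA r
    have h4 : evB A (fun B => phi C (t + 1) (L * q) (seq B)) ≤ evB A (fun B =>
        pot C (r + 2) + (-(pot C (r + 2) - pot C r)) *
        ind (seq A (r + 1) / (2048 * (Fintype.card (Fin t) + 1) ^ 2) ≤ seq B r)) := by
      refine evB_mono fun y hy d hd => ?_
      by_cases h5 : seq A (r + 1) / (2048 * (Fintype.card (Fin t) + 1) ^ 2) ≤
          seq (_root_.ext A y d) r
      · rw [ind_true h5]
        have : phi C (t + 1) (L * q) (seq (_root_.ext A y d)) ≤ pot C r := by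
          refine phi_le (by omega) (le_trans ?_ h5)
          rw [Fintype.card_fin, le_div_iff₀ (by positivity)]
          have h6 : L * 100 ^ r * (q * (100 * ((t : ℝ) + 1) ^ 2)) ≤ L * 100 ^ r * 1 := by gcongr
          have h7 : 0 ≤ L * 100 ^ r := by positivity
          have e : L * q * 100 ^ r * (2048 * ((t : ℝ) + 1) ^ 2) =
            2048 / 100 * (L * 100 ^ r * (q * (100 * ((t : ℝ) + 1) ^ 2))) := by ring
          rw [e]
          linarith
        linarith
      · rw [ind_false h5, mul_zero, add_zero]
        exact hup y hy d hd
    rw [evB_add, evB_const, evB_mul] at h4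
    have h5 := mul_le_mul_of_nonneg_left h3 (sub_nonneg.mpr hmono)
    have h6 := pot_low hCr
    linarith

end PhaseTwo

/-! ### Running the second phase -/

section Run

lemma evB_submatrix {V W : Type} [Fintype V] [DecidableEq V] [Fintype W] [DecidableEq W]
    (e : V ≃ W) (A : Matrix W W ℝ) (H : (ℕ → ℝ) → ℝ) :
    evB (A.submatrix e e) (fun B => H (seq B)) = evB A fun B => H (seq B) := by
  unfold evB
  rw [← ev_equiv (Equiv.arrowCongr e.symm (Equiv.refl Bool))]
  refine ev_congr fun η => ev_congr fun d => ?_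
  beta_reduce
  rw [← seq_submatrix (Equiv.optionCongr e) (_root_.ext A (fun i => rad (η i)) (rad d)),
    ext_submatrix]
  rfl

lemma lam_pos {m : ℕ} (hm : 1000 ≤ m) : 0 < lam m := by
  have : (0 : ℝ) < m := by exact_mod_cast (by omega : 0 < m)
  unfold lam bigB
  push_cast
  positivity

/-- The loss of a random border step at level zero, in the last steps of the chain. -/
lemma border_seq {m t : ℕ} (hm : 1000 ≤ m) (h1 : m ^ 100 ≤ t) (h2 : t + 1 ≤ m ^ 101) :
    Ex (Fin (t + 1)) (fun A => evB A fun B =>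
      ind (0 < seq A 0 ∧ seq B 0 < lam m ^ 2 * seq A 0)) ≤ 4 / (m : ℝ) := by
  refine le_trans (le_of_eq ?_) (border_small (V := Fin t) hm (by simpa using h1)
    (by simpa using h2))
  rw [Ex_equiv (finSuccEquiv t).symm]
  refine ev_congr fun ω => ?_
  beta_reduce
  rw [seq_submatrix, evB_submatrix _ _ fun s =>
    ind (0 < seq (sm ω) 0 ∧ s 0 < lam m ^ 2 * seq (sm ω) 0)]
  refine ev_congr fun η => ev_congr fun d => ?_
  beta_reduce
  congr 1
  rw [seq_zero, seq_zero, eq_iff_iff]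
  refine and_congr (by rw [sq_pos_iff]) ?_
  rw [← mul_pow, ← sq_abs, ← sq_abs (lam m * _), abs_mul, abs_of_pos (lam_pos hm)]
  have := lam_pos hm
  exact pow_lt_pow_iff_left₀ (abs_nonneg _) (by positivity) (by norm_num)

lemma rec_bound {a : ℕ → ℝ} {γ b : ℝ} (hγ : 0 < γ) (hγ1 : γ ≤ 1) (hb : 0 ≤ b) (s k : ℕ)
    (h : ∀ i < k, a (s + i + 1) ≤ (1 - γ) * a (s + i) + b) :
    a (s + k) ≤ (1 - γ) ^ k * a s + b / γ := by
  induction k with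
  | zero => simp; positivity
  | succ k ih =>
    have h1 := ih fun i hi => h i (by omega)
    have h2 := mul_le_mul_of_nonneg_left h1 (sub_nonneg.mpr hγ1)
    have h3 := h k (by omega)
    have h4 : (1 - γ) * (b / γ) = b / γ - b := by field_simp
    rw [← add_assoc]
    have h5 : (1 - γ) * ((1 - γ) ^ k * a s + b / γ) =
      (1 - γ) ^ (k + 1) * a s + (b / γ - b) := by rw [mul_add, h4]; ring
    linarith

/-- The run of the chain from `t1` to `n = t1 + T' + T2` real vertices; only in the last `T2`
steps the loss at level zero has to be rare. -/
theorem chain_run {C : ℕ} {κ : ℝ} (hκ : 0 < κ)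
    (HS : ∀ (t : ℕ) (A : Matrix (Fin t) (Fin t) ℝ), IsSgn A → ∀ r : ℕ, C ≤ r →
      100 * seq A r ≤ seq A (r + 1) →
      evB A (fun B => ind (seq B r < κ * seq A (r + 1))) ≤ 1 / 4)
    {t1 T' T2 n : ℕ} (hn : t1 + T' + T2 = n) {L q : ℕ → ℝ}
    (hL0 : ∀ t, 0 < L t) (hL : ∀ t, L (t + 1) = L t * q t) (hq0 : ∀ t, 0 < q t)
    (hqt : ∀ t < n, q t * (100 * ((t : ℝ) + 1) ^ 2) ≤ 1) (hqκ : ∀ t, q t ≤ 100 * κ)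
    {a0 d0 e0 : ℝ} (he0 : 0 ≤ e0)
    (ha : Ex (Fin t1) (fun A => phi C t1 (L t1) (seq A)) ≤ a0)
    (hd : Ex (Fin t1) (fun A => ind (¬ Alive t1 (L t1) (seq A))) ≤ d0)
    (he : ∀ t, t1 + T' ≤ t → t < n → Ex (Fin t) (fun A => evB A fun B =>
      ind (0 < seq A 0 ∧ seq B 0 < q t * seq A 0)) ≤ e0) :
    Ex (Fin n) (fun A => ind (seq A 0 < L n)) ≤
      d0 + ((1 - rate C) ^ T2 * ((1 - rate C) ^ T' * a0 + (1 + 2 ^ n * d0) / rate C) +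
        (e0 + 2 ^ n * d0) / rate C) := by
  have hγ := rate_pos C
  have hγ1 : rate C ≤ 1 := (rate_le C).trans (by norm_num)
  have hnn : ∀ t, 0 ≤ Ex (Fin t) (fun A => ind (¬ Alive t (L t) (seq A))) :=
    fun t => ev_nonneg fun _ => ind_nonneg _
  have hd0 : 0 ≤ d0 := (hnn t1).trans hd
  have hdd : ∀ k, t1 + k ≤ n →
      Ex (Fin (t1 + k)) (fun A => ind (¬ Alive (t1 + k) (L (t1 + k)) (seq A))) ≤ d0 := by
    intro k
    induction k with
    | zero => intro _; exact hd
    | succ k ih =>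
      intro hk
      refine le_trans ?_ (ih (by omega))
      rw [← add_assoc, Ex_step (t1 + k) fun s => ind (¬ Alive (t1 + k + 1) (L (t1 + k + 1)) s), hL]
      exact Ex_mono fun A hA => dead_step hA (hL0 _) (hq0 _) (hqt _ (by omega))
  obtain ⟨a, had⟩ : ∃ a : ℕ → ℝ, ∀ t, a t = Ex (Fin t) (fun A => phi C t (L t) (seq A)) :=
    ⟨_, fun _ => rfl⟩
  have hstep : ∀ k, t1 + k < n → ∀ e, Ex (Fin (t1 + k)) (fun A => evB A fun B =>
      ind (0 < seq A 0 ∧ seq B 0 < q (t1 + k) * seq A 0)) ≤ e →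
      a (t1 + k + 1) ≤ (1 - rate C) * a (t1 + k) + (e + 2 ^ n * d0) := by
    intro k hk e hee
    rw [had, had, Ex_step (t1 + k) fun s => phi C (t1 + k + 1) (L (t1 + k + 1)) s, hL]
    have h1 := Ex_mono (ι := Fin (t1 + k)) (fun A hA => phi_step (HS (t1 + k)) hA hκ
      (hL0 (t1 + k)) (hq0 (t1 + k)) (hqt _ hk) (hqκ (t1 + k)))
    rw [Ex_add, Ex_add, Ex_mul, Ex_mul] at h1
    have h2 := hdd k (by omega)
    have h3 : (2 : ℝ) ^ (t1 + k + 1) *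
        Ex (Fin (t1 + k)) (fun A => ind (¬ Alive (t1 + k) (L (t1 + k)) (seq A))) ≤ 2 ^ n * d0 := by
      refine mul_le_mul ?_ h2 (hnn _) (by positivity)
      exact pow_le_pow_right₀ (by norm_num) (by omega)
    linarith
  have hp : (0 : ℝ) ≤ 2 ^ n * d0 := by positivity
  have r1 := rec_bound hγ hγ1 (b := 1 + 2 ^ n * d0) (by linarith) t1 T'
    (a := a) fun i hi => hstep i (by omega) 1 (by
      calc _ ≤ Ex (Fin (t1 + i)) fun _ => 1 := Ex_mono fun A hA => by
              rw [← evB_const A 1]; exact evB_mono fun _ _ _ _ => ind_le_one _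
        _ = 1 := Ex_const _)
  have r2 := rec_bound hγ hγ1 (b := e0 + 2 ^ n * d0) (by linarith) (t1 + T') T2
    (a := a) fun i hi => by
      have := hstep (T' + i) (by omega) e0 (he _ (by omega) (by omega))
      rw [← add_assoc] at this
      exact this
  rw [hn] at r2
  have hg : 0 ≤ 1 - rate C := by linarith
  have r3 : (1 - rate C) ^ T' * a t1 ≤ (1 - rate C) ^ T' * a0 :=
    mul_le_mul_of_nonneg_left (by rw [had]; exact ha) (pow_nonneg hg _)
  have r4 := mul_le_mul_of_nonneg_left (r1.trans (add_le_add_left r3 _)) (pow_nonneg hg T2)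
  have hfin := Ex_mono (ι := Fin n) (fun A _ =>
    ind_lt_le_phi (C := C) (t := n) (L := L n) (s := seq A))
  rw [Ex_add, ← had] at hfin
  have hdn := hdd (T' + T2) (by omega)
  rw [show t1 + (T' + T2) = n by omega] at hdn
  linarith

end Run

/-! ### Reduction to the uniform average, and the start of the second phase -/

section Conversion

lemma prob_eq_Ex (n : ℕ) (P : Matrix (Fin n) (Fin n) ℝ → Prop) :
    prob n P = Ex (Fin n) fun A => ind (P A) := by
  classical
  have h1 : prob n P = ev fun ω : Fin n → Fin n → Bool => ind (P (symMat n ω)) := by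
    unfold prob ev ind
    rw [← Finset.sum_boole]
    congr 1
    simp [Fintype.card_fun, ← pow_mul]
  rw [h1, ← ev_equiv (Equiv.curry (Fin n) (Fin n) Bool)]
  let e : Sym2 (Fin n) → Fin n × Fin n := fun s => (s.inf, s.sup)
  have he : Function.Injective e := by
    intro s s' h
    induction s using Sym2.ind with | _ a b =>
    induction s' using Sym2.ind with | _ c d =>
    simp only [e, Sym2.inf_mk, Sym2.sup_mk, Prod.mk.injEq] at h
    obtain ⟨h1, h2⟩ := h
    rw [Sym2.eq_iff]
    simp only [Fin.ext_iff, Fin.coe_min, Fin.coe_max] at *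
    omega
  unfold Ex
  rw [← ev_restrict e he fun ω => ind (P (sm ω))]
  refine ev_congr fun f => ?_
  beta_reduce
  have : symMat n (Equiv.curry (Fin n) (Fin n) Bool f) = sm fun a => f (e a) := by
    ext i j
    simp only [symMat, sm, e, Sym2.inf_mk, Sym2.sup_mk, Equiv.curry_apply, Function.curry]
    split_ifs with h
    · rw [inf_eq_left.mpr h, sup_eq_right.mpr h]
    · rw [inf_eq_right.mpr (by omega), sup_eq_left.mpr (by omega)]
  rw [this]

end Conversion

section Start
variable {δ : ℝ}

/-- The first phase, stopped when a proportion of about `δ` virtual vertices is left: apart from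
an exponentially small probability, a level between `D + 1` and `3 D + 1` carries mass. -/
theorem phase_one (hδ : 0 < δ) (hδ1 : δ ≤ 1) : ∃ κ : ℝ, 0 < κ ∧ κ ≤ 1 / 4 ∧ ∃ N1 : ℕ,
    ∀ n : ℕ, N1 ≤ n → ∀ t1 ≤ n, ∀ D : ℕ, D = ⌊δ * n⌋₊ → 3 * D + 1 ≤ t1 →
      Ex (Fin t1) (fun A => ind (¬ Good (t1 + D + 1) κ ((t1 + D).factorial : ℝ) (4 * n) t1 D
        (seq A))) ≤ (1 / 8) ^ n := by
  obtain ⟨k, hk⟩ := exists_nat_ge (2 / δ)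
  obtain ⟨C, κ0, hκ0, hC⟩ := seq_large_prop (δ := (1 / 16) ^ k) (α := δ / 8) (by positivity)
    (by positivity)
  obtain ⟨N1, hN1⟩ := exists_nat_ge ((C + 2) * (2 / δ))
  refine ⟨min κ0 (1 / 4), by positivity, min_le_right _ _, N1, ?_⟩
  intro n hn t1 ht1 D hD hDt
  have hn' : ((C : ℝ) + 2) * (2 / δ) ≤ n := hN1.trans (by exact_mod_cast hn)
  have hδn : (C + 2) * 2 ≤ δ * n := by
    have h := mul_le_mul_of_nonneg_left hn' hδ.le
    have e : δ * (((C : ℝ) + 2) * (2 / δ)) = (C + 2) * 2 := by field_simp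
    linarith
  have hC0 : (0 : ℝ) ≤ C := by positivity
  have hD1 : (D : ℝ) ≤ δ * n := by rw [hD]; exact Nat.floor_le (by positivity)
  have hD2 : δ * n < D + 1 := by rw [hD]; exact Nat.lt_floor_add_one _
  have hCD : C ≤ D := by
    have : (C : ℝ) ≤ D := by linarith
    exact_mod_cast this
  have hDk : n ≤ k * D := by
    have h1 : δ * n / 2 ≤ D := by linarith
    have h2 : (2 / δ) * (δ * n / 2) ≤ k * D := by gcongr
    have h3 : (2 / δ) * (δ * n / 2) = n := by field_simp
    have : (n : ℝ) ≤ (k * D : ℕ) := by push_cast; linarith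
    exact_mod_cast this
  have key := good_prob (N0 := t1 + D + 1) (t1 := t1) (U := D) (κ := min κ0 (1 / 4))
    (Λ := ((t1 + D).factorial : ℝ)) (q := 4 * n) (δ := (1 / 16) ^ k) (by positivity)
    (min_le_right _ _) (by positivity) ?_ (by positivity) (by omega) ?_ ?_ ?_ t1 le_rfl D le_rfl
  · refine key.trans ?_
    rw [← pow_mul]
    calc (2 : ℝ) ^ t1 * (1 / 16) ^ (k * D) ≤ 2 ^ n * (1 / 16) ^ n := by
          refine mul_le_mul (pow_le_pow_right₀ (by norm_num) ht1)
            (pow_le_pow_of_le_one (by norm_num) (by norm_num) hDk) (by positivity) (by positivity)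
      _ = (1 / 8) ^ n := by rw [← mul_pow]; norm_num
  · have : (1 : ℝ) ≤ n := by exact_mod_cast (by omega : 1 ≤ n)
    linarith
  · have : t1 + D + 1 + 2 * D ≤ 4 * n := by omega
    exact_mod_cast this
  · intro t ht A hA r hr
    have hrD : D + 1 ≤ r := by omega
    have h1 := hC (Fin t) A hA r (by omega) (by omega) (by
      rw [Fintype.card_fin]
      have h2 : (t : ℝ) ≤ n := by exact_mod_cast (by omega : t ≤ n)
      have h3 : (D : ℝ) + 1 ≤ r := by exact_mod_cast hrD
      have h4 : δ * t ≤ δ * n := by gcongr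
      have h5 : δ * r ≤ 1 * r := by gcongr
      linarith)
    refine le_trans (evB_mono fun y hy d hd => ind_mono fun h => lt_of_lt_of_le h ?_) h1
    exact mul_le_mul_of_nonneg_right (min_le_left _ _) (seq_nonneg _ _)
  · intro A
    obtain ⟨j, hj⟩ : ∃ j, t1 + D = j + 1 := ⟨t1 + D - 1, by omega⟩
    rw [hj]
    exact Psi_start j A

/-- A good outcome of the first phase is a starting point of the second one. -/
lemma good_alive {C n t1 D : ℕ} {κ : ℝ} (hκ : 0 < κ) (hκ1 : κ ≤ 1) (ht1 : t1 ≤ n)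
    (hDt : 3 * D + 1 ≤ t1) {s : ℕ → ℝ}
    (h : Good (t1 + D + 1) κ ((t1 + D).factorial : ℝ) (4 * n) t1 D s) {L : ℝ}
    (hL : L * 100 ^ (3 * D + 1) = κ ^ n * ((t1 + D).factorial : ℝ) / (4 * n) ^ D) (hL0 : 0 ≤ L) :
    Alive t1 L s ∧ phi C t1 L s ≤ 2 ^ (3 * D + 1) := by
  obtain ⟨r, hr1, hr2, hr3⟩ := h
  have hr : r ≤ 3 * D + 1 := by omega
  have h1 : L * 100 ^ r ≤ s r := by
    calc L * 100 ^ r ≤ L * 100 ^ (3 * D + 1) := by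
          gcongr
          norm_num
      _ = _ := hL
      _ ≤ κ ^ t1 * ((t1 + D).factorial : ℝ) / (4 * n) ^ D := by
          gcongr ?_ * _ / _
          exact pow_le_pow_of_le_one hκ.le hκ1 ht1
      _ ≤ _ := hr3
  refine ⟨⟨r, by omega, h1⟩, (phi_le (by omega) h1).trans ((pot_le C r).trans ?_)⟩
  exact pow_le_pow_right₀ (by norm_num) hr

end Start

/-! ### Logarithmic sizes of the thresholds -/

section Params

lemma lam_log {m : ℕ} (hm : 1000 ≤ m) : -Real.log (lam m) ≤ 100 * (m : ℝ) ^ 21 := by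
  obtain ⟨x, hx⟩ : ∃ x : ℝ, x = m := ⟨_, rfl⟩
  have hx1 : (1000 : ℝ) ≤ x := by rw [hx]; exact_mod_cast hm
  have hx0 : x ≠ 0 := by linarith
  have hl0 : 0 ≤ Real.log x := Real.log_nonneg (by linarith)
  have hl : Real.log x ≤ x := (Real.log_le_sub_one_of_pos (by linarith)).trans (by linarith)
  have h40 : Real.log 4096 ≤ 2 * Real.log x := by
    rw [← Real.log_rpow (by linarith)]
    refine Real.log_le_log (by norm_num) ?_
    rw [Real.rpow_ofNat]
    nlinarith
  have e : Real.log (bigB m) = (2 * x ^ 20 + 1) * (20 * Real.log x) := by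
    unfold bigB
    rw [Real.log_pow]
    push_cast
    rw [← hx, Real.log_pow]
    push_cast
    ring
  have hB : bigB m ≠ 0 := by unfold bigB; push_cast; rw [← hx]; positivity
  unfold lam
  rw [← hx, one_div, Real.log_inv, neg_neg, Real.log_mul (by positivity) (by positivity),
    Real.log_mul (by positivity) (by positivity), Real.log_mul (by norm_num) (by positivity),
    Real.log_pow, Real.log_pow, Real.log_pow, Real.log_pow, Real.log_pow, e]
  push_cast
  have h1 : Real.log x ≤ x ^ 20 * Real.log x :=
    le_mul_of_one_le_left hl0 (one_le_pow₀ (by linarith))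
  have h2 : x ^ 20 * Real.log x ≤ x ^ 20 * x := by gcongr
  have h3 : 1000 * Real.log x ≤ x ^ 20 * Real.log x := by
    gcongr
    exact hx1.trans (le_self_pow₀ (by linarith) (by norm_num))
  have h4 : x ^ 20 * x = x ^ 21 := by ring
  have h5 : 0 ≤ x ^ 21 := by positivity
  linarith

lemma lam_le {m : ℕ} (hm : 1000 ≤ m) : lam m ≤ 1 / (m : ℝ) ^ 505 := by
  obtain ⟨x, hx⟩ : ∃ x : ℝ, x = m := ⟨_, rfl⟩
  have hx1 : (1000 : ℝ) ≤ x := by rw [hx]; exact_mod_cast hm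
  have hB : 1 ≤ bigB m := by
    unfold bigB; push_cast; rw [← hx]
    exact one_le_pow₀ (one_le_pow₀ (by linarith))
  unfold lam
  rw [← hx]
  refine one_div_le_one_div_of_le (by positivity) ?_
  have h1 : 1 ≤ 4096 * (x ^ 20) ^ 2 * bigB m ^ 2 := by
    have h2 : 1 ≤ (x ^ 20) ^ 2 := one_le_pow₀ (one_le_pow₀ (by linarith))
    have h3 : 1 ≤ bigB m ^ 2 := one_le_pow₀ hB
    exact one_le_mul_of_one_le_of_one_le (by linarith) h3
  calc x ^ 505 = 1 * (x ^ 101) ^ 5 := by ring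
    _ ≤ _ := by gcongr

lemma log_factorial_ge {t : ℕ} (ht : 0 < t) :
    t * Real.log t - t ≤ Real.log (t.factorial : ℝ) := by
  have h0 : (0 : ℝ) < t := by exact_mod_cast ht
  have hf : (0 : ℝ) < (t.factorial : ℝ) := by exact_mod_cast t.factorial_pos
  have h := Real.pow_div_factorial_le_exp (t : ℝ) h0.le t
  have h1 := Real.log_le_log (by positivity) h
  rw [Real.log_exp, Real.log_div (by positivity) hf.ne', Real.log_pow] at h1
  linarith

/-- The mass left by the first phase is `n ^ (n - O(ε n))`. -/
lemma start_log {n t1 D : ℕ} {κ ε : ℝ} (hκ : 0 < κ) (hε : 0 ≤ ε)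
    (ht : (n : ℝ) - ε * n ≤ t1) (ht1 : t1 ≤ n) (ht2 : n ≤ 2 * t1) (hn : 3 ≤ n)
    (hD : (D : ℝ) ≤ ε * n) (hDn : 3 * D + 1 ≤ n) :
    n * Real.log n - 2 * ε * (n * Real.log n) - (103 - Real.log κ) * n ≤
      Real.log (κ ^ n * ((t1 + D).factorial : ℝ) / (4 * n) ^ D / 100 ^ (3 * D + 1)) := by
  obtain ⟨N, hN⟩ : ∃ N : ℝ, N = n := ⟨_, rfl⟩
  have hN3 : (3 : ℝ) ≤ N := by rw [hN]; exact_mod_cast hn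
  have hf : (0 : ℝ) < ((t1 + D).factorial : ℝ) := by exact_mod_cast (t1 + D).factorial_pos
  rw [← hN] at ht hD ⊢
  have hl1 : 1 ≤ Real.log N := by
    rw [Real.le_log_iff_exp_le (by linarith)]
    linarith [Real.exp_one_lt_d9]
  have hl4 : Real.log 4 ≤ 3 := (Real.log_le_sub_one_of_pos (by norm_num)).trans (by norm_num)
  have hl2 : Real.log 2 ≤ 1 := (Real.log_le_sub_one_of_pos (by norm_num)).trans (by norm_num)
  have hl100 : Real.log 100 ≤ 99 :=
    (Real.log_le_sub_one_of_pos (by norm_num)).trans (by norm_num)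
  rw [Real.log_div (by positivity) (by positivity), Real.log_div (by positivity) (by positivity),
    Real.log_mul (by positivity) (by positivity), Real.log_pow, Real.log_pow, Real.log_pow,
    Real.log_mul (by norm_num) (by positivity)]
  push_cast
  rw [← hN]
  have ht0 : 0 < t1 := by omega
  have ht1' : (t1 : ℝ) ≤ N := by rw [hN]; exact_mod_cast ht1
  have ht2' : N ≤ 2 * t1 := by rw [hN]; exact_mod_cast ht2
  have ht0' : (0 : ℝ) < t1 := by exact_mod_cast ht0
  have h1 := log_factorial_ge ht0
  have h2 : Real.log (t1.factorial : ℝ) ≤ Real.log ((t1 + D).factorial : ℝ) := by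
    refine Real.log_le_log (by exact_mod_cast t1.factorial_pos) ?_
    exact_mod_cast Nat.factorial_le (by omega)
  have h3 : Real.log N - 1 ≤ Real.log t1 := by
    have := Real.log_le_log (by linarith) ht2'
    rw [Real.log_mul (by norm_num) ht0'.ne'] at this
    linarith
  have h4 : (t1 : ℝ) * (Real.log N - 1) ≤ t1 * Real.log t1 := by gcongr
  have h5 : (N - ε * N) * Real.log N ≤ t1 * Real.log N := by gcongr
  have h6 : (D : ℝ) * Real.log N ≤ ε * N * Real.log N := by gcongr
  have hDn' : 3 * (D : ℝ) + 1 ≤ N := by rw [hN]; exact_mod_cast hDn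
  have hD0 : (0 : ℝ) ≤ D := by positivity
  have h7 : (D : ℝ) * Real.log 4 ≤ D * 3 := by gcongr
  have h8 : (3 * (D : ℝ) + 1) * Real.log 100 ≤ N * 99 := by
    refine mul_le_mul hDn' hl100 (Real.log_nonneg (by norm_num)) (by linarith)
  linarith

end Params

/-! ### Choice of the parameters -/

section Core

lemma one_sub_pow_le {γ : ℝ} (h1 : γ ≤ 1) (k : ℕ) : (1 - γ) ^ k ≤ Real.exp (-(γ * k)) := by
  calc (1 - γ) ^ k ≤ Real.exp (-γ) ^ k :=
        pow_le_pow_left₀ (by linarith) (Real.one_sub_le_exp_neg γ) k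
    _ = Real.exp (-(γ * k)) := by rw [← Real.exp_nat_mul]; congr 1; ring

/-- Numerical constraints on the lengths of the phases. -/
lemma lengths {γ ε : ℝ} (hγ : 0 < γ) (hγ1 : γ ≤ 1 / 16) (hε : 0 < ε) (hε1 : ε ≤ 1 / 10)
    {m n T T2 D : ℕ} (hm : 1000 ≤ m) (hmγ : 1000 ≤ γ * ε * m) (hn1 : 2 * m ^ 100 ≤ n)
    (hn2 : n ≤ m ^ 101) (hT : T = ⌊ε * n⌋₊) (hT2 : T2 = ⌈Real.log n / γ⌉₊)
    (hD : D = ⌊γ * ε / 16 * n⌋₊) :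
    (T2 : ℝ) ≤ (m : ℝ) ^ 3 ∧ T2 ≤ T ∧ T2 + 1 ≤ m ^ 100 ∧ 3 * D + 1 ≤ n - T ∧
      (3 * D + 2 : ℝ) ≤ γ * (T - T2 : ℝ) ∧ (T : ℝ) ≤ ε * n ∧ (D : ℝ) ≤ ε * n ∧ 10 * T ≤ n := by
  obtain ⟨x, hx⟩ : ∃ x : ℝ, x = m := ⟨_, rfl⟩
  have hx1 : (1000 : ℝ) ≤ x := by rw [hx]; exact_mod_cast hm
  obtain ⟨N, hN⟩ : ∃ N : ℝ, N = n := ⟨_, rfl⟩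
  have hN1 : 2 * x ^ 100 ≤ N := by rw [hx, hN]; exact_mod_cast hn1
  have hN2 : N ≤ x ^ 101 := by rw [hx, hN]; exact_mod_cast hn2
  rw [← hx] at hmγ ⊢
  rw [← hN] at hT hT2 hD ⊢
  have hx0 : 0 < x := by linarith
  have hp : 0 < x ^ 100 := by positivity
  have hNpos : 0 < N := by linarith
  have hx2 : 1 ≤ x ^ 2 := one_le_pow₀ (by linarith)
  have hεx : 1000 ≤ ε * x := by
    refine hmγ.trans ?_
    have : γ * (ε * x) ≤ 1 * (ε * x) := by gcongr; linarith
    linarith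
  have hγx : 1 ≤ γ * x := by
    have : γ * x * ε ≤ γ * x * 1 := by gcongr; linarith
    linarith
  have hlog : Real.log N ≤ 101 * x := by
    have h1 := Real.log_le_log hNpos hN2
    rw [Real.log_pow] at h1
    have h2 := Real.log_le_sub_one_of_pos hx0
    push_cast at h1
    linarith
  have hlog0 : 0 ≤ Real.log N := Real.log_nonneg (by
    have := one_le_pow₀ (show (1 : ℝ) ≤ x by linarith) (n := 100); linarith)
  have hT2le : (T2 : ℝ) ≤ x ^ 3 := by
    have h1 : (T2 : ℝ) < Real.log N / γ + 1 := by
      rw [hT2]; exact Nat.ceil_lt_add_one (by positivity)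
    have h2 : Real.log N / γ ≤ 101 * x ^ 2 := by
      rw [div_le_iff₀ hγ]
      calc Real.log N ≤ 101 * x * 1 := by linarith
        _ ≤ 101 * x * (γ * x) := by gcongr
        _ = _ := by ring
    have h3 := pow_gap hx1 (show 2 < 3 by norm_num)
    linarith
  have hTle : (T : ℝ) ≤ ε * N := by rw [hT]; exact Nat.floor_le (by positivity)
  have hTge : ε * N < T + 1 := by rw [hT]; exact Nat.lt_floor_add_one _
  have hDle : (D : ℝ) ≤ γ * ε / 16 * N := by rw [hD]; exact Nat.floor_le (by positivity)
  have hεN : 2000 * x ^ 99 ≤ ε * N := by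
    calc 2000 * x ^ 99 ≤ 2 * (ε * x) * x ^ 99 := by gcongr; linarith
      _ = ε * (2 * x ^ 100) := by ring
      _ ≤ ε * N := by gcongr
  have hγεN : 2000 * x ^ 99 ≤ γ * ε * N := by
    calc 2000 * x ^ 99 ≤ 2 * (γ * ε * x) * x ^ 99 := by gcongr; linarith
      _ = γ * ε * (2 * x ^ 100) := by ring
      _ ≤ γ * ε * N := by gcongr
  have h99 : 1000 * x ^ 3 ≤ x ^ 99 := pow_gap hx1 (by norm_num)
  have h991 : x ^ 99 * 1000 ≤ x ^ 100 := by
    have := pow_gap hx1 (show 99 < 100 by norm_num); linarith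
  have hx3 : 1 ≤ x ^ 3 := one_le_pow₀ (by linarith)
  have hεN10 : ε * N ≤ 1 / 10 * N := by gcongr
  have hγε : γ * ε * N ≤ 1 / 16 * (ε * N) := by
    have : γ * (ε * N) ≤ 1 / 16 * (ε * N) := by gcongr
    linarith
  have hT10 : 10 * T ≤ n := by
    have : 10 * (T : ℝ) ≤ n := by rw [← hN]; linarith
    exact_mod_cast this
  refine ⟨hT2le, ?_, ?_, ?_, ?_, hTle, by linarith, hT10⟩
  · have : (T2 : ℝ) ≤ T := by linarith
    exact_mod_cast this
  · have : (T2 : ℝ) + 1 ≤ (m : ℝ) ^ 100 := by rw [← hx]; linarith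
    exact_mod_cast this
  · have h1 : 3 * (D : ℝ) + 1 + T ≤ n := by rw [← hN]; linarith
    have : 3 * D + 1 + T ≤ n := by exact_mod_cast h1
    omega
  · have h1 : ε * N / 2 ≤ T - T2 := by linarith
    have h2 : γ * (ε * N / 2) ≤ γ * (T - T2) := by gcongr
    linarith

/-- The failure probability produced by the two phases is `O(1 / x)`. -/
lemma final_estimate {γ x N : ℝ} {n T' T2 D : ℕ} (hγ : 0 < γ) (hγ1 : γ ≤ 1 / 16)
    (hx1 : 1000 ≤ x) (hxN : x ≤ N) (hN : N = n) (l5 : (3 * D + 2 : ℝ) ≤ γ * T')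
    (h1 : Real.log N ≤ γ * T2) :
    (1 / 8 : ℝ) ^ n + ((1 - γ) ^ T2 * ((1 - γ) ^ T' * 2 ^ (3 * D + 2) +
      (1 + 2 ^ n * (1 / 8 : ℝ) ^ n) / γ) + (4 / x + 2 ^ n * (1 / 8 : ℝ) ^ n) / γ) ≤
      20 / (γ * x) := by
  have hx0 : 0 < x := by linarith
  have hNpos : 0 < N := by linarith
  have hg1 : γ ≤ 1 := by linarith
  have p1 : (1 - γ) ^ T' * 2 ^ (3 * D + 2) ≤ 1 := by
    have h2 : (2 : ℝ) ≤ Real.exp 1 := by linarith [Real.exp_one_gt_d9]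
    have h3 : (2 : ℝ) ^ (3 * D + 2) ≤ Real.exp (3 * D + 2 : ℝ) := by
      calc (2 : ℝ) ^ (3 * D + 2) ≤ Real.exp 1 ^ (3 * D + 2) :=
            pow_le_pow_left₀ (by norm_num) h2 _
        _ = Real.exp (3 * D + 2 : ℝ) := by
            rw [← Real.exp_nat_mul]; push_cast; rw [mul_one]
    calc (1 - γ) ^ T' * 2 ^ (3 * D + 2) ≤ Real.exp (-(γ * T')) * Real.exp (3 * D + 2 : ℝ) :=
          mul_le_mul (one_sub_pow_le hg1 T') h3 (by positivity) (Real.exp_pos _).le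
      _ = Real.exp (-(γ * T') + (3 * D + 2)) := (Real.exp_add _ _).symm
      _ ≤ 1 := by
          rw [Real.exp_le_one_iff]
          linarith
  have p2 : (1 - γ) ^ T2 ≤ 1 / x := by
    refine (one_sub_pow_le hg1 T2).trans ?_
    calc Real.exp (-(γ * T2)) ≤ Real.exp (-Real.log N) := by
          apply Real.exp_le_exp.mpr; linarith
      _ = 1 / N := by rw [Real.exp_neg, Real.exp_log hNpos, one_div]
      _ ≤ 1 / x := one_div_le_one_div_of_le hx0 hxN
  have p3 : (2 : ℝ) ^ n * (1 / 8) ^ n ≤ 1 / x := by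
    rw [← mul_pow]
    have h1 : (n : ℝ) ≤ 2 ^ n := by exact_mod_cast n.lt_two_pow_self.le
    have h2 : (2 : ℝ) ^ n ≤ 4 ^ n := pow_le_pow_left₀ (by norm_num) (by norm_num) n
    rw [show (2 : ℝ) * (1 / 8) = 1 / 4 by norm_num, div_pow, one_pow]
    refine one_div_le_one_div_of_le hx0 ?_
    linarith
  have p4 : (1 / 8 : ℝ) ^ n ≤ 1 / x := by
    refine le_trans ?_ p3
    exact le_mul_of_one_le_left (by positivity) (one_le_pow₀ (by norm_num))
  have p5 : (1 : ℝ) / x ≤ 1 := by rw [div_le_one hx0]; linarith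
  have hix : 0 < 1 / x := by positivity
  obtain ⟨i, hi⟩ : ∃ i, i = 1 / x := ⟨_, rfl⟩
  rw [← hi] at p2 p3 p4 p5 hix
  have hgi : 1 ≤ 1 / γ := by rw [le_div_iff₀ hγ]; linarith
  obtain ⟨g, hg⟩ : ∃ g, g = 1 / γ := ⟨_, rfl⟩
  rw [← hg] at hgi
  have e0 : 20 / (γ * x) = 20 * (i * g) := by rw [hi, hg]; field_simp
  have e1 : (1 + 2 ^ n * (1 / 8 : ℝ) ^ n) / γ = (1 + 2 ^ n * (1 / 8 : ℝ) ^ n) * g := by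
    rw [hg]; ring
  have e2 : (4 / x + 2 ^ n * (1 / 8 : ℝ) ^ n) / γ = (4 * i + 2 ^ n * (1 / 8 : ℝ) ^ n) * g := by
    rw [hg, hi]; ring
  rw [e0, e1, e2]
  have b1 : (1 + 2 ^ n * (1 / 8 : ℝ) ^ n) * g ≤ 2 * g := by gcongr; linarith
  have b2 : (4 * i + 2 ^ n * (1 / 8 : ℝ) ^ n) * g ≤ 5 * i * g := by gcongr; linarith
  have b3 : (1 - γ) ^ T2 * ((1 - γ) ^ T' * 2 ^ (3 * D + 2) +
      (1 + 2 ^ n * (1 / 8 : ℝ) ^ n) * g) ≤ i * (3 * g) := by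
    refine mul_le_mul p2 (by linarith) ?_ hix.le
    have : 0 ≤ 1 - γ := by linarith
    positivity
  have b4 : i ≤ i * g := le_mul_of_one_le_right hix.le hgi
  linarith

set_option maxHeartbeats 1600000 in
/-- For `n` between `2 m ^ 100` and `m ^ 101`, the squared permanent is at least
`n ^ (n - 5 ε n)`, up to a factor exponential in `n`, with probability `1 - O(1 / m)`. -/
theorem core {C : ℕ} {κ2 : ℝ} (hκ2 : 0 < κ2)
    (HS : ∀ (t : ℕ) (A : Matrix (Fin t) (Fin t) ℝ), IsSgn A → ∀ r : ℕ, C ≤ r →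
      100 * seq A r ≤ seq A (r + 1) →
      evB A (fun B => ind (seq B r < κ2 * seq A (r + 1))) ≤ 1 / 4)
    {ε : ℝ} (hε : 0 < ε) (hε1 : ε ≤ 1 / 10) :
    ∃ (K : ℝ) (M : ℕ), ∀ m n : ℕ, M ≤ m → 2 * m ^ 100 ≤ n → n ≤ m ^ 101 →
      ∃ L : ℝ, 0 < L ∧ n * Real.log n - 5 * ε * (n * Real.log n) - K * n ≤ Real.log L ∧
        Ex (Fin n) (fun A => ind (seq A 0 < L)) ≤ 20 / (rate C * m) := by
  have hγ := rate_pos C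
  have hγ1 := rate_le C
  obtain ⟨γ, hγd⟩ : ∃ γ, γ = rate C := ⟨_, rfl⟩
  rw [← hγd] at hγ hγ1 ⊢
  obtain ⟨κ, hκ, hκ4, N1, hN1⟩ := phase_one (δ := γ * ε / 16) (by positivity) (by nlinarith)
  obtain ⟨M1, hM1⟩ := exists_nat_ge (1000 / (γ * ε))
  obtain ⟨M2, hM2⟩ := exists_nat_ge (1 / κ2)
  refine ⟨104 - Real.log κ, max (max 1000 N1) (max M1 M2), fun m n hm hn1 hn2 => ?_⟩
  have hm1000 : 1000 ≤ m := by omega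
  have hmN : m ≤ n := by
    have : m ≤ m ^ 100 := Nat.le_self_pow (by norm_num) m
    omega
  obtain ⟨x, hx⟩ : ∃ x : ℝ, x = m := ⟨_, rfl⟩
  have hx1 : (1000 : ℝ) ≤ x := by rw [hx]; exact_mod_cast hm1000
  have hx0 : 0 < x := by linarith
  obtain ⟨N, hN⟩ : ∃ N : ℝ, N = n := ⟨_, rfl⟩
  have hxN : x ≤ N := by rw [hx, hN]; exact_mod_cast hmN
  have hNpos : 0 < N := by linarith
  have hN2 : N ≤ x ^ 101 := by rw [hx, hN]; exact_mod_cast hn2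
  have hN100 : 2 * x ^ 100 ≤ N := by rw [hx, hN]; exact_mod_cast hn1
  have hmγ : 1000 ≤ γ * ε * m := by
    have h1 : 1000 / (γ * ε) ≤ m := hM1.trans (by exact_mod_cast (by omega : M1 ≤ m))
    rw [div_le_iff₀ (by positivity)] at h1
    linarith
  have hκx : 1 ≤ κ2 * x := by
    have h1 : 1 / κ2 ≤ m := hM2.trans (by exact_mod_cast (by omega : M2 ≤ m))
    rw [div_le_iff₀ hκ2] at h1
    rw [hx]; linarith
  obtain ⟨T, hT⟩ : ∃ T, T = ⌊ε * n⌋₊ := ⟨_, rfl⟩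
  obtain ⟨T2, hT2⟩ : ∃ T2, T2 = ⌈Real.log n / γ⌉₊ := ⟨_, rfl⟩
  obtain ⟨D, hD⟩ : ∃ D, D = ⌊γ * ε / 16 * n⌋₊ := ⟨_, rfl⟩
  obtain ⟨l1, l2, l3, l4, l5, l6, l7, l8⟩ :=
    lengths hγ hγ1 hε hε1 hm1000 hmγ hn1 hn2 hT hT2 hD
  obtain ⟨T', hT'⟩ : ∃ T', T' = T - T2 := ⟨_, rfl⟩
  obtain ⟨t1, ht1⟩ : ∃ t1, t1 = n - T := ⟨_, rfl⟩
  have hsum : t1 + T' + T2 = n := by omega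
  rw [← ht1] at l4
  have hP := hN1 n (by omega) t1 (by omega) D hD l4
  have hlam := lam_pos hm1000
  -- the losses: polynomial until the last `T2` steps
  let q : ℕ → ℝ := fun t => if t < t1 + T' then 1 / N ^ 3 else lam m ^ 2
  have hq0 : ∀ t, 0 < q t := fun t => by simp only [q]; split_ifs <;> positivity
  have hqle : ∀ t, q t ≤ 1 / N ^ 3 := fun t => by
    simp only [q]
    split_ifs
    · exact le_rfl
    · calc lam m ^ 2 ≤ (1 / x ^ 505) ^ 2 := by
            rw [hx]; exact pow_le_pow_left₀ hlam.le (lam_le hm1000) 2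
        _ = 1 / x ^ 1010 := by rw [div_pow, one_pow, ← pow_mul]
        _ ≤ 1 / N ^ 3 := by
            refine one_div_le_one_div_of_le (by positivity) ?_
            calc N ^ 3 ≤ (x ^ 101) ^ 3 := by gcongr
              _ = x ^ 303 := by rw [← pow_mul]
              _ ≤ x ^ 1010 := pow_le_pow_right₀ (by linarith) (by norm_num)
  have hqt : ∀ t < n, q t * (100 * ((t : ℝ) + 1) ^ 2) ≤ 1 := fun t ht => by
    have h1 : (t : ℝ) + 1 ≤ N := by rw [hN]; exact_mod_cast ht
    calc q t * (100 * ((t : ℝ) + 1) ^ 2) ≤ 1 / N ^ 3 * (N * N ^ 2) := by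
          gcongr
          · exact hqle t
          · linarith
      _ = 1 := by field_simp
  have hqκ : ∀ t, q t ≤ 100 * κ2 := fun t => by
    refine (hqle t).trans ?_
    rw [div_le_iff₀ (by positivity)]
    have h1 : κ2 * x ≤ κ2 * N ^ 3 := by
      gcongr
      exact hxN.trans (le_self_pow₀ (by linarith) (by norm_num))
    linarith
  obtain ⟨L1, hL1⟩ : ∃ L1 : ℝ, L1 =
    κ ^ n * ((t1 + D).factorial : ℝ) / (4 * n) ^ D / 100 ^ (3 * D + 1) := ⟨_, rfl⟩
  have hL1pos : 0 < L1 := by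
    rw [hL1, ← hN]
    have : (0 : ℝ) < ((t1 + D).factorial : ℝ) := by exact_mod_cast (t1 + D).factorial_pos
    positivity
  have hL1log := start_log (n := n) (t1 := t1) (D := D) (κ := κ) (ε := ε) hκ hε.le
    (by rw [ht1, Nat.cast_sub (by omega)]; linarith) (by omega) (by omega) (by omega) l7 (by omega)
  rw [← hL1] at hL1log
  have hL1mul : L1 * 100 ^ (3 * D + 1) = κ ^ n * ((t1 + D).factorial : ℝ) / (4 * n) ^ D := by
    rw [hL1]; field_simp
  let L : ℕ → ℝ := fun t => L1 / (∏ i ∈ range t1, q i) * ∏ i ∈ range t, q i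
  have hprod : ∀ t, 0 < ∏ i ∈ range t, q i := fun t => prod_pos fun i _ => hq0 i
  have hLpos : ∀ t, 0 < L t := fun t => mul_pos (div_pos hL1pos (hprod t1)) (hprod t)
  have hLsucc : ∀ t, L (t + 1) = L t * q t := fun t => by
    simp only [L]; rw [prod_range_succ, mul_assoc]
  have hLt1 : L t1 = L1 := div_mul_cancel₀ _ (hprod t1).ne'
  have hLn : L n = L1 * (1 / N ^ 3) ^ T' * (lam m ^ 2) ^ T2 := by
    simp only [L]
    rw [← hsum, prod_range_add, prod_range_add]
    have e1 : ∏ i ∈ range T', q (t1 + i) = (1 / N ^ 3) ^ T' := by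
      rw [prod_congr rfl (g := fun _ => 1 / N ^ 3), prod_const, card_range]
      intro i hi
      exact if_pos (by have := mem_range.mp hi; omega)
    have e2 : ∏ i ∈ range T2, q (t1 + T' + i) = (lam m ^ 2) ^ T2 := by
      rw [prod_congr rfl (g := fun _ => lam m ^ 2), prod_const, card_range]
      intro i hi
      exact if_neg (by omega)
    rw [e1, e2, mul_assoc, ← mul_assoc (L1 / _), div_mul_cancel₀ _ (hprod t1).ne',
      mul_assoc]
  have hgood := fun (A : Matrix (Fin t1) (Fin t1) ℝ)
    (h : Good (t1 + D + 1) κ ((t1 + D).factorial : ℝ) (4 * n) t1 D (seq A)) =>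
    good_alive (C := C) hκ (by linarith) (by omega) l4 h hL1mul hL1pos.le
  have hdead : Ex (Fin t1) (fun A => ind (¬ Alive t1 (L t1) (seq A))) ≤ (1 / 8) ^ n := by
    have h1 : ∀ A : Matrix (Fin t1) (Fin t1) ℝ, ¬ Alive t1 (L t1) (seq A) →
        ¬ Good (t1 + D + 1) κ ((t1 + D).factorial : ℝ) (4 * n) t1 D (seq A) :=
      fun A h hg => h (by rw [hLt1]; exact (hgood A hg).1)
    exact (Ex_mono fun A _ => ind_mono (h1 A)).trans hP
  have hphi : Ex (Fin t1) (fun A => phi C t1 (L t1) (seq A)) ≤ 2 ^ (3 * D + 2) := by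
    have h1 : Ex (Fin t1) (fun A => phi C t1 (L t1) (seq A)) ≤
        Ex (Fin t1) (fun A => 2 ^ (3 * D + 1) + 2 ^ n * ind (¬ Good (t1 + D + 1) κ
          ((t1 + D).factorial : ℝ) (4 * n) t1 D (seq A))) := by
      refine Ex_mono fun A _ => ?_
      by_cases hg : Good (t1 + D + 1) κ ((t1 + D).factorial : ℝ) (4 * n) t1 D (seq A)
      · rw [ind_false (not_not.mpr hg), mul_zero, add_zero, hLt1]
        exact (hgood A hg).2
      · rw [ind_true hg, mul_one]
        have h2 := phi_le_pow (C := C) t1 (L t1) (seq A)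
        have h3 : (2 : ℝ) ^ t1 ≤ 2 ^ n := pow_le_pow_right₀ (by norm_num) (by omega)
        have h4 : (0 : ℝ) ≤ 2 ^ (3 * D + 1) := by positivity
        linarith
    rw [Ex_add, Ex_const, Ex_mul] at h1
    have h2 : (2 : ℝ) ^ n * (1 / 8) ^ n ≤ 1 := by
      rw [← mul_pow]; exact pow_le_one₀ (by norm_num) (by norm_num)
    have h3 := mul_le_mul_of_nonneg_left hP (show (0 : ℝ) ≤ 2 ^ n by positivity)
    have h4 : (1 : ℝ) ≤ 2 ^ (3 * D + 1) := one_le_pow₀ (by norm_num)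
    have h5 : (2 : ℝ) ^ (3 * D + 2) = 2 ^ (3 * D + 1) + 2 ^ (3 * D + 1) := by ring
    linarith
  have hbord : ∀ t, t1 + T' ≤ t → t < n → Ex (Fin t) (fun A => evB A fun B =>
      ind (0 < seq A 0 ∧ seq B 0 < q t * seq A 0)) ≤ 4 / (m : ℝ) := by
    intro t h1 h2
    obtain ⟨t, rfl⟩ : ∃ t', t = t' + 1 := ⟨t - 1, by omega⟩
    have e : q (t + 1) = lam m ^ 2 := if_neg (by omega)
    rw [e]
    exact border_seq hm1000 (by omega) (by omega)
  have hrun := chain_run hκ2 HS hsum hLpos hLsucc hq0 hqt hqκ (by positivity) hphi hdead hbord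
  refine ⟨L n, hLpos n, ?_, hrun.trans ?_⟩
  · rw [hLn, Real.log_mul (by positivity) (by positivity),
      Real.log_mul (by positivity) (by positivity), Real.log_pow, Real.log_pow, Real.log_pow,
      one_div, Real.log_inv, Real.log_pow]
    push_cast
    have h1 := lam_log hm1000
    have hT'T : (T' : ℝ) ≤ ε * N := by
      refine le_trans ?_ (hN ▸ l6)
      exact_mod_cast (by omega : T' ≤ T)
    have hlN : 0 ≤ Real.log N := Real.log_nonneg (by linarith)
    have h2 : (T' : ℝ) * Real.log N ≤ ε * N * Real.log N := by gcongr
    have h3 : (T2 : ℝ) * (-Real.log (lam m)) ≤ x ^ 3 * (100 * x ^ 21) := by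
      rw [hx]
      refine (mul_le_mul_of_nonneg_left h1 (by positivity)).trans ?_
      gcongr
    have h4 : 1000 * x ^ 24 ≤ x ^ 100 := pow_gap hx1 (by norm_num)
    have h5 : x ^ 3 * (100 * x ^ 21) = 100 * x ^ 24 := by ring
    rw [← hN] at hL1log ⊢
    have h6 : 0 < x ^ 24 := by positivity
    linarith
  · rw [← hγd, ← hx]
    refine final_estimate hγ hγ1 hx1 hxN hN ?_ ?_
    · rw [hT', Nat.cast_sub l2]; exact l5
    · have h2 : Real.log n / γ ≤ T2 := by rw [hT2]; exact Nat.le_ceil _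
      rw [div_le_iff₀ hγ] at h2
      rw [hN]; linarith

end Core

/-! ### Conclusion -/

/-- Every large `n` lies in one of the ranges `[2 m ^ 100, m ^ 101]`. -/
lemma exists_scale (M : ℕ) : ∃ n₀ : ℕ, ∀ n, n₀ ≤ n →
    ∃ m, M ≤ m ∧ 2 * m ^ 100 ≤ n ∧ n ≤ m ^ 101 := by
  obtain ⟨P, hP⟩ : ∃ P : ℕ, P = 2 ^ 101 := ⟨_, rfl⟩
  have hP1 : 1 ≤ P := by rw [hP]; exact Nat.one_le_two_pow
  refine ⟨2 * (max M P) ^ 100, fun n hn => ?_⟩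
  have hb : max M P ≤ n := by
    have : max M P ≤ (max M P) ^ 100 := Nat.le_self_pow (by norm_num) _
    omega
  obtain ⟨m, hm⟩ : ∃ m, m = Nat.findGreatest (fun m => 2 * m ^ 100 ≤ n) n := ⟨_, rfl⟩
  have hge : max M P ≤ m := by
    rw [hm]; exact Nat.le_findGreatest hb hn
  have hsp : 2 * m ^ 100 ≤ n := by
    rw [hm]
    exact Nat.findGreatest_spec (P := fun m => 2 * m ^ 100 ≤ n) hb hn
  refine ⟨m, (le_max_left _ _).trans hge, hsp, ?_⟩
  have hPm : P ≤ m := (le_max_right _ _).trans hge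
  have hlt : n < 2 * (m + 1) ^ 100 := by
    by_contra hcon
    push Not at hcon
    have h1 : m + 1 ≤ n := by
      have : m + 1 ≤ (m + 1) ^ 100 := Nat.le_self_pow (by norm_num) _
      omega
    have h2 := Nat.le_findGreatest (P := fun m => 2 * m ^ 100 ≤ n) h1 hcon
    omega
  calc n ≤ 2 * (m + 1) ^ 100 := hlt.le
    _ ≤ 2 * (2 * m) ^ 100 := by
        have : m + 1 ≤ 2 * m := by omega
        gcongr
    _ = P * m ^ 100 := by rw [hP, mul_pow, ← mul_assoc, ← pow_succ']
    _ ≤ m * m ^ 100 := by gcongr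
    _ = m ^ 101 := (pow_succ' m 100).symm

/-- There is a constant `c > 0` such that for every `ε > 0` and all `n` sufficiently large
with respect to `ε`, `Pr(|per M_n| ≤ n^(n/2-εn)) ≤ n^(-c)`. -/
theorem per_lower_bound :
    ∃ c : ℝ, 0 < c ∧ ∀ ε : ℝ, 0 < ε → ∃ n₀ : ℕ, ∀ n : ℕ, n₀ ≤ n →
      prob n (fun M => |perm M| ≤ (n : ℝ) ^ ((n : ℝ) / 2 - ε * n)) ≤ (n : ℝ) ^ (-c) := by
  obtain ⟨C, κ2, hκ2, hS⟩ := seq_large (δ := 1 / 4) (by norm_num) (η0 := 1) (by norm_num)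
  refine ⟨1 / 202, by norm_num, fun ε hε => ?_⟩
  obtain ⟨ε0, hε0, hεε, hε1⟩ : ∃ ε0 : ℝ, 0 < ε0 ∧ ε0 ≤ ε ∧ ε0 ≤ 1 / 10 :=
    ⟨min ε (1 / 10), lt_min hε (by norm_num), min_le_left _ _, min_le_right _ _⟩
  obtain ⟨K, M, hcore⟩ := core (C := C) hκ2
    (fun t A hA r hr h => hS (Fin t) A hA r hr (Or.inl h)) (ε := ε0 / 5) (by positivity)
    (by linarith)
  obtain ⟨n1, hn1⟩ := exists_scale M
  have hγ := rate_pos C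
  have hrp : Filter.Tendsto (fun n : ℕ => ((n : ℝ)) ^ (1 / 202 : ℝ)) Filter.atTop Filter.atTop :=
    (tendsto_rpow_atTop (by norm_num)).comp tendsto_natCast_atTop_atTop
  have hlg : Filter.Tendsto (fun n : ℕ => Real.log n) Filter.atTop Filter.atTop :=
    Real.tendsto_log_atTop.comp tendsto_natCast_atTop_atTop
  obtain ⟨n2, hn2⟩ := Filter.eventually_atTop.mp ((hrp.eventually_ge_atTop (20 / rate C)).and
    (hlg.eventually_gt_atTop (K / ε0)))
  refine ⟨max 1 (max n1 n2), fun n hn => ?_⟩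
  obtain ⟨m, hMm, hm1, hm2⟩ := hn1 n (by omega)
  obtain ⟨hr, hl⟩ := hn2 n (by omega)
  obtain ⟨L, hL0, hL, hLe⟩ := hcore m n hMm hm1 hm2
  have hnpos : (0 : ℝ) < n := by exact_mod_cast (by omega : 0 < n)
  have hmpos : (0 : ℝ) < m := by
    have : 0 < m := by
      rcases Nat.eq_zero_or_pos m with h | h
      · rw [h] at hm2; simp at hm2; omega
      · exact h
    exact_mod_cast this
  -- the square of the threshold lies below `L`
  have hX : ((n : ℝ) ^ ((n : ℝ) / 2 - ε * n)) ^ 2 < L := by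
    rw [← Real.log_lt_log_iff (by positivity) hL0, Real.log_pow, Real.log_rpow hnpos]
    refine lt_of_lt_of_le ?_ hL
    rw [div_lt_iff₀ hε0] at hl
    have hlog : 0 ≤ Real.log n := Real.log_nonneg (by exact_mod_cast (by omega : 1 ≤ n))
    have h1 := mul_lt_mul_of_pos_right hl hnpos
    have h2 : ε0 * (n * Real.log n) ≤ ε * (n * Real.log n) := by gcongr
    push_cast
    linarith
  rw [prob_eq_Ex]
  have hmono : ∀ A : Matrix (Fin n) (Fin n) ℝ,
      |perm A| ≤ (n : ℝ) ^ ((n : ℝ) / 2 - ε * n) → seq A 0 < L := by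
    intro A h
    have e : seq A 0 = perm A ^ 2 := seq_zero A
    rw [e, ← sq_abs]
    exact (pow_le_pow_left₀ (abs_nonneg _) h 2).trans_lt hX
  refine (Ex_mono fun A _ => ind_mono (hmono A)).trans (hLe.trans ?_)
  -- `m ≥ n ^ (1 / 101)`, and half of this exponent absorbs the constant
  have hmn : (n : ℝ) ^ (1 / 202 : ℝ) * (n : ℝ) ^ (1 / 202 : ℝ) ≤ m := by
    rw [← Real.rpow_add hnpos]
    calc (n : ℝ) ^ (1 / 202 + 1 / 202 : ℝ) ≤ ((m : ℝ) ^ (101 : ℕ)) ^ (1 / 202 + 1 / 202 : ℝ) := by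
          refine Real.rpow_le_rpow hnpos.le (by exact_mod_cast hm2) (by norm_num)
      _ = m := by
          rw [← Real.rpow_natCast, ← Real.rpow_mul hmpos.le]
          norm_num
  rw [Real.rpow_neg hnpos.le]
  obtain ⟨y, hy⟩ : ∃ y : ℝ, y = (n : ℝ) ^ (1 / 202 : ℝ) := ⟨_, rfl⟩
  rw [← hy] at hmn hr ⊢
  have hy0 : 0 < y := by rw [hy]; positivity
  rw [div_le_iff₀ hγ] at hr
  rw [div_le_iff₀ (by positivity), ← div_eq_inv_mul, le_div_iff₀ hy0]
  calc 20 * y ≤ y * rate C * y := by gcongr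
    _ = rate C * (y * y) := by ring
    _ ≤ rate C * m := by gcongr
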